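/- For every ε > 0 there exists s₀ = s₀(ε) such that for every odd integer s ≥ s₀, there are at least (c₀ − ε)·s^{1/2}/(log s)^{1/2} irrational numbers among ζ(3), ζ(5), ζ(7), …, ζ(s); that is, the number of odd integers i with 3 ≤ i ≤ s and ζ(i) irrational is at least (c₀ − ε)·s^{1/2}/(log s)^{1/2}. -/

import Mathlib

/-!
The proof is of Ball–Rivoal type: linear forms in odd zeta values with integer coefficients, which
are too small to be non-zero integers unless many of the values are irrational. The square root in
the bound comes from using one rational function `R` with zeros at all fractions of small
denominator, and evaluating the sums of `R` over several of the sets `ℕ / b` at once.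

*The linear forms.* Let `Ψ` be a finite set of positive integers closed under divisors, and let `V_b`
be the part of `m!` prime to `b`. For even `σ` and `n`, and `ρ ≥ n` with `2ρ + n = K m`, put
`R(t) = n!^σ (t - ρ) ∏_b ∏_a V_b^(-K) ∏_{j < 2ρ + n} (b (t - ρ + j) + a) / ∏_{k ≤ n} (t + k)^σ`, where
`b` runs over `Ψ` and `a` over the residues `1 ≤ a ≤ b` prime to `b`. Every `l / b` with `b ∈ Ψ` and
`0 < l ≤ b ρ` is a zero of `R`. By partial fractions `S_b = ∑_{m' ≥ 0} R((m' + 1) / b)` is a linear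
combination of `1` and of the `b^i ζ(i)`, the coefficient of `b^i ζ(i)` not depending on `b`; the even
`i` drop out because the numerator is antisymmetric about `-n/2`, and `i = 1` because the residues of
`R` sum to `0`. With `d = lcm(1, …, n)` the coefficients of `d^σ S_b` are integers
(`ZParam.linear_form`). This uses that `V_b` divides each block of `m` consecutive factors of the
numerator (`block_dvd`), and that the polar part of `R` at `-k`, summed at a point `β / γ` for which
`β / γ - k` is a zero of `R`, telescopes, so that no power of the denominator `γ` is lost
(`polar_int_of_zero`).

*Nearly proportional sums.* To the right of `ρ` the function `R` is positive and unimodal (`lam_sign`,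
which rests on `kap_anti`). Its maximum is far from the zeros when `m` is large, hence flat
(`lg_flat`). So the sums of `R` over two shifts of `ℕ` by less than `1` are almost equal, and `S_b` is
close to `b S_1` (`ZParam.ratio`).

*Elimination.* Assume that fewer than `|Ψ|` of the `ζ(i)`, `3 ≤ i < σ` odd, are irrational. By
Descartes' rule of signs there are integer weights `w_b` with `∑ w_b b^i = 0` for all these `i` but
`∑ w_b b ≠ 0` (`exists_weights`). Then `∑ w_b S_b`, times `d^σ` and a common denominator of the
rational values, is an integer, and non-zero because `S_b ≈ b S_1`. If `R` is small enough compared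
with `d^σ ≈ e^(σ n)`, this integer is less than `1`, a contradiction (`card_le_irrational`). Since
infinitely many `n = q m` suffice, the bound `ψ(n) ≤ (1 + δ) n` for infinitely many such `n`
(`exists_psi_le`) replaces the prime number theorem; it follows from `log N! = ∑ ψ(N / k)`.

*Optimisation.* The condition for success is
`(2r + 1) ∑_{b ∈ Ψ} φ(b) (log b + o(log s)) < s (f(r) - 1)`, where `σ = s + 1`, `r = ρ / n` and
`f(r) = (r + 1) log (r + 1) - r log r`. The best sets are essentially `{b : φ(b) ≤ B}`; to have them
closed under divisors and easy to count, `φ(b)` is replaced by `b ∏ (1 - 1/p)` over the `p ∣ b` in a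
finite set `P` of primes. Then `|Ψ| ≥ c B - O(1)` and `∑ φ(b) ≤ c B² / 2 + O(B)` with
`c = ∏_{p ∈ P} (1 + 1 / (p (p - 1)))` (`exists_psi`), which tends to `ζ(2) ζ(3) / ζ(6)`
(`tendsto_euler`). With `B = (t / c) √(s / log s)`, so that `|Ψ| ≈ t √(s / log s)`, the condition
becomes `t² < 4 c (f(r) - 1) / (2r + 1)`. The best ratio satisfies `r (r + 1) = e²`, where
`(f(r) - 1) / (2r + 1) = 1 - log r`, and the condition tends to `t < c₀`.
-/

open Filter Real

/-- The real value of the Riemann zeta function at a natural number argument. -/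
noncomputable def zetaR (k : ℕ) : ℝ := (riemannZeta k).re

/-- The constant `c₀ = sqrt((4ζ(2)ζ(3)/ζ(6))·(1 − log((√(4e²+1)−1)/2)))`. -/
noncomputable def c₀ : ℝ :=
  Real.sqrt ((4 * zetaR 2 * zetaR 3 / zetaR 6) *
    (1 - Real.log ((Real.sqrt (4 * Real.exp 1 ^ 2 + 1) - 1) / 2)))

section

open Polynomial

/-! ### Divisibility of products of integral linear polynomials -/

/-- `m!` divides a product of `m` linear polynomials `d X + c + j`, as it divides a product of `m`
consecutive integers. The proof is by finite differences in `c`: the difference of the products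
for `c + 1` and `c` is `m` times a shorter product, and for `c = 1 - m` the factors are
divisible by `1, …, m - 1` and `m` since these numbers divide `d`. -/
lemma factorial_dvd_block (d n : ℕ) (hd : ∀ l, 1 ≤ l → l ≤ n → l ∣ d) (m : ℕ) (hm : m ≤ n) :
    ∀ c : ℤ, C ((m.factorial : ℕ) : ℤ) ∣
      ∏ j ∈ Finset.range m, (C (d : ℤ) * X + C (c + (j : ℤ)) : ℤ[X]) := by
  induction m with
  | zero => intro c; simp
  | succ m ih =>
    have ih := ih (by omega)
    have hdiff : ∀ c : ℤ, C (((m + 1).factorial : ℕ) : ℤ) ∣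
        (∏ j ∈ Finset.range (m + 1), (C (d : ℤ) * X + C (c + 1 + (j : ℤ)) : ℤ[X])) -
        ∏ j ∈ Finset.range (m + 1), (C (d : ℤ) * X + C (c + (j : ℤ)) : ℤ[X]) := by
      intro c
      have h1 : ∏ j ∈ Finset.range (m + 1), (C (d : ℤ) * X + C (c + (j : ℤ)) : ℤ[X]) =
          (∏ j ∈ Finset.range m, (C (d : ℤ) * X + C (c + 1 + (j : ℤ)) : ℤ[X])) *
            (C (d : ℤ) * X + C c) := by
        rw [Finset.prod_range_succ']
        congr 1
        · refine Finset.prod_congr rfl fun j _ => ?_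
          push_cast
          ring_nf
        · simp
      rw [h1, Finset.prod_range_succ, ← mul_sub]
      have h2 : (C (d : ℤ) * X + C (c + 1 + (m : ℤ)) : ℤ[X]) - (C (d : ℤ) * X + C c) =
          C ((m + 1 : ℕ) : ℤ) := by
        simp only [C_add]; push_cast; simp; ring
      rw [h2, Nat.factorial_succ, mul_comm (m + 1)]
      push_cast [C_mul]
      have := mul_dvd_mul_right (ih (c + 1)) (C ((m : ℤ) + 1))
      simpa using this
    have hbase : C (((m + 1).factorial : ℕ) : ℤ) ∣
        ∏ j ∈ Finset.range (m + 1), (C (d : ℤ) * X + C (-(m : ℤ) + (j : ℤ)) : ℤ[X]) := by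
      rw [Finset.prod_range_succ, ← Finset.prod_range_reflect]
      rw [Nat.factorial_succ, mul_comm, Nat.cast_mul, C_mul]
      refine mul_dvd_mul ?_ ?_
      · rw [← Finset.prod_range_add_one_eq_factorial, Nat.cast_prod, map_prod]
        refine Finset.prod_dvd_prod_of_dvd _ _ fun j hj => ?_
        rw [Finset.mem_range] at hj
        obtain ⟨e, he⟩ := hd (j + 1) (by omega) (by omega)
        refine ⟨C (e : ℤ) * X - 1, ?_⟩
        have : (-(m : ℤ) + ((m - 1 - j : ℕ) : ℤ)) = -((j + 1 : ℕ) : ℤ) := by omega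
        rw [this, he]
        push_cast [C_mul]
        simp; ring
      · obtain ⟨e, he⟩ := hd (m + 1) (by omega) hm
        refine ⟨C (e : ℤ) * X, ?_⟩
        rw [he]
        push_cast [C_mul]
        simp; ring
    intro c
    induction c using Int.inductionOn' (b := -(m : ℤ)) with
    | zero => exact hbase
    | succ k _ h => exact (dvd_sub_left h).1 (hdiff k) |> fun h' => by simpa using h'
    | pred k _ h =>
      have := hdiff (k - 1)
      simp only [sub_add_cancel] at this
      exact (dvd_sub_right h).1 this

/-- The analogue of `factorial_dvd_block` for the factors `b (d X + c + j) + a`: modulo `V`, prime to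
`b`, they are unit multiples of factors `d X + c' + j`. -/
lemma block_dvd (d n : ℕ) (hd : ∀ l, 1 ≤ l → l ≤ n → l ∣ d) (m : ℕ) (hm : m ≤ n)
    (b V : ℕ) (hV : V.Coprime b) (hVm : V ∣ m.factorial) (c a : ℤ) :
    C (V : ℤ) ∣ ∏ j ∈ Finset.range m,
      (C (b : ℤ) * (C (d : ℤ) * X + C (c + (j : ℤ))) + C a : ℤ[X]) := by
  obtain ⟨u, v, huv⟩ : ∃ u v : ℤ, u * V + v * b = 1 :=
    (Int.isCoprime_iff_gcd_eq_one.2 (by simpa using hV) : IsCoprime (V : ℤ) (b : ℤ))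
  -- modulo `V` the number `v` is an inverse of `b`
  have h1 := (map_dvd C (Int.natCast_dvd_natCast.2 hVm)).trans
    (factorial_dvd_block d n hd m hm (c + v * a))
  have hcong : ∀ j ∈ Finset.range m,
      (C v * (C (b : ℤ) * (C (d : ℤ) * X + C (c + (j : ℤ))) + C a) : ℤ[X]) ≡
      (C (d : ℤ) * X + C (c + v * a + (j : ℤ)) : ℤ[X]) [SMOD Ideal.span {C (V : ℤ)}] := by
    intro j _
    rw [SModEq.sub_mem, Ideal.mem_span_singleton]
    refine ⟨-C u * (C (d : ℤ) * X + C (c + (j : ℤ))), ?_⟩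
    have : (C u * C (V : ℤ) + C v * C (b : ℤ) : ℤ[X]) = 1 := by
      rw [← C_mul, ← C_mul, ← C_add, huv, C_1]
    have h3 : (C v * C (b : ℤ) : ℤ[X]) = 1 - C u * C (V : ℤ) := by rw [← this]; ring
    simp only [C_add, C_mul]
    linear_combination (C (d : ℤ) * X + C c + C (j : ℤ)) * h3
  have h2 : C (V : ℤ) ∣ ∏ j ∈ Finset.range m,
      (C v * (C (b : ℤ) * (C (d : ℤ) * X + C (c + (j : ℤ))) + C a) : ℤ[X]) := by
    have := SModEq.prod hcong
    rw [SModEq.sub_mem, Ideal.mem_span_singleton] at this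
    exact (dvd_iff_dvd_of_dvd_sub this).2 h1
  rw [Finset.prod_mul_distrib, Finset.prod_const, ← C_pow] at h2
  have hco : IsCoprime (C (V : ℤ) : ℤ[X]) (C (v ^ (Finset.range m).card)) := by
    refine IsCoprime.map ?_ (C : ℤ →+* ℤ[X])
    apply IsCoprime.pow_right
    exact ⟨u, b, by rw [mul_comm (b : ℤ), huv]⟩
  exact hco.dvd_of_dvd_mul_left h2

/-- Gauss's lemma: deleting one linear factor costs at most a factor `d`. -/
lemma dvd_mul_of_dvd_lin_mul (V d b : ℕ) (e : ℤ) (he : IsCoprime e (b : ℤ)) (H : ℤ[X])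
    (h : C (V : ℤ) ∣ (C (b : ℤ) * (C (d : ℤ) * X) + C e) * H) :
    C (V : ℤ) ∣ C (d : ℤ) * H := by
  rw [← dvd_content_iff_C_dvd] at h ⊢
  rw [content_mul] at h
  rw [content_C_mul]
  refine h.trans (mul_dvd_mul ?_ dvd_rfl)
  rw [dvd_normalize_iff]
  set g := (C (b : ℤ) * (C (d : ℤ) * X) + C e : ℤ[X]).content
  have h1 : g ∣ (b : ℤ) * d := by
    have : g ∣ _ := content_dvd_coeff (p := (C (b : ℤ) * (C (d : ℤ) * X) + C e : ℤ[X])) 1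
    simpa only [coeff_add, coeff_C_mul, coeff_X_one, coeff_C_succ, mul_one, add_zero] using this
  have h0 : g ∣ e := by
    have : g ∣ _ := content_dvd_coeff (p := (C (b : ℤ) * (C (d : ℤ) * X) + C e : ℤ[X])) 0
    simpa only [coeff_add, coeff_C_mul, coeff_X_zero, coeff_C_zero, mul_zero, zero_add] using this
  exact (he.of_isCoprime_of_dvd_left h0).dvd_of_dvd_mul_left h1

/-! ### Partial fractions -/

/-- The part of the denominator `∏ (t + j) ^ σ` coprime to `t + k`, in the local variable `t + k`. -/
noncomputable def pfD (n σ k : ℕ) : ℝ[X] :=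
  ∏ j ∈ (Finset.range (n + 1)).erase k, (X + C ((j : ℝ) - k)) ^ σ

/-- The Taylor series at `-k` of `N(t) (t + k) ^ σ / ∏ (t + j) ^ σ`. -/
noncomputable def pfG (N : ℝ[X]) (n σ k : ℕ) : PowerSeries ℝ :=
  ((N.comp (X - C (k : ℝ)) : ℝ[X]) : PowerSeries ℝ) * ((pfD n σ k : ℝ[X]) : PowerSeries ℝ)⁻¹

/-- The coefficient of `1 / (t + k) ^ (σ - e)` in the partial fraction expansion of
`N(t) / ∏ (t + j) ^ σ`. -/
noncomputable def pfc (N : ℝ[X]) (n σ e k : ℕ) : ℝ := PowerSeries.coeff e (pfG N n σ k)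

lemma pfD_coeff_zero (n σ k : ℕ) : (pfD n σ k).coeff 0 ≠ 0 := by
  rw [coeff_zero_eq_eval_zero, pfD, eval_prod]
  refine Finset.prod_ne_zero_iff.2 fun j hj => ?_
  rw [Finset.mem_erase] at hj
  simp only [eval_pow, eval_add, eval_X, eval_C, zero_add]
  exact pow_ne_zero _ (sub_ne_zero.2 (by exact_mod_cast hj.1))

lemma pfG_mul (N : ℝ[X]) (n σ k : ℕ) :
    pfG N n σ k * ((pfD n σ k : ℝ[X]) : PowerSeries ℝ) =
      ((N.comp (X - C (k : ℝ)) : ℝ[X]) : PowerSeries ℝ) := by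
  rw [pfG, mul_assoc, PowerSeries.inv_mul_cancel, mul_one]
  simpa using pfD_coeff_zero n σ k

/-- The partial fraction expansion cleared of denominators. The difference of the two sides vanishes
to order `σ` at each `-k`, and its degree is less than `(n + 1) σ`. -/
lemma pf_poly (N : ℝ[X]) (n σ : ℕ) (hN : N.natDegree < (n + 1) * σ) :
    N = ∑ k ∈ Finset.range (n + 1), ∑ e ∈ Finset.range σ,
      C (pfc N n σ e k) * (X + C (k : ℝ)) ^ e *
        ∏ j ∈ (Finset.range (n + 1)).erase k, (X + C (j : ℝ)) ^ σ := by
  set P : ℝ[X] := ∑ k ∈ Finset.range (n + 1), ∑ e ∈ Finset.range σ,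
      C (pfc N n σ e k) * (X + C (k : ℝ)) ^ e *
        ∏ j ∈ (Finset.range (n + 1)).erase k, (X + C (j : ℝ)) ^ σ with hP
  have hdvd : ∀ k ∈ Finset.range (n + 1), (X + C (k : ℝ)) ^ σ ∣ N - P := by
    intro k0 hk0
    have key : X ^ σ ∣ (N - P).comp (X - C (k0 : ℝ)) := by
      have e1 : P = (∑ e ∈ Finset.range σ, C (pfc N n σ e k0) * (X + C (k0 : ℝ)) ^ e *
          ∏ j ∈ (Finset.range (n + 1)).erase k0, (X + C (j : ℝ)) ^ σ) +
          ∑ k ∈ (Finset.range (n + 1)).erase k0, ∑ e ∈ Finset.range σ,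
          C (pfc N n σ e k) * (X + C (k : ℝ)) ^ e *
          ∏ j ∈ (Finset.range (n + 1)).erase k, (X + C (j : ℝ)) ^ σ := by
        rw [hP]; exact (Finset.add_sum_erase _ (fun k => ∑ e ∈ Finset.range σ,
          C (pfc N n σ e k) * (X + C (k : ℝ)) ^ e *
          ∏ j ∈ (Finset.range (n + 1)).erase k, (X + C (j : ℝ)) ^ σ) hk0).symm
      rw [e1, ← sub_sub, sub_comp]
      refine dvd_sub ?_ ?_
      · rw [sub_comp, Polynomial.X_pow_dvd_iff]
        have e2 : (∑ e ∈ Finset.range σ, C (pfc N n σ e k0) * (X + C (k0 : ℝ)) ^ e *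
            ∏ j ∈ (Finset.range (n + 1)).erase k0, (X + C (j : ℝ)) ^ σ).comp (X - C (k0 : ℝ)) =
            (∑ e ∈ Finset.range σ, C (pfc N n σ e k0) * X ^ e) * pfD n σ k0 := by
          rw [← Polynomial.coe_compRingHom_apply, map_sum, Finset.sum_mul]
          refine Finset.sum_congr rfl fun e _ => ?_
          simp only [map_mul, map_prod, map_pow, coe_compRingHom_apply, pfD, add_comp, X_comp,
            C_comp, sub_add_cancel]
          congr 1
          refine Finset.prod_congr rfl fun j _ => ?_
          rw [C_sub]; congr 1; ring
        rw [e2]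
        have e3 : (PowerSeries.X : PowerSeries ℝ) ^ σ ∣ (pfG N n σ k0 -
            ((∑ e ∈ Finset.range σ, C (pfc N n σ e k0) * X ^ e : ℝ[X]) : PowerSeries ℝ)) := by
          rw [PowerSeries.X_pow_dvd_iff]
          intro m hm
          rw [map_sub, Polynomial.coeff_coe, Polynomial.finsetSum_coeff]
          simp [coeff_X_pow, pfc, hm]
        have e4 := e3.mul_right ((pfD n σ k0 : ℝ[X]) : PowerSeries ℝ)
        rw [sub_mul, pfG_mul, ← Polynomial.coe_mul, ← Polynomial.coe_sub,
          PowerSeries.X_pow_dvd_iff] at e4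
        intro d hd
        have e5 := e4 d hd
        rwa [coeff_coe] at e5
      · rw [← Polynomial.coe_compRingHom_apply, map_sum]
        refine Finset.dvd_sum fun k hk => ?_
        rw [map_sum]
        refine Finset.dvd_sum fun e _ => ?_
        rw [map_mul]
        refine Dvd.dvd.mul_left ?_ _
        rw [map_prod]
        have hk0' : k0 ∈ (Finset.range (n + 1)).erase k := by
          rw [Finset.mem_erase] at hk ⊢
          exact ⟨hk.1.symm, hk0⟩
        refine dvd_trans ?_ (Finset.dvd_prod_of_mem _ hk0')
        simp
    obtain ⟨Q, hQ⟩ := key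
    refine ⟨Q.comp (X + C (k0 : ℝ)), ?_⟩
    have := congrArg (fun p : ℝ[X] => p.comp (X + C (k0 : ℝ))) hQ
    simpa [comp_assoc] using this
  have hprod : ∏ k ∈ Finset.range (n + 1), (X + C (k : ℝ)) ^ σ ∣ N - P := by
    refine Finset.prod_dvd_of_coprime ?_ hdvd
    intro i _ j _ hij
    apply IsCoprime.pow
    have := isCoprime_X_sub_C_of_isUnit_sub (R := ℝ) (a := -(i : ℝ)) (b := -(j : ℝ)) (by
      rw [isUnit_iff_ne_zero]
      intro h
      apply hij
      have : (i : ℝ) = j := by linarith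
      exact_mod_cast this)
    simpa using this
  have hmon : ∀ s : Finset ℕ, (∏ k ∈ s, (X + C (k : ℝ)) ^ σ : ℝ[X]).natDegree = s.card * σ := by
    intro s
    rw [natDegree_prod_of_monic _ _ fun i _ => (monic_X_add_C _).pow _]
    simp only [natDegree_pow, natDegree_X_add_C, mul_one, Finset.sum_const, smul_eq_mul]
  by_contra hne
  have hne' : N - P ≠ 0 := sub_ne_zero.2 hne
  have h1 := natDegree_le_of_dvd hprod hne'
  rw [hmon, Finset.card_range] at h1
  have h2 : P.natDegree < (n + 1) * σ := by
    have hpos : 0 < (n + 1) * σ := by omega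
    suffices P.natDegree ≤ (n + 1) * σ - 1 by omega
    refine natDegree_sum_le_of_forall_le _ _ fun k hk => ?_
    refine natDegree_sum_le_of_forall_le _ _ fun e he => ?_
    refine natDegree_mul_le.trans ?_
    rw [hmon, Finset.card_erase_of_mem hk, Finset.card_range]
    have : (C (pfc N n σ e k) * (X + C (k : ℝ)) ^ e).natDegree ≤ e := by
      refine (natDegree_C_mul_le _ _).trans ?_
      simp only [natDegree_pow, natDegree_X_add_C, mul_one, le_refl]
    rw [Finset.mem_range] at he
    have : (n + 1) * σ = n * σ + σ := by ring
    simp only [Nat.add_sub_cancel]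
    omega
  have h3 := natDegree_sub_le N P
  have : max N.natDegree P.natDegree < (n + 1) * σ := max_lt hN h2
  omega

/-- Partial fraction expansion of `N(t) / ∏ (t + k) ^ σ`. -/
lemma pf_eval (N : ℝ[X]) (n σ : ℕ) (hN : N.natDegree < (n + 1) * σ) (t : ℝ) (ht : 0 < t) :
    N.eval t / ∏ k ∈ Finset.range (n + 1), (t + k) ^ σ =
      ∑ k ∈ Finset.range (n + 1), ∑ e ∈ Finset.range σ, pfc N n σ e k / (t + k) ^ (σ - e) := by
  conv_lhs => rw [pf_poly N n σ hN]
  rw [eval_finsetSum, Finset.sum_div]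
  refine Finset.sum_congr rfl fun k hk => ?_
  rw [eval_finsetSum, Finset.sum_div]
  refine Finset.sum_congr rfl fun e he => ?_
  rw [← Finset.mul_prod_erase _ _ hk]
  simp only [eval_mul, eval_C, eval_pow, eval_add, eval_X, eval_prod]
  have hpos : ∀ j : ℕ, t + j ≠ 0 := fun j => by positivity
  rw [mul_div_mul_right _ _ (Finset.prod_ne_zero_iff.2 fun j _ => pow_ne_zero _ (hpos j))]
  rw [Finset.mem_range] at he
  rw [div_eq_div_iff (pow_ne_zero _ (hpos k)) (pow_ne_zero _ (hpos k)), mul_assoc, ← pow_add]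
  congr 2
  omega

/-- The residues sum to zero when the numerator is of degree at most `(n + 1) σ - 2`; compare the
coefficients of `t ^ ((n + 1) σ - 1)` in `pf_poly`. -/
lemma pf_residue_sum (N : ℝ[X]) (n σ : ℕ) (hσ : 1 ≤ σ) (hN : N.natDegree + 1 < (n + 1) * σ) :
    ∑ k ∈ Finset.range (n + 1), pfc N n σ (σ - 1) k = 0 := by
  have h := congrArg (fun p : ℝ[X] => p.coeff ((n + 1) * σ - 1)) (pf_poly N n σ (by omega))
  simp only [finsetSum_coeff] at h
  rw [coeff_eq_zero_of_natDegree_lt (by omega)] at h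
  rw [h]
  refine Finset.sum_congr rfl fun k hk => ?_
  have hmon : (∏ j ∈ (Finset.range (n + 1)).erase k, (X + C (j : ℝ)) ^ σ : ℝ[X]).Monic :=
    monic_prod_of_monic _ _ fun i _ => (monic_X_add_C _).pow _
  have hdeg : (∏ j ∈ (Finset.range (n + 1)).erase k, (X + C (j : ℝ)) ^ σ : ℝ[X]).natDegree
      = n * σ := by
    rw [natDegree_prod_of_monic _ _ fun i _ => (monic_X_add_C _).pow _]
    simp [natDegree_pow, -map_natCast, Finset.card_erase_of_mem hk]
  have hd : ∀ e, ((X + C (k : ℝ)) ^ e *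
      ∏ j ∈ (Finset.range (n + 1)).erase k, (X + C (j : ℝ)) ^ σ : ℝ[X]).natDegree = e + n * σ := by
    intro e
    rw [((monic_X_add_C (k : ℝ)).pow e).natDegree_mul hmon, hdeg]
    simp only [natDegree_pow, natDegree_X_add_C, mul_one]
  have hn1 : (n + 1) * σ = n * σ + σ := by ring
  rw [Finset.sum_eq_single (σ - 1)]
  · rw [mul_assoc, coeff_C_mul]
    have : (n + 1) * σ - 1 = ((X + C (k : ℝ)) ^ (σ - 1) *
      ∏ j ∈ (Finset.range (n + 1)).erase k, (X + C (j : ℝ)) ^ σ : ℝ[X]).natDegree := by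
      rw [hd]; omega
    rw [this, coeff_natDegree, (((monic_X_add_C (k : ℝ)).pow _).mul hmon).leadingCoeff, mul_one]
  · intro e he hne
    rw [Finset.mem_range] at he
    rw [mul_assoc, coeff_C_mul, coeff_eq_zero_of_natDegree_lt, mul_zero]
    rw [hd]; omega
  · intro h; rw [Finset.mem_range] at h; omega

/-- If `N(-n - t) = -N(t)`, the coefficients are (anti)symmetric under `k ↦ n - k`. -/
lemma pfc_symm (N : ℝ[X]) (n σ : ℕ) (hσ : Even σ) (hsym : N.comp (-X - C (n : ℝ)) = -N)
    (e k : ℕ) (hk : k ≤ n) : pfc N n σ e (n - k) = -(-1) ^ e * pfc N n σ e k := by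
  have hD : (pfD n σ k).comp (-X) = pfD n σ (n - k) := by
    unfold pfD
    rw [← Polynomial.coe_compRingHom_apply, map_prod]
    refine Finset.prod_bij' (fun j _ => n - j) (fun j _ => n - j) ?_ ?_ ?_ ?_ ?_
    · intro j hj
      simp only [Finset.mem_erase, Finset.mem_range] at hj ⊢; omega
    · intro j hj
      simp only [Finset.mem_erase, Finset.mem_range] at hj ⊢; omega
    · intro j hj
      simp only [Finset.mem_erase, Finset.mem_range] at hj ⊢; omega
    · intro j hj
      simp only [Finset.mem_erase, Finset.mem_range] at hj ⊢; omega
    · intro j hj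
      simp only [Finset.mem_erase, Finset.mem_range] at hj
      simp only [coe_compRingHom_apply, pow_comp, add_comp, X_comp, C_comp]
      rw [← hσ.neg_pow]
      congr 1
      rw [Nat.cast_sub (by omega), Nat.cast_sub hk]
      simp only [C_sub]
      ring
  have hN : (N.comp (X - C (k : ℝ))).comp (-X) = -N.comp (X - C ((n - k : ℕ) : ℝ)) := by
    have h1 := congrArg (fun p : ℝ[X] => p.comp (X - C ((n - k : ℕ) : ℝ))) hsym
    simp only [comp_assoc, neg_comp] at h1
    rw [← h1, comp_assoc]
    congr 1
    rw [Nat.cast_sub hk]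
    simp
    ring
  have hres : ∀ p : ℝ[X], PowerSeries.rescale (-1 : ℝ) (p : PowerSeries ℝ) =
      ((p.comp (-X) : ℝ[X]) : PowerSeries ℝ) := by
    intro p
    ext m
    rw [PowerSeries.coeff_rescale, coeff_coe, coeff_coe, show (-X : ℝ[X]) = C (-1) * X by simp, comp_C_mul_X_coeff, mul_comm]
  have h1 := congrArg (PowerSeries.rescale (-1 : ℝ)) (pfG_mul N n σ k)
  rw [map_mul, hres, hres, hD, hN, coe_neg, ← pfG_mul N n σ (n - k), ← neg_mul] at h1
  have hne : ((pfD n σ (n - k) : ℝ[X]) : PowerSeries ℝ) ≠ 0 := by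
    intro h0
    apply pfD_coeff_zero n σ (n - k)
    rw [← coeff_coe, h0]; simp
  have h2 := congrArg (PowerSeries.coeff e) (mul_right_cancel₀ hne h1)
  rw [PowerSeries.coeff_rescale, map_neg] at h2
  unfold pfc
  rw [neg_mul, h2, neg_neg]

/-- For even `σ` and antisymmetric numerator, the coefficient of `ζ(σ - e)` vanishes for even `e`: the
terms for `k` and `n - k` cancel, by `pfc_symm`. -/
lemma pfc_even_sum (N : ℝ[X]) (n σ : ℕ) (hσ : Even σ) (hsym : N.comp (-X - C (n : ℝ)) = -N)
    (e : ℕ) (he : Even e) : ∑ k ∈ Finset.range (n + 1), pfc N n σ e k = 0 := by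
  have h := Finset.sum_range_reflect (fun k => pfc N n σ e k) (n + 1)
  have h2 : ∑ k ∈ Finset.range (n + 1), pfc N n σ e (n + 1 - 1 - k) =
      -∑ k ∈ Finset.range (n + 1), pfc N n σ e k := by
    rw [← Finset.sum_neg_distrib]
    refine Finset.sum_congr rfl fun k hk => ?_
    rw [Finset.mem_range] at hk
    rw [Nat.add_sub_cancel, pfc_symm N n σ hσ hsym e k (by omega), he.neg_one_pow]
    ring
  linarith

/-! ### Integrality of the partial fraction coefficients -/

/-- The product is `± k! (n - k)!`. -/
lemma prod_sub_dvd_factorial (n k : ℕ) (hk : k ≤ n) :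
    ∏ j ∈ (Finset.range (n + 1)).erase k, ((j : ℤ) - k) ∣ (n.factorial : ℤ) := by
  have h1 : (Finset.range (n + 1)).erase k =
      Finset.range k ∪ (Finset.range (n - k)).image (fun i => k + 1 + i) := by
    ext j
    simp only [Finset.mem_erase, Finset.mem_range, Finset.mem_union, Finset.mem_image]
    constructor
    · rintro ⟨h1, h2⟩
      by_cases h : j < k
      · exact Or.inl h
      · exact Or.inr ⟨j - (k + 1), by omega, by omega⟩
    · rintro (h | ⟨i, hi, rfl⟩)
      · omega
      · omega
  have hdisj : Disjoint (Finset.range k) ((Finset.range (n - k)).image (fun i => k + 1 + i)) := by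
    rw [Finset.disjoint_left]
    intro j hj hj'
    simp only [Finset.mem_range, Finset.mem_image] at hj hj'
    obtain ⟨i, _, rfl⟩ := hj'
    omega
  rw [h1, Finset.prod_union hdisj, Finset.prod_image (by intro a _ b _ h; simpa using h)]
  have h2 : ∏ x ∈ Finset.range (n - k), (((k + 1 + x : ℕ) : ℤ) - k) = ((n - k).factorial : ℤ) := by
    rw [← Finset.prod_range_add_one_eq_factorial, Nat.cast_prod]
    refine Finset.prod_congr rfl fun i _ => ?_
    push_cast; ring
  have h3 : ∏ x ∈ Finset.range k, ((x : ℤ) - k) = (-1) ^ k * (k.factorial : ℤ) := by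
    rw [← Finset.prod_range_reflect, ← Finset.prod_range_add_one_eq_factorial, Nat.cast_prod]
    have : ((-1 : ℤ)) ^ k = ∏ _i ∈ Finset.range k, (-1 : ℤ) := by simp
    rw [this, ← Finset.prod_mul_distrib]
    refine Finset.prod_congr rfl fun i hi => ?_
    rw [Finset.mem_range] at hi
    omega
  rw [h2, h3, mul_assoc, Int.isUnit_iff.2 (neg_one_pow_eq_or ℤ k) |>.mul_left_dvd]
  exact_mod_cast Nat.factorial_mul_factorial_dvd_factorial hk

lemma rescale_linear (d c v : ℝ) (h : d = v * c) :
    PowerSeries.rescale d (PowerSeries.X + PowerSeries.C v) =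
      PowerSeries.C v * (1 + PowerSeries.C c * PowerSeries.X) := by
  ext m
  rw [mul_add, mul_one, ← mul_assoc, ← map_mul, ← h]
  rw [PowerSeries.coeff_rescale, map_add, map_add, PowerSeries.coeff_C_mul]
  rcases m with _ | _ | m
  · simp
  · simp
  · simp [PowerSeries.coeff_X]

/-- The local denominator, rescaled by `d`, divides `n! ^ σ` in the ring of integer power series. -/
lemma exists_rescale_inv (d n σ k : ℕ) (hd : ∀ l, 1 ≤ l → l ≤ n → l ∣ d) (hk : k ≤ n) :
    ∃ U : PowerSeries ℤ, (U.map (Int.castRingHom ℝ)) *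
      PowerSeries.rescale (d : ℝ) ((pfD n σ k : ℝ[X]) : PowerSeries ℝ) =
        PowerSeries.C ((n.factorial : ℝ) ^ σ) := by
  have hc : ∀ j : ℕ, ∃ c : ℤ, j ∈ (Finset.range (n + 1)).erase k → (d : ℤ) = ((j : ℤ) - k) * c := by
    intro j
    by_cases hj : j ∈ (Finset.range (n + 1)).erase k
    · have h1 : ((j : ℤ) - k) ∣ d := by
        rw [Finset.mem_erase, Finset.mem_range] at hj
        have := hd (Int.natAbs ((j : ℤ) - k)) (by omega) (by omega)
        exact Int.natAbs_dvd.1 (Int.natCast_dvd_natCast.2 this)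
      obtain ⟨c, hc⟩ := h1
      exact ⟨c, fun _ => hc⟩
    · exact ⟨0, fun h => absurd h hj⟩
  choose c hc using hc
  set E : PowerSeries ℤ := ∏ j ∈ (Finset.range (n + 1)).erase k,
    (1 + PowerSeries.C (c j) * PowerSeries.X) with hE
  have hE1 : IsUnit E := by
    rw [PowerSeries.isUnit_iff_constantCoeff, hE, map_prod]
    simp
  obtain ⟨E', hE'⟩ := hE1.exists_right_inv
  obtain ⟨q, hq⟩ := prod_sub_dvd_factorial n k hk
  refine ⟨PowerSeries.C (q ^ σ) * E' ^ σ, ?_⟩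
  have h1 : PowerSeries.rescale (d : ℝ) ((pfD n σ k : ℝ[X]) : PowerSeries ℝ) =
      PowerSeries.map (Int.castRingHom ℝ)
        (PowerSeries.C ((∏ j ∈ (Finset.range (n + 1)).erase k, ((j : ℤ) - k)) ^ σ) * E ^ σ) := by
    have : (pfD n σ k : PowerSeries ℝ) = ∏ j ∈ (Finset.range (n + 1)).erase k,
        (PowerSeries.X + PowerSeries.C ((j : ℝ) - k)) ^ σ := by
      rw [pfD, ← Polynomial.coeToPowerSeries.ringHom_apply, map_prod]
      refine Finset.prod_congr rfl fun j _ => ?_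
      rw [map_pow, map_add]
      simp only [coeToPowerSeries.ringHom_apply, coe_X, coe_C]
    rw [this, map_prod, hE, ← Finset.prod_pow, ← Finset.prod_pow, map_prod,
      ← Finset.prod_mul_distrib, map_prod]
    refine Finset.prod_congr rfl fun j hj => ?_
    rw [map_pow, map_pow (PowerSeries.C : ℤ →+* PowerSeries ℤ), ← mul_pow, map_pow]
    congr 1
    have := congrArg (Int.cast (R := ℝ)) (hc j hj)
    push_cast at this
    have hr := rescale_linear d (c j) ((j : ℝ) - k) this
    rw [hr, map_mul, map_add, map_mul, map_one, PowerSeries.map_X, PowerSeries.map_C,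
      PowerSeries.map_C, eq_intCast, eq_intCast, Int.cast_sub, Int.cast_natCast, Int.cast_natCast]
  rw [h1, ← map_mul]
  have h2 : PowerSeries.C (q ^ σ) * E' ^ σ *
      (PowerSeries.C ((∏ j ∈ (Finset.range (n + 1)).erase k, ((j : ℤ) - k)) ^ σ) * E ^ σ) =
      PowerSeries.C ((n.factorial : ℤ) ^ σ) := by
    rw [hq, mul_pow, map_mul]
    calc _ = PowerSeries.C ((∏ j ∈ (Finset.range (n + 1)).erase k, ((j : ℤ) - k)) ^ σ) *
          PowerSeries.C (q ^ σ) * (E * E') ^ σ := by ring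
      _ = _ := by rw [hE', one_pow, mul_one]
  rw [h2]
  simp

/-- A polynomial whose rescaled translates are `n! ^ σ` times integer ones has an integral rescaled
local expansion. -/
lemma exists_int_series (d n σ k : ℕ) (hd : ∀ l, 1 ≤ l → l ≤ n → l ∣ d) (hk : k ≤ n) :
    ∃ U : PowerSeries ℤ, ∀ (N : ℝ[X]) (M : ℤ[X]),
      N.comp (C (d : ℝ) * X - C (k : ℝ)) = C ((n.factorial : ℝ) ^ σ) * M.map (Int.castRingHom ℝ) →
      ∀ e, (d : ℝ) ^ e * pfc N n σ e k = ((PowerSeries.coeff e ((M : PowerSeries ℤ) * U) : ℤ) : ℝ) := by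
  obtain ⟨U, hU⟩ := exists_rescale_inv d n σ k hd hk
  refine ⟨U, fun N M hM e => ?_⟩
  have h1 := congrArg (PowerSeries.rescale (d : ℝ)) (pfG_mul N n σ k)
  have h2 : PowerSeries.rescale (d : ℝ) ((N.comp (X - C (k : ℝ)) : ℝ[X]) : PowerSeries ℝ) =
      ((N.comp (C (d : ℝ) * X - C (k : ℝ)) : ℝ[X]) : PowerSeries ℝ) := by
    ext m
    rw [PowerSeries.coeff_rescale, coeff_coe, coeff_coe, mul_comm, ← comp_C_mul_X_coeff, comp_assoc]
    simp only [sub_comp, X_comp, C_comp]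
  have h3 : ((M.map (Int.castRingHom ℝ) : ℝ[X]) : PowerSeries ℝ) =
      PowerSeries.map (Int.castRingHom ℝ) (M : PowerSeries ℤ) := by
    ext m; simp
  rw [map_mul, h2, hM, coe_mul, coe_C, ← hU, h3] at h1
  have hne : PowerSeries.rescale (d : ℝ) ((pfD n σ k : ℝ[X]) : PowerSeries ℝ) ≠ 0 := by
    intro h0
    rw [h0, mul_zero] at hU
    have := congrArg (PowerSeries.coeff 0) hU
    simp only [map_zero, PowerSeries.coeff_zero_C] at this
    have h4 : (n.factorial : ℝ) ^ σ ≠ 0 := by positivity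
    exact h4 this.symm
  have h4 : PowerSeries.rescale (d : ℝ) (pfG N n σ k) =
      PowerSeries.map (Int.castRingHom ℝ) ((M : PowerSeries ℤ) * U) := by
    refine mul_right_cancel₀ hne ?_
    rw [h1, map_mul]; ring
  have h5 := congrArg (PowerSeries.coeff e) h4
  rw [PowerSeries.coeff_rescale] at h5
  rw [pfc, h5, PowerSeries.coeff_map]; rfl

lemma pfc_int (d n σ k : ℕ) (hd : ∀ l, 1 ≤ l → l ≤ n → l ∣ d) (hk : k ≤ n) (N : ℝ[X]) (M : ℤ[X])
    (hM : N.comp (C (d : ℝ) * X - C (k : ℝ)) =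
      C ((n.factorial : ℝ) ^ σ) * M.map (Int.castRingHom ℝ)) (e : ℕ) :
    ∃ z : ℤ, (d : ℝ) ^ e * pfc N n σ e k = z := by
  obtain ⟨U, hU⟩ := exists_int_series d n σ k hd hk
  exact ⟨_, hU N M hM e⟩

/-- Integrality of the polar sum at an integer point. -/
lemma polar_int_of_dvd (d n σ k : ℕ) (hd : ∀ l, 1 ≤ l → l ≤ n → l ∣ d) (hk : k ≤ n) (N : ℝ[X])
    (M : ℤ[X]) (hM : N.comp (C (d : ℝ) * X - C (k : ℝ)) =
      C ((n.factorial : ℝ) ^ σ) * M.map (Int.castRingHom ℝ)) (u : ℕ) (hu1 : 1 ≤ u) (hu : u ≤ n) :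
    ∃ z : ℤ, (d : ℝ) ^ σ * ∑ e ∈ Finset.range σ, pfc N n σ e k / (u : ℝ) ^ (σ - e) = z := by
  have h : ∀ e, ∃ z : ℤ, (d : ℝ) ^ e * pfc N n σ e k = z := pfc_int d n σ k hd hk N M hM
  choose z hz using h
  obtain ⟨c, hc⟩ := hd u hu1 hu
  refine ⟨∑ e ∈ Finset.range σ, z e * (c : ℤ) ^ (σ - e), ?_⟩
  push_cast
  rw [Finset.mul_sum]
  refine Finset.sum_congr rfl fun e he => ?_
  rw [Finset.mem_range] at he
  have hu0 : (u : ℝ) ≠ 0 := by positivity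
  rw [← hz, ← Nat.add_sub_cancel' he.le, pow_add, Nat.add_sub_cancel' he.le]
  have : (d : ℝ) ^ (σ - e) = (u : ℝ) ^ (σ - e) * (c : ℝ) ^ (σ - e) := by
    rw [← mul_pow, hc]; push_cast; rfl
  rw [this]
  field_simp

/-- Integrality of the polar sum at a zero `β / γ - k` of the numerator: the sum telescopes. -/
lemma polar_int_of_zero (d n σ k : ℕ) (hd0 : d ≠ 0) (hd : ∀ l, 1 ≤ l → l ≤ n → l ∣ d) (hk : k ≤ n)
    (hσ : 1 ≤ σ) (N : ℝ[X]) (M : ℤ[X]) (hM : N.comp (C (d : ℝ) * X - C (k : ℝ)) =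
      C ((n.factorial : ℝ) ^ σ) * M.map (Int.castRingHom ℝ)) (β γ : ℕ) (hβ : 1 ≤ β) (hγ : 1 ≤ γ)
    (H : ℤ[X]) (hH : C (d : ℤ) * M = (C (β : ℤ) - C ((γ * d : ℕ) : ℤ) * X) * H) :
    ∃ z : ℤ, (d : ℝ) ^ σ * ∑ e ∈ Finset.range σ, pfc N n σ e k / ((β : ℝ) / γ) ^ (σ - e) = z := by
  obtain ⟨U, hU⟩ := exists_int_series d n σ k hd hk
  have hA := hU N M hM
  set W : PowerSeries ℤ := (H : PowerSeries ℤ) * U with hW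
  have hMW : PowerSeries.C (d : ℤ) * ((M : PowerSeries ℤ) * U) =
      PowerSeries.C (β : ℤ) * W - PowerSeries.C ((γ * d : ℕ) : ℤ) * (PowerSeries.X * W) := by
    have := congrArg (fun p : ℤ[X] => (p : PowerSeries ℤ)) hH
    simp only [coe_mul, coe_sub, coe_C, coe_X] at this
    rw [← mul_assoc, this, hW]; ring
  set w : ℕ → ℝ := fun e => ((PowerSeries.coeff e W : ℤ) : ℝ) with hw
  have h0 : (d : ℝ) * pfc N n σ 0 k = β * w 0 := by
    have h1 := congrArg (fun z : ℤ => (z : ℝ)) (congrArg (PowerSeries.coeff 0) hMW)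
    simp only [PowerSeries.coeff_C_mul, map_sub] at h1
    push_cast at h1
    have := hA 0
    rw [pow_zero, one_mul] at this
    rw [this, hw]
    simpa using h1
  have hs : ∀ e, (d : ℝ) ^ (e + 2) * pfc N n σ (e + 1) k = β * w (e + 1) - γ * d * w e := by
    intro e
    have h1 := congrArg (fun z : ℤ => (z : ℝ)) (congrArg (PowerSeries.coeff (e + 1)) hMW)
    simp only [PowerSeries.coeff_C_mul, map_sub, PowerSeries.coeff_succ_X_mul] at h1
    push_cast at h1
    have := hA (e + 1)
    rw [pow_succ, mul_comm _ (d : ℝ), mul_assoc, this, hw]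
    simpa using h1
  have hβ0 : (β : ℝ) ≠ 0 := by positivity
  have hγ0 : (γ : ℝ) ≠ 0 := by positivity
  have hd0' : (d : ℝ) ≠ 0 := by exact_mod_cast hd0
  -- the factor `β - γ d X` turns the partial sums into single terms
  have key : ∀ r, 1 ≤ r → r ≤ σ → (d : ℝ) ^ σ * ∑ e ∈ Finset.range r,
      pfc N n σ e k / ((β : ℝ) / γ) ^ (σ - e) = γ * (d * γ / β) ^ (σ - r) * w (r - 1) := by
    intro r hr
    induction r, hr using Nat.le_induction with
    | base =>
      intro hr
      obtain ⟨τ, rfl⟩ := Nat.exists_eq_add_of_le' hr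
      have h0' : pfc N n (τ + 1) 0 k = β * w 0 / d := by rw [eq_div_iff hd0', ← h0]; ring
      simp only [Finset.sum_range_one, h0', Nat.sub_zero, Nat.add_sub_cancel, Nat.sub_self]
      simp only [div_pow, mul_pow]
      field_simp
      ring
    | succ r hr ih =>
      intro hrσ
      obtain ⟨r, rfl⟩ := Nat.exists_eq_add_of_le' hr
      obtain ⟨τ, rfl⟩ := Nat.exists_eq_add_of_le' hrσ
      rw [Finset.sum_range_succ, mul_add, ih (by omega)]
      have hs' : pfc N n (τ + (r + 1 + 1)) (r + 1) k = (β * w (r + 1) - γ * d * w r) / d ^ (r + 2) := by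
        rw [eq_div_iff (pow_ne_zero _ hd0'), ← hs]; ring
      have e1 : τ + (r + 1 + 1) - (r + 1) = τ + 1 := by omega
      have e2 : τ + (r + 1 + 1) - (r + 1 + 1) = τ := by omega
      simp only [hs', e1, e2, Nat.add_sub_cancel]
      simp only [div_pow, mul_pow]
      field_simp
      ring
  refine ⟨γ * PowerSeries.coeff (σ - 1) W, ?_⟩
  rw [key σ hσ le_rfl]
  simp [hw]

/-! ### The numerator -/

/-- Pairs `(b, a)` with `b ∈ Ψ`, `1 ≤ a ≤ b` and `a` coprime to `b`: one for each residue of the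
fractional parts of the zeros. -/
def zF (Ψ : Finset ℕ) : Finset ((_ : ℕ) × ℕ) :=
  Ψ.sigma fun b => (Finset.Icc 1 b).filter (Nat.Coprime b)

lemma mem_zF {Ψ : Finset ℕ} {x : (_ : ℕ) × ℕ} :
    x ∈ zF Ψ ↔ x.1 ∈ Ψ ∧ 1 ≤ x.2 ∧ x.2 ≤ x.1 ∧ Nat.Coprime x.1 x.2 := by
  simp [zF, and_assoc]

/-- The linear factor `b (t - ρ + j) + a`. -/
noncomputable def zlin (ρ b a j : ℕ) : ℝ[X] := C (b : ℝ) * (X - C (ρ : ℝ) + C (j : ℝ)) + C (a : ℝ)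

/-- The numerator, without the factor `n! ^ σ`. The `K m` linear factors of each pair `(b, a)` form `K`
blocks of length `m`, each divided by `V b`. -/
noncomputable def zN0 (Ψ : Finset ℕ) (V : ℕ → ℕ) (K m ρ : ℕ) : ℝ[X] :=
  (X - C (ρ : ℝ)) * ∏ x ∈ zF Ψ, ∏ i ∈ Finset.range K,
    (C ((V x.1 : ℝ)⁻¹) * ∏ j ∈ Finset.range m, zlin ρ x.1 x.2 (i * m + j))

lemma prod_range_mul' {M : Type*} [CommMonoid M] (K m : ℕ) (g : ℕ → M) :
    ∏ i ∈ Finset.range K, ∏ j ∈ Finset.range m, g (i * m + j) = ∏ j ∈ Finset.range (K * m), g j := by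
  induction K with
  | zero => simp
  | succ K ih => rw [Finset.prod_range_succ, ih, Nat.succ_mul, Finset.prod_range_add]

lemma zN0_eq (Ψ : Finset ℕ) (V : ℕ → ℕ) (K m ρ : ℕ) : zN0 Ψ V K m ρ =
    (X - C (ρ : ℝ)) * ∏ x ∈ zF Ψ,
      (C ((V x.1 : ℝ)⁻¹ ^ K) * ∏ j ∈ Finset.range (K * m), zlin ρ x.1 x.2 j) := by
  unfold zN0
  congr 1
  refine Finset.prod_congr rfl fun x _ => ?_
  rw [Finset.prod_mul_distrib, Finset.prod_const, Finset.card_range, C_pow, prod_range_mul']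

lemma zlin_comp_int (ρ b a j d k : ℕ) : (zlin ρ b a j).comp (C (d : ℝ) * X - C (k : ℝ)) =
    (C (b : ℤ) * (C (d : ℤ) * X + C (-(k : ℤ) - ρ + j)) + C (a : ℤ) : ℤ[X]).map
      (Int.castRingHom ℝ) := by
  simp only [zlin, add_comp, mul_comp, sub_comp, X_comp, Polynomial.map_add,
    Polynomial.map_mul, map_X, eq_intCast, map_natCast, natCast_comp, Polynomial.map_natCast,
    Polynomial.map_intCast]
  push_cast
  ring

section
variable {Ψ : Finset ℕ} {V : ℕ → ℕ} {K m ρ n d : ℕ}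

lemma block_int (hd : ∀ l, 1 ≤ l → l ≤ n → l ∣ d) (hm : m ≤ n) (b v a : ℕ)
    (hv : v.Coprime b) (hvm : v ∣ m.factorial) (k i : ℕ) :
    ∃ Q : ℤ[X], ∏ j ∈ Finset.range m, (C (b : ℤ) * (C (d : ℤ) * X +
        C (-(k : ℤ) - ρ + (i * m + j : ℕ))) + C (a : ℤ) : ℤ[X]) = C (v : ℤ) * Q := by
  obtain ⟨Q, hQ⟩ := block_dvd d n hd m hm b v hv hvm (-(k : ℤ) - ρ + (i * m : ℕ)) a
  refine ⟨Q, ?_⟩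
  rw [← hQ]
  refine Finset.prod_congr rfl fun j _ => ?_
  push_cast
  simp only [add_assoc]

lemma block_map (b v a : ℕ) (hv0 : v ≠ 0) (k i : ℕ) (Q : ℤ[X])
    (hQ : ∏ j ∈ Finset.range m, (C (b : ℤ) * (C (d : ℤ) * X +
        C (-(k : ℤ) - ρ + (i * m + j : ℕ))) + C (a : ℤ) : ℤ[X]) = C (v : ℤ) * Q) :
    (C ((v : ℝ)⁻¹) * ∏ j ∈ Finset.range m, zlin ρ b a (i * m + j)).comp
      (C (d : ℝ) * X - C (k : ℝ)) = Q.map (Int.castRingHom ℝ) := by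
  rw [mul_comp, C_comp, ← coe_compRingHom_apply (∏ j ∈ Finset.range m, zlin ρ b a (i * m + j)), map_prod]
  simp only [coe_compRingHom_apply, zlin_comp_int]
  rw [← Polynomial.map_prod, hQ, Polynomial.map_mul, map_C, ← mul_assoc, ← C_mul]
  have : ((v : ℝ)⁻¹) * (Int.castRingHom ℝ) (v : ℤ) = 1 := by
    simp [hv0]
  rw [this, C_1, one_mul]

/-- Integer form of the numerator translated to `-k` and rescaled by `d`. -/
lemma zN0_int (hd : ∀ l, 1 ≤ l → l ≤ n → l ∣ d) (hm : m ≤ n) (hV0 : ∀ b ∈ Ψ, V b ≠ 0)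
    (hV : ∀ b ∈ Ψ, (V b).Coprime b) (hVm : ∀ b ∈ Ψ, V b ∣ m.factorial) (k : ℕ) :
    ∃ M : ℤ[X], (zN0 Ψ V K m ρ).comp (C (d : ℝ) * X - C (k : ℝ)) = M.map (Int.castRingHom ℝ) ∧
      ∀ β γ ν a, γ ∈ Ψ → γ ≠ 1 → β = γ * ν + a → 1 ≤ a → a < γ → Nat.Coprime γ a → ν < ρ + k →
        ρ + k - ν - 1 < K * m →
        ∃ H : ℤ[X], C (d : ℤ) * M = (C (β : ℤ) - C ((γ * d : ℕ) : ℤ) * X) * H := by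
  have h1 : ∀ x : (_ : ℕ) × ℕ, ∀ i : ℕ, ∃ Q : ℤ[X], x ∈ zF Ψ →
      ∏ j ∈ Finset.range m, (C (x.1 : ℤ) * (C (d : ℤ) * X +
        C (-(k : ℤ) - ρ + (i * m + j : ℕ))) + C (x.2 : ℤ) : ℤ[X]) = C (V x.1 : ℤ) * Q := by
    intro x i
    by_cases hx : x ∈ zF Ψ
    · have hb := (mem_zF.1 hx).1
      obtain ⟨Q, hQ⟩ := block_int (ρ := ρ) hd hm x.1 (V x.1) x.2 (hV _ hb) (hVm _ hb) k i
      exact ⟨Q, fun _ => hQ⟩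
    · exact ⟨0, fun h => absurd h hx⟩
  choose Q hQ using h1
  refine ⟨(C (d : ℤ) * X - C ((k : ℤ) + ρ)) * ∏ x ∈ zF Ψ, ∏ i ∈ Finset.range K, Q x i, ?_, ?_⟩
  · rw [zN0, mul_comp, Polynomial.map_mul]
    congr 1
    · simp only [sub_comp, X_comp, C_comp, Polynomial.map_sub, Polynomial.map_mul, map_X,
        eq_intCast]
      push_cast
      simp
      ring
    · rw [← coe_compRingHom_apply, map_prod, Polynomial.map_prod]
      refine Finset.prod_congr rfl fun x hx => ?_
      rw [map_prod, Polynomial.map_prod]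
      refine Finset.prod_congr rfl fun i _ => ?_
      rw [coe_compRingHom_apply]
      exact block_map _ _ _ (hV0 _ (mem_zF.1 hx).1) _ _ _ (hQ x i hx)
  · intro β γ ν a hγ hγ1 hβ ha1 haγ hco hν hL
    have hx : (⟨γ, γ - a⟩ : (_ : ℕ) × ℕ) ∈ zF Ψ := by
      refine mem_zF.2 ⟨hγ, by simp only; omega, by simp only; omega, ?_⟩
      simp only
      exact (Nat.coprime_self_sub_right haγ.le).2 hco
    have hγ0 : 0 < γ := by omega
    have hm0 : 0 < m := by
      rcases Nat.eq_zero_or_pos m with rfl | h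
      · simp at hL
      · exact h
    set J := ρ + k - ν - 1 with hJ
    set i0 := J / m with hi0
    set j0 := J % m with hj0
    have hJ' : i0 * m + j0 = J := Nat.div_add_mod' J m
    have hi0K : i0 < K := (Nat.div_lt_iff_lt_mul hm0).2 hL
    have hj0m : j0 < m := Nat.mod_lt _ hm0
    -- the zero `β / γ - k` belongs to block `i0`
    have hblock : ∃ Q' : ℤ[X], C (d : ℤ) * Q ⟨γ, γ - a⟩ i0 =
        (C (β : ℤ) - C ((γ * d : ℕ) : ℤ) * X) * Q' := by
      have hq := hQ _ i0 hx
      simp only at hq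
      rw [← Finset.mul_prod_erase _ _ (Finset.mem_range.2 hj0m), hJ'] at hq
      set B := ∏ j ∈ (Finset.range m).erase j0, (C (γ : ℤ) * (C (d : ℤ) * X +
        C (-(k : ℤ) - ρ + (i0 * m + j : ℕ))) + C ((γ - a : ℕ) : ℤ) : ℤ[X]) with hB
      have hlin : (C (γ : ℤ) * (C (d : ℤ) * X + C (-(k : ℤ) - ρ + (J : ℕ))) +
          C ((γ - a : ℕ) : ℤ) : ℤ[X]) = C (γ : ℤ) * (C (d : ℤ) * X) + C (-(β : ℤ)) := by
        have e1 : (J : ℤ) = ρ + k - ν - 1 := by omega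
        have e2 : ((γ - a : ℕ) : ℤ) = γ - a := by omega
        have e3 : (β : ℤ) = γ * ν + a := by exact_mod_cast hβ
        rw [mul_add, add_assoc, ← C_mul, ← C_add, e1, e2, e3]
        congr 2
        ring
      rw [hlin] at hq
      have hcop : IsCoprime (-(β : ℤ)) (γ : ℤ) := by
        rw [IsCoprime.neg_left_iff, Nat.isCoprime_iff_coprime, hβ]
        rw [Nat.coprime_comm]
        simpa using hco
      obtain ⟨Q', hQ'⟩ := dvd_mul_of_dvd_lin_mul (V γ) d γ (-(β : ℤ)) hcop B ⟨_, hq⟩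
      refine ⟨-Q', ?_⟩
      have hVne : (C (V γ : ℤ) : ℤ[X]) ≠ 0 := by
        rw [Ne, C_eq_zero]; exact_mod_cast hV0 γ hγ
      refine mul_left_cancel₀ hVne ?_
      calc C (V γ : ℤ) * (C (d : ℤ) * Q ⟨γ, γ - a⟩ i0)
          = C (d : ℤ) * (C (V γ : ℤ) * Q ⟨γ, γ - a⟩ i0) := by ring
        _ = (C (γ : ℤ) * (C (d : ℤ) * X) + C (-(β : ℤ))) * (C (d : ℤ) * B) := by rw [← hq]; ring
        _ = (C (γ : ℤ) * (C (d : ℤ) * X) + C (-(β : ℤ))) * (C (V γ : ℤ) * Q') := by rw [hQ']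
        _ = _ := by
          rw [Nat.cast_mul, C_mul, C_neg]; ring
    obtain ⟨Q', hQ'⟩ := hblock
    refine ⟨Q' * ((C (d : ℤ) * X - C ((k : ℤ) + ρ)) *
      ((∏ i ∈ (Finset.range K).erase i0, Q ⟨γ, γ - a⟩ i) *
        ∏ x ∈ (zF Ψ).erase ⟨γ, γ - a⟩, ∏ i ∈ Finset.range K, Q x i)), ?_⟩
    rw [← Finset.mul_prod_erase _ _ hx, ← Finset.mul_prod_erase _ _ (Finset.mem_range.2 hi0K),
      ← mul_assoc _ Q', ← hQ']
    ring

lemma zlin_eval (ρ b a j : ℕ) (t : ℝ) : (zlin ρ b a j).eval t = b * (t - ρ + j) + a := by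
  simp [zlin]

lemma zN0_eval (t : ℝ) : (zN0 Ψ V K m ρ).eval t = (t - ρ) * ∏ x ∈ zF Ψ,
    ((V x.1 : ℝ)⁻¹ ^ K * ∏ j ∈ Finset.range (K * m), (x.1 * (t - ρ + j) + x.2)) := by
  rw [zN0_eq]
  simp only [eval_mul, eval_prod, eval_C, zlin_eval, eval_sub, eval_X]

/-- To the right of `ρ` all factors of the numerator are positive. -/
lemma zN0_eval_pos (hV0 : ∀ b ∈ Ψ, V b ≠ 0) (t : ℝ) (ht : ρ < t) :
    0 < (zN0 Ψ V K m ρ).eval t := by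
  rw [zN0_eval]
  refine mul_pos (by linarith) (Finset.prod_pos fun x hx => ?_)
  have h := mem_zF.1 hx
  refine mul_pos ?_ (Finset.prod_pos fun j _ => ?_)
  · have := Nat.pos_of_ne_zero (hV0 _ h.1); positivity
  · have h2 : (1 : ℝ) ≤ x.2 := by exact_mod_cast h.2.1
    have : (0 : ℝ) ≤ x.1 * (t - ρ + j) := by
      have : 0 < t - ρ := by linarith
      positivity
    linarith

/-- Zeros of the numerator at the fractions `l / b ≤ ρ`. -/
lemma zN0_eval_zero (hΨ : ∀ b ∈ Ψ, ∀ c, c ∣ b → c ∈ Ψ) (hρ : ρ ≤ K * m)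
    (b l : ℕ) (hb : b ∈ Ψ) (hb0 : b ≠ 0) (hl : 1 ≤ l) (hlb : l ≤ b * ρ) :
    (zN0 Ψ V K m ρ).eval ((l : ℝ) / b) = 0 := by
  rw [zN0_eval]
  have hg : 0 < Nat.gcd l b := Nat.gcd_pos_of_pos_left _ hl
  obtain ⟨l', b', hcop, hl', hb'⟩ := Nat.exists_coprime l b
  set g := Nat.gcd l b
  have hb'0 : 0 < b' := by
    rcases Nat.eq_zero_or_pos b' with h | h
    · exfalso; rw [h] at hb'; simp at hb'; exact hb0 hb'
    · exact h
  have hlb' : l' ≤ b' * ρ := by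
    have : g * l' ≤ g * (b' * ρ) := by
      calc g * l' = l := by rw [mul_comm]; exact hl'.symm
        _ ≤ b * ρ := hlb
        _ = g * (b' * ρ) := by rw [hb']; ring
    exact Nat.le_of_mul_le_mul_left this hg
  have hl'1 : 1 ≤ l' := by
    rcases Nat.eq_zero_or_pos l' with h | h
    · exfalso; rw [h] at hl'; omega
    · exact h
  have heq : (l : ℝ) / b = l' / b' := by
    rw [hl', hb']; push_cast
    have : (g : ℝ) ≠ 0 := by positivity
    field_simp
  rw [heq]
  have hb'Ψ : b' ∈ Ψ := hΨ b hb b' ⟨g, hb'⟩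
  have hb'R : (b' : ℝ) ≠ 0 := by positivity
  by_cases hρe : b' = 1 ∧ l' = ρ
  · rw [hρe.1, hρe.2]; simp
  -- the factor `b' (t - ρ + j) + a` with `l' = b' ν + r`, `a = b' - r`, `j = ρ - ν - 1`
  set ν := l' / b' with hν
  set r := l' % b' with hr
  have hdm : b' * ν + r = l' := Nat.div_add_mod l' b'
  have hrlt : r < b' := Nat.mod_lt _ hb'0
  clear_value ν r
  clear hν hr
  have hνρ : ν < ρ := by
    by_contra h
    push Not at h
    have h1 : b' * ρ ≤ b' * ν := Nat.mul_le_mul_left _ h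
    have h2 : r = 0 := by omega
    have h3 : l' = b' * ρ := by omega
    apply hρe
    have : b' ∣ l' := ⟨ρ, h3⟩
    have h4 : b' = 1 := Nat.eq_one_of_dvd_coprimes hcop this dvd_rfl
    exact ⟨h4, by rw [h3, h4, one_mul]⟩
  have hx : (⟨b', b' - r⟩ : (_ : ℕ) × ℕ) ∈ zF Ψ := by
    refine mem_zF.2 ⟨hb'Ψ, by simp only; omega, by simp only; omega, ?_⟩
    simp only
    rw [Nat.coprime_self_sub_right hrlt.le]
    rw [← hdm] at hcop
    rw [Nat.coprime_comm]
    simpa using hcop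
  rw [Finset.prod_eq_zero hx, mul_zero]
  rw [mul_eq_zero]; right
  have hlt : ρ - ν - 1 < K * m := lt_of_lt_of_le (by omega) hρ
  refine Finset.prod_eq_zero (i := ρ - ν - 1) (Finset.mem_range.2 hlt) ?_
  simp only
  have e1 : ((ρ - ν - 1 : ℕ) : ℝ) = ρ - ν - 1 := by
    have h1 : ρ = ν + 1 + (ρ - ν - 1) := by omega
    have h2 : (ρ : ℝ) = ν + 1 + (ρ - ν - 1 : ℕ) := by exact_mod_cast h1
    linarith
  rw [e1, Nat.cast_sub hrlt.le, ← hdm]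
  push_cast
  field_simp
  ring

lemma zN0_natDegree_le : (zN0 Ψ V K m ρ).natDegree ≤ K * m * (zF Ψ).card + 1 := by
  rw [zN0_eq]
  refine natDegree_mul_le.trans ?_
  have h1 : (X - C (ρ : ℝ)).natDegree = 1 := natDegree_X_sub_C _
  have h2 : ∀ x ∈ zF Ψ, (C ((V x.1 : ℝ)⁻¹ ^ K) *
      ∏ j ∈ Finset.range (K * m), zlin ρ x.1 x.2 j).natDegree ≤ K * m := by
    intro x _
    refine (natDegree_C_mul_le _ _).trans ((natDegree_prod_le _ _).trans ?_)
    have : ∀ j ∈ Finset.range (K * m), (zlin ρ x.1 x.2 j).natDegree ≤ 1 := by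
      intro j _
      unfold zlin
      compute_degree
    exact (Finset.sum_le_sum this).trans (by simp)
  have h3 := (natDegree_prod_le (zF Ψ) (fun x => C ((V x.1 : ℝ)⁻¹ ^ K) *
      ∏ j ∈ Finset.range (K * m), zlin ρ x.1 x.2 j)).trans (Finset.sum_le_sum h2)
  rw [Finset.sum_const, smul_eq_mul] at h3
  have : (zF Ψ).card * (K * m) = K * m * (zF Ψ).card := by ring
  omega

end

lemma zlin_comp_neg (ρ n L b a j : ℕ) (hL : L = 2 * ρ + n) (hj : j < L) (ha : a ≤ b) :
    (zlin ρ b a j).comp (-X - C (n : ℝ)) = -zlin ρ b (b - a) (L - 1 - j) := by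
  unfold zlin
  rw [Nat.cast_sub ha, Nat.cast_sub (by omega), Nat.cast_sub (by omega), hL]
  simp only [add_comp, mul_comp, sub_comp, X_comp, C_comp, C_sub]
  push_cast
  simp [C_add, map_ofNat (C : ℝ →+* ℝ[X])]
  ring

/-- The numerator is antisymmetric about `-n / 2`. -/
lemma zN0_symm (Ψ : Finset ℕ) (V : ℕ → ℕ) (K m ρ n : ℕ) (hΨ1 : 1 ∈ Ψ)
    (hL : K * m = 2 * ρ + n) (hn : Even n) :
    (zN0 Ψ V K m ρ).comp (-X - C (n : ℝ)) = -zN0 Ψ V K m ρ := by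
  set L := K * m with hLdef
  have hLe : Even L := by rw [hL]; exact (even_two_mul ρ).add hn
  have h1 : zN0 Ψ V K m ρ = (∏ x ∈ zF Ψ, C ((V x.1 : ℝ)⁻¹ ^ K)) *
      (((X - C (ρ : ℝ)) * ∏ j ∈ Finset.range L, zlin ρ 1 1 j) *
        ∏ x ∈ (zF Ψ).erase ⟨1, 1⟩, ∏ j ∈ Finset.range L, zlin ρ x.1 x.2 j) := by
    have hx : (⟨1, 1⟩ : (_ : ℕ) × ℕ) ∈ zF Ψ := mem_zF.2 ⟨hΨ1, by simp⟩
    rw [zN0_eq, Finset.prod_mul_distrib, ← Finset.mul_prod_erase (zF Ψ)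
      (fun x => ∏ j ∈ Finset.range L, zlin ρ x.1 x.2 j) hx]
    ring
  have hA : ((X - C (ρ : ℝ)) * ∏ j ∈ Finset.range L, zlin ρ 1 1 j).comp (-X - C (n : ℝ)) =
      -((X - C (ρ : ℝ)) * ∏ j ∈ Finset.range L, zlin ρ 1 1 j) := by
    have e : (X - C (ρ : ℝ)) * ∏ j ∈ Finset.range L, zlin ρ 1 1 j =
        ∏ j ∈ Finset.range (L + 1), (X - C (ρ : ℝ) + C (j : ℝ)) := by
      rw [Finset.prod_range_succ', mul_comm]
      congr 1
      · refine Finset.prod_congr rfl fun j _ => ?_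
        simp [zlin]; ring
      · simp
    rw [e, ← coe_compRingHom_apply, map_prod]
    rw [← Finset.prod_range_reflect (fun j => (X - C (ρ : ℝ) + C (j : ℝ)) ) (L + 1)]
    have : ∀ j ∈ Finset.range (L + 1), compRingHom (-X - C (n : ℝ)) (X - C (ρ : ℝ) + C (j : ℝ)) =
        (-1) * (X - C (ρ : ℝ) + C ((L + 1 - 1 - j : ℕ) : ℝ)) := by
      intro j hj
      rw [Finset.mem_range] at hj
      rw [Nat.add_sub_cancel, Nat.cast_sub (by omega), hL, coe_compRingHom_apply]
      simp only [add_comp, sub_comp, X_comp, C_comp, C_sub]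
      push_cast
      simp [C_add, map_ofNat (C : ℝ →+* ℝ[X])]
      ring
    rw [Finset.prod_congr rfl this, Finset.prod_mul_distrib]
    simp [hLe.add_one.neg_one_pow]
  have hB : (∏ x ∈ (zF Ψ).erase ⟨1, 1⟩, ∏ j ∈ Finset.range L, zlin ρ x.1 x.2 j).comp
      (-X - C (n : ℝ)) = ∏ x ∈ (zF Ψ).erase ⟨1, 1⟩, ∏ j ∈ Finset.range L, zlin ρ x.1 x.2 j := by
    rw [← coe_compRingHom_apply, map_prod]
    have hlt : ∀ x ∈ (zF Ψ).erase ⟨1, 1⟩, 1 ≤ x.2 ∧ x.2 < x.1 ∧ x.1 ∈ Ψ ∧ Nat.Coprime x.1 x.2 := by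
      rintro ⟨b, a⟩ hx
      rw [Finset.mem_erase, mem_zF] at hx
      obtain ⟨h1, h2, h3, h4, h5⟩ := hx
      simp only at h2 h3 h4 h5 ⊢
      refine ⟨h3, lt_of_le_of_ne h4 ?_, h2, h5⟩
      rintro rfl
      rw [Nat.coprime_self] at h5
      subst h5
      exact h1 rfl
    have hmem : ∀ x ∈ (zF Ψ).erase ⟨1, 1⟩, (⟨x.1, x.1 - x.2⟩ : (_ : ℕ) × ℕ) ∈
        (zF Ψ).erase ⟨1, 1⟩ := by
      intro x hx
      obtain ⟨h1, h2, h3, h4⟩ := hlt x hx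
      rw [Finset.mem_erase, mem_zF]
      refine ⟨?_, h3, by simp only; omega, by simp only; omega, ?_⟩
      · intro h
        have : x.1 = 1 := congrArg (fun y => y.1) h
        omega
      · exact (Nat.coprime_self_sub_right h2.le).2 h4
    refine Finset.prod_bij' (fun x _ => ⟨x.1, x.1 - x.2⟩) (fun x _ => ⟨x.1, x.1 - x.2⟩)
      hmem hmem ?_ ?_ ?_
    · rintro ⟨b, a⟩ hx
      have := hlt _ hx
      simp only at this ⊢
      congr 1; omega
    · rintro ⟨b, a⟩ hx
      have := hlt _ hx
      simp only at this ⊢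
      congr 1; omega
    · rintro ⟨b, a⟩ hx
      have hh := hlt _ hx
      simp only at hh ⊢
      rw [map_prod, ← Finset.prod_range_reflect (fun j => zlin ρ b (b - a) j)]
      have : ∀ j ∈ Finset.range L, compRingHom (-X - C (n : ℝ)) (zlin ρ b a j) =
          (-1) * zlin ρ b (b - a) (L - 1 - j) := by
        intro j hj
        rw [coe_compRingHom_apply, zlin_comp_neg ρ n L b a j hL (Finset.mem_range.1 hj) (by omega)]
        ring
      rw [Finset.prod_congr rfl this, Finset.prod_mul_distrib]
      simp [hLe.neg_one_pow]
  rw [h1]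
  have hCc : (∏ x ∈ zF Ψ, (C ((V x.1 : ℝ)⁻¹ ^ K) : ℝ[X])).comp (-X - C (n : ℝ)) =
      ∏ x ∈ zF Ψ, C ((V x.1 : ℝ)⁻¹ ^ K) := by
    rw [← map_prod, C_comp]
  rw [mul_comp, mul_comp _ (∏ x ∈ (zF Ψ).erase ⟨1, 1⟩, _), hA, hB, hCc]
  ring

/-! ### Sums of rational functions as linear forms in zeta values -/

/-- The rational function `N(t) / ∏ (t + k) ^ σ`. -/
noncomputable def pfR (N : ℝ[X]) (n σ : ℕ) (t : ℝ) : ℝ :=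
  N.eval t / ∏ k ∈ Finset.range (n + 1), (t + k) ^ σ

lemma hasSum_zetaR (j : ℕ) (hj : 2 ≤ j) :
    HasSum (fun m : ℕ => 1 / ((m : ℝ) + 1) ^ j) (zetaR j) := by
  have h1 : Summable (fun m : ℕ => 1 / (m : ℝ) ^ j) :=
    Real.summable_one_div_nat_pow.2 (by omega)
  have h2 : ∑' m : ℕ, 1 / (m : ℝ) ^ j = zetaR j := by
    rw [zetaR, zeta_nat_eq_tsum_of_gt_one (by omega)]
    have : (∑' m : ℕ, 1 / (m : ℂ) ^ j) = ((∑' m : ℕ, 1 / (m : ℝ) ^ j : ℝ) : ℂ) := by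
      push_cast; rfl
    rw [this, Complex.ofReal_re]
  have h3 : HasSum (fun m : ℕ => 1 / (m : ℝ) ^ j) (zetaR j) := h2 ▸ h1.hasSum
  have h4 := (hasSum_nat_add_iff' 1).2 h3
  have h5 : zetaR j - ∑ i ∈ Finset.range 1, 1 / (i : ℝ) ^ j = zetaR j := by
    simp; omega
  rw [h5] at h4
  simpa using h4

/-- A telescoping series. No summability of `f` is needed, so that simple poles, with
`f m = 1 / (m + 1)`, are covered. -/
lemma hasSum_shift_sub (f : ℕ → ℝ) (hf : Antitone f) (h0 : Tendsto f atTop (nhds 0)) (c : ℕ) :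
    HasSum (fun m => f (m + c) - f m) (-∑ l ∈ Finset.range c, f l) := by
  induction c with
  | zero => simp
  | succ c ih =>
    have h1 : HasSum (fun m => f (m + c) - f (m + (c + 1))) (f c) := by
      rw [hasSum_iff_tendsto_nat_of_nonneg (fun m => sub_nonneg.2 (hf (by omega)))]
      have h2 : ∀ N, ∑ i ∈ Finset.range N, (f (i + c) - f (i + (c + 1))) = f c - f (N + c) := by
        intro N
        have := Finset.sum_range_sub' (fun i => f (i + c)) N
        simp only [zero_add] at this
        rw [← this]
        refine Finset.sum_congr rfl fun i _ => ?_
        congr 2; omega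
      simp only [h2]
      have h3 : Tendsto (fun N => f (N + c)) atTop (nhds 0) := (tendsto_add_atTop_iff_nat c).2 h0
      simpa using h3.const_sub (f c)
    have h2 := ih.sub h1
    have e : (fun m => f (m + (c + 1)) - f m) =
        fun m => f (m + c) - f m - (f (m + c) - f (m + (c + 1))) := by
      funext m; ring
    rw [Finset.sum_range_succ, neg_add, ← sub_eq_add_neg, e]
    exact h2

/-- `∑ R((m + 1) / b)` as a linear form in zeta values. The coefficient of `ζ(1)` vanishes, being
the sum of the residues. -/
lemma hasSum_linear_form (N : ℝ[X]) (n σ b : ℕ) (hσ : 1 ≤ σ) (hN : N.natDegree + 1 < (n + 1) * σ)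
    (hb : 1 ≤ b) :
    HasSum (fun m : ℕ => pfR N n σ (((m : ℝ) + 1) / b))
      (∑ e ∈ Finset.range σ, (∑ k ∈ Finset.range (n + 1), pfc N n σ e k) *
          (b : ℝ) ^ (σ - e) * zetaR (σ - e) -
        ∑ k ∈ Finset.range (n + 1), ∑ e ∈ Finset.range σ, pfc N n σ e k *
          ∑ l ∈ Finset.range (b * k), ((b : ℝ) / (l + 1)) ^ (σ - e)) := by
  have hb0 : (b : ℝ) ≠ 0 := by positivity
  have h1 : ∀ m : ℕ, pfR N n σ (((m : ℝ) + 1) / b) =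
      ∑ e ∈ Finset.range σ, (∑ k ∈ Finset.range (n + 1), pfc N n σ e k) * (b : ℝ) ^ (σ - e) *
        (1 / ((m : ℝ) + 1) ^ (σ - e)) +
      ∑ k ∈ Finset.range (n + 1), ∑ e ∈ Finset.range σ, pfc N n σ e k * ((b : ℝ) ^ (σ - e) *
        (1 / (((m + b * k : ℕ) : ℝ) + 1) ^ (σ - e) - 1 / ((m : ℝ) + 1) ^ (σ - e))) := by
    intro m
    rw [pfR, pf_eval N n σ (by omega) _ (by positivity), Finset.sum_comm (t := Finset.range σ),
      Finset.sum_comm (t := Finset.range σ), ← Finset.sum_add_distrib]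
    refine Finset.sum_congr rfl fun e _ => ?_
    rw [Finset.sum_mul, Finset.sum_mul, ← Finset.sum_add_distrib]
    refine Finset.sum_congr rfl fun k _ => ?_
    have : ((m : ℝ) + 1) / b + k = (((m + b * k : ℕ) : ℝ) + 1) / b := by
      push_cast; field_simp; ring
    rw [this, div_pow]
    have : (((m + b * k : ℕ) : ℝ) + 1) ≠ 0 := by positivity
    field_simp
    ring
  simp only [h1, sub_eq_add_neg (∑ e ∈ Finset.range σ, _ * zetaR _)]
  refine HasSum.add ?_ ?_
  · refine hasSum_sum fun e he => ?_
    rw [Finset.mem_range] at he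
    by_cases h : e = σ - 1
    · rw [h, pf_residue_sum N n σ hσ hN]
      simp
    · exact (hasSum_zetaR (σ - e) (by omega)).mul_left _
  · rw [← Finset.sum_neg_distrib]
    refine hasSum_sum fun k _ => ?_
    rw [← Finset.sum_neg_distrib]
    refine hasSum_sum fun e he => ?_
    rw [Finset.mem_range] at he
    rw [← mul_neg]
    refine HasSum.mul_left _ ?_
    have h2 := (hasSum_shift_sub (fun m : ℕ => 1 / ((m : ℝ) + 1) ^ (σ - e)) ?_ ?_ (b * k)).mul_left
      ((b : ℝ) ^ (σ - e))
    · convert h2 using 1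
      rw [mul_neg, Finset.mul_sum]
      congr 1
      refine Finset.sum_congr rfl fun l _ => ?_
      rw [div_pow]; ring
    · intro i j hij
      have : (i : ℝ) ≤ j := by exact_mod_cast hij
      simp only
      gcongr
    · have h3 : Tendsto (fun m : ℕ => ((m : ℝ) + 1) ^ (σ - e)) atTop atTop := by
        refine (tendsto_pow_atTop (by omega)).comp ?_
        exact tendsto_atTop_add_const_right _ _ tendsto_natCast_atTop_atTop
      simp only [one_div]
      exact h3.inv_tendsto_atTop

/-! ### The linear forms -/

/-- Admissible parameters of the construction. The `2 ρ + n` linear factors of each pair `(b, a)` are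
cut into `K` blocks of length `m`, each divided by a divisor `V b` of `m!` prime to `b`. The condition
`deg` says that the numerator has at most about a quarter as many zeros as there are poles. -/
structure ZParam (Ψ : Finset ℕ) (V : ℕ → ℕ) (K m ρ n σ : ℕ) : Prop where
  one_mem : 1 ∈ Ψ
  closed : ∀ b ∈ Ψ, ∀ c, c ∣ b → c ∈ Ψ
  zero_notMem : 0 ∉ Ψ
  V_ne : ∀ b ∈ Ψ, V b ≠ 0
  V_cop : ∀ b ∈ Ψ, (V b).Coprime b
  V_dvd : ∀ b ∈ Ψ, V b ∣ m.factorial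
  hL : K * m = 2 * ρ + n
  n_even : Even n
  m_le : m ≤ n
  σ_even : Even σ
  σ_ge : 4 ≤ σ
  n_pos : 1 ≤ n
  n_le : n ≤ ρ
  deg : 4 * (K * m * (zF Ψ).card) ≤ n * σ

/-- The numerator of the rational function. -/
noncomputable def zN (Ψ : Finset ℕ) (V : ℕ → ℕ) (K m ρ n σ : ℕ) : ℝ[X] :=
  C ((n.factorial : ℝ) ^ σ) * zN0 Ψ V K m ρ

namespace ZParam
variable {Ψ : Finset ℕ} {V : ℕ → ℕ} {K m ρ n σ : ℕ} (h : ZParam Ψ V K m ρ n σ)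
include h

lemma natDegree_lt : (zN Ψ V K m ρ n σ).natDegree + 1 < (n + 1) * σ := by
  have h1 : (zN Ψ V K m ρ n σ).natDegree ≤ K * m * (zF Ψ).card + 1 :=
    (natDegree_C_mul_le _ _).trans zN0_natDegree_le
  have h2 := h.deg
  have h3 := h.σ_ge
  have h4 : (n + 1) * σ = n * σ + σ := by ring
  omega

lemma symm : (zN Ψ V K m ρ n σ).comp (-X - C (n : ℝ)) = -zN Ψ V K m ρ n σ := by
  rw [zN, mul_comp, C_comp, zN0_symm Ψ V K m ρ n h.one_mem h.hL h.n_even, mul_neg]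

/-- `d ^ σ S_b` is an integer combination of `1` and of the `b ^ i ζ(i)`, with coefficients of
the latter independent of `b`. -/
lemma linear_form (d : ℕ) (hd0 : d ≠ 0) (hd : ∀ l, 1 ≤ l → l ≤ n → l ∣ d) :
    ∃ z : ℕ → ℤ, ∀ b ∈ Ψ, ∃ (S : ℝ) (y : ℤ),
      HasSum (fun m' : ℕ => pfR (zN Ψ V K m ρ n σ) n σ (((m' : ℝ) + 1) / b)) S ∧
      (d : ℝ) ^ σ * S = ∑ i ∈ (Finset.Icc 3 (σ - 1)).filter Odd, (z i : ℝ) * (b : ℝ) ^ i * zetaR i +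
        y := by
  have hM : ∀ k : ℕ, ∃ M : ℤ[X], (zN Ψ V K m ρ n σ).comp (C (d : ℝ) * X - C (k : ℝ)) =
      C ((n.factorial : ℝ) ^ σ) * M.map (Int.castRingHom ℝ) ∧
      ∀ β γ ν a, γ ∈ Ψ → γ ≠ 1 → β = γ * ν + a → 1 ≤ a → a < γ → Nat.Coprime γ a → ν < ρ + k →
        ρ + k - ν - 1 < K * m →
        ∃ H : ℤ[X], C (d : ℤ) * M = (C (β : ℤ) - C ((γ * d : ℕ) : ℤ) * X) * H := by
    intro k
    obtain ⟨M, hM, hM2⟩ := zN0_int (K := K) (ρ := ρ) hd h.m_le h.V_ne h.V_cop h.V_dvd k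
    refine ⟨M, ?_, hM2⟩
    rw [zN, mul_comp, C_comp, hM]
  choose M hM hM2 using hM
  set N := zN Ψ V K m ρ n σ with hN
  have hσ := h.σ_ge
  -- the zeta coefficients
  have hz : ∀ e, ∃ z : ℤ, e ≤ σ → (d : ℝ) ^ σ * ∑ k ∈ Finset.range (n + 1), pfc N n σ e k = z := by
    intro e
    by_cases he : e ≤ σ
    · have h1 : ∀ k, ∃ z : ℤ, k ≤ n → (d : ℝ) ^ e * pfc N n σ e k = z := by
        intro k
        by_cases hk : k ≤ n
        · obtain ⟨z, hz⟩ := pfc_int d n σ k hd hk N (M k) (hM k) e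
          exact ⟨z, fun _ => hz⟩
        · exact ⟨0, fun h => absurd h hk⟩
      choose z hz using h1
      refine ⟨(d : ℤ) ^ (σ - e) * ∑ k ∈ Finset.range (n + 1), z k, fun _ => ?_⟩
      push_cast
      rw [← Nat.sub_add_cancel he, pow_add, Nat.sub_add_cancel he, mul_assoc, Finset.mul_sum]
      congr 1
      refine Finset.sum_congr rfl fun k hk => ?_
      exact hz k (by rw [Finset.mem_range] at hk; omega)
    · exact ⟨0, fun h => absurd h he⟩
  choose z hz using hz
  refine ⟨fun i => z (σ - i), fun b hb => ?_⟩
  have hb0 : b ≠ 0 := fun h0 => h.zero_notMem (h0 ▸ hb)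
  have hb1 : 1 ≤ b := Nat.one_le_iff_ne_zero.2 hb0
  have hsum := hasSum_linear_form N n σ b (by omega) h.natDegree_lt hb1
  -- the rational part
  have hy : ∀ k l : ℕ, ∃ y : ℤ, k ≤ n → l < b * k → (d : ℝ) ^ σ * ∑ e ∈ Finset.range σ,
      pfc N n σ e k * ((b : ℝ) / ((l : ℝ) + 1)) ^ (σ - e) = y := by
    intro k l
    by_cases hk : k ≤ n ∧ l < b * k
    swap
    · exact ⟨0, fun h1 h2 => absurd ⟨h1, h2⟩ hk⟩
    obtain ⟨hk, hl⟩ := hk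
    suffices hs : ∃ y : ℤ, (d : ℝ) ^ σ * ∑ e ∈ Finset.range σ,
        pfc N n σ e k / (((l + 1 : ℕ) : ℝ) / b) ^ (σ - e) = y by
      obtain ⟨y, hy⟩ := hs
      refine ⟨y, fun _ _ => ?_⟩
      rw [← hy]
      congr 1
      refine Finset.sum_congr rfl fun e _ => ?_
      rw [div_eq_mul_inv (pfc N n σ e k), ← inv_pow, inv_div]
      push_cast
      rfl
    obtain ⟨l', b', hcop, hl', hb'⟩ := Nat.exists_coprime (l + 1) b
    have hg : 0 < Nat.gcd (l + 1) b := Nat.gcd_pos_of_pos_left _ (by omega)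
    set g := Nat.gcd (l + 1) b
    have hb'0 : 0 < b' := by
      rcases Nat.eq_zero_or_pos b' with h | h
      · exfalso; rw [h] at hb'; simp at hb'; exact hb0 hb'
      · exact h
    have hl'1 : 1 ≤ l' := by
      rcases Nat.eq_zero_or_pos l' with h | h
      · exfalso; rw [h] at hl'; omega
      · exact h
    have hlb' : l' ≤ b' * k := by
      have : g * l' ≤ g * (b' * k) := by
        calc g * l' = l + 1 := by rw [mul_comm]; exact hl'.symm
          _ ≤ b * k := hl
          _ = g * (b' * k) := by rw [hb']; ring
      exact Nat.le_of_mul_le_mul_left this hg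
    have heq : ((l + 1 : ℕ) : ℝ) / b = (l' : ℝ) / b' := by
      rw [hl', hb']; push_cast
      have : (g : ℝ) ≠ 0 := by positivity
      field_simp
    rw [heq]
    by_cases hb'1 : b' = 1
    · rw [hb'1, Nat.cast_one, div_one]
      rw [hb'1, one_mul] at hlb'
      exact polar_int_of_dvd d n σ k hd hk N (M k) (hM k) l' hl'1 (by omega)
    · have hb'Ψ : b' ∈ Ψ := h.closed b hb b' ⟨g, hb'⟩
      have hdm := Nat.div_add_mod l' b'
      have hrlt := Nat.mod_lt l' hb'0
      set ν := l' / b'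
      set r := l' % b'
      clear_value ν r
      have hcop' : Nat.Coprime b' r := by
        rw [← hdm] at hcop
        rw [Nat.coprime_comm]
        simpa using hcop
      have hr1 : 1 ≤ r := by
        rcases Nat.eq_zero_or_pos r with h | h
        · rw [h, Nat.coprime_zero_right] at hcop'
          exact absurd hcop' hb'1
        · exact h
      have hνk : ν < k := by
        by_contra hcon
        push Not at hcon
        have := Nat.mul_le_mul_left b' hcon
        omega
      have hL := h.hL
      obtain ⟨H, hH⟩ := hM2 k l' b' ν r hb'Ψ hb'1 hdm.symm hr1 hrlt hcop' (by omega)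
        (by rw [hL]; omega)
      exact polar_int_of_zero d n σ k hd0 hd hk (by omega) N (M k) (hM k) l' b' hl'1 hb'0 H hH
  choose y hy using hy
  refine ⟨_, -∑ k ∈ Finset.range (n + 1), ∑ l ∈ Finset.range (b * k), y k l, hsum, ?_⟩
  rw [mul_sub, sub_eq_add_neg]
  congr 1
  · rw [Finset.mul_sum]
    have h1 : ∀ e ∈ Finset.range σ, e ∉ ((Finset.Icc 3 (σ - 1)).filter Odd).image (fun i => σ - i) →
        (d : ℝ) ^ σ * ((∑ k ∈ Finset.range (n + 1), pfc N n σ e k) *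
          (b : ℝ) ^ (σ - e) * zetaR (σ - e)) = 0 := by
      intro e he hne
      rw [Finset.mem_range] at he
      have h2 : ∑ k ∈ Finset.range (n + 1), pfc N n σ e k = 0 := by
        rcases Nat.even_or_odd e with hev | hod
        · exact pfc_even_sum N n σ h.σ_even h.symm e hev
        · have : e = σ - 1 := by
            by_contra hcon
            apply hne
            rw [Finset.mem_image]
            refine ⟨σ - e, ?_, by omega⟩
            have hodd : Odd (σ - e) := Nat.Even.sub_odd he.le h.σ_even hod
            obtain ⟨q, hq⟩ := hod
            obtain ⟨q', hq'⟩ := h.σ_even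
            rw [Finset.mem_filter, Finset.mem_Icc]
            exact ⟨⟨by omega, by omega⟩, hodd⟩
          rw [this]
          exact pf_residue_sum N n σ (by omega) h.natDegree_lt
      rw [h2]; ring
    rw [← Finset.sum_subset (s₁ := ((Finset.Icc 3 (σ - 1)).filter Odd).image (fun i => σ - i)) ?_ h1]
    · rw [Finset.sum_image]
      · refine Finset.sum_congr rfl fun i hi => ?_
        simp only [Finset.mem_filter, Finset.mem_Icc] at hi
        have e1 : σ - (σ - i) = i := by omega
        rw [← hz (σ - i) (by omega), e1]
        ring
      · intro i hi j hj hij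
        simp only [Finset.mem_coe, Finset.mem_filter, Finset.mem_Icc] at hi hj hij
        omega
    · intro e he
      simp only [Finset.mem_image, Finset.mem_filter, Finset.mem_Icc, Finset.mem_range] at he ⊢
      omega
  · push_cast
    rw [Finset.mul_sum]
    congr 1
    refine Finset.sum_congr rfl fun k hk => ?_
    have h3 : ∀ l ∈ Finset.range (b * k), (y k l : ℝ) = (d : ℝ) ^ σ * ∑ e ∈ Finset.range σ,
        pfc N n σ e k * ((b : ℝ) / ((l : ℝ) + 1)) ^ (σ - e) := by
      intro l hl
      rw [Finset.mem_range] at hk hl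
      exact (hy k l (by omega) hl).symm
    rw [Finset.sum_congr rfl h3, ← Finset.mul_sum, Finset.sum_comm]
    congr 1
    refine Finset.sum_congr rfl fun e _ => ?_
    rw [Finset.mul_sum]

end ZParam

/-! ### Unimodality -/

section Unimodal
variable {ι : Type*} (s : Finset ι) (z : ι → ℝ) (n σ : ℕ) (ρ : ℝ)

/-- The logarithmic derivative of `∏ (t - z i) / ∏ (t + k) ^ σ`. -/
noncomputable def lam (t : ℝ) : ℝ :=
  ∑ i ∈ s, 1 / (t - z i) - σ * ∑ k ∈ Finset.range (n + 1), 1 / (t + k)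

/-- The logarithmic derivative, up to a positive factor, in the variable `w = t (t + n)`. -/
noncomputable def kap (w : ℝ) : ℝ :=
  ∑ i ∈ s, w / (w - z i * (z i + n)) - σ * ∑ k ∈ Finset.range (n + 1), w / (w + k * ((n : ℝ) - k))

/-- The hypotheses on the zeros: they are symmetric about `-n / 2`, lie in `[-n - ρ, ρ]`, and are at
most `n σ / 4 + 1` in number. -/
structure ZeroData : Prop where
  symm : ∀ φ : ℝ → ℝ, ∑ i ∈ s, φ (z i) = ∑ i ∈ s, φ (-n - z i)
  le : ∀ i ∈ s, z i ≤ ρ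
  ge : ∀ i ∈ s, -n - ρ ≤ z i
  card : 4 * s.card ≤ n * σ + 4
  n_ge : 4 ≤ n
  σ_ge : 4 ≤ σ
  n_le : (n : ℝ) ≤ ρ

variable {s z n σ ρ}

/-- Pairing each zero `z` with `-n - z` and each pole `-k` with `k - n` makes the logarithmic derivative
a function of `w = t (t + n)`, up to the positive factor `(t + n / 2) / w`. -/
lemma lam_eq (h : ZeroData s z n σ ρ) {t : ℝ} (ht : ρ < t) :
    lam s z n σ t * (t * (t + n)) = (t + n / 2) * kap s z n σ (t * (t + n)) := by
  have hn := h.n_le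
  have hn0 : (0 : ℝ) ≤ n := Nat.cast_nonneg n
  have ht0 : 0 < t := by linarith
  have h1 : ∑ i ∈ s, 1 / (t - z i) = (t + n / 2) * ∑ i ∈ s, 1 / (t * (t + n) - z i * (z i + n)) := by
    have h2 := h.symm (fun x => 1 / (t - x))
    have h3 : 2 * ∑ i ∈ s, 1 / (t - z i) = ∑ i ∈ s, (1 / (t - z i) + 1 / (t - (-n - z i))) := by
      rw [Finset.sum_add_distrib, ← h2]; ring
    have h4 : ∑ i ∈ s, (1 / (t - z i) + 1 / (t - (-n - z i))) =
        (2 * t + n) * ∑ i ∈ s, 1 / (t * (t + n) - z i * (z i + n)) := by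
      rw [Finset.mul_sum]
      refine Finset.sum_congr rfl fun i hi => ?_
      have e1 : 0 < t - z i := by linarith [h.le i hi]
      have e2 : 0 < t - (-n - z i) := by linarith [h.ge i hi]
      have e3 : t * (t + n) - z i * (z i + n) = (t - z i) * (t - (-n - z i)) := by ring
      rw [e3]
      field_simp
      ring
    rw [h4] at h3
    linarith
  have h5 : ∑ k ∈ Finset.range (n + 1), 1 / (t + k) =
      (t + n / 2) * ∑ k ∈ Finset.range (n + 1), 1 / (t * (t + n) + k * ((n : ℝ) - k)) := by
    have h2 := Finset.sum_range_reflect (fun k : ℕ => 1 / (t + (k : ℝ))) (n + 1)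
    have h3 : 2 * ∑ k ∈ Finset.range (n + 1), 1 / (t + k) =
        ∑ k ∈ Finset.range (n + 1), (1 / (t + k) + 1 / (t + (n - k : ℕ))) := by
      simp only [Nat.add_sub_cancel] at h2
      rw [Finset.sum_add_distrib, h2]; ring
    have h4 : ∑ k ∈ Finset.range (n + 1), (1 / (t + k) + 1 / (t + (n - k : ℕ))) =
        (2 * t + n) * ∑ k ∈ Finset.range (n + 1), 1 / (t * (t + n) + k * ((n : ℝ) - k)) := by
      rw [Finset.mul_sum]
      refine Finset.sum_congr rfl fun k hk => ?_
      rw [Finset.mem_range] at hk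
      have hk' : (k : ℝ) ≤ n := by exact_mod_cast (by omega : k ≤ n)
      rw [Nat.cast_sub (by omega)]
      have e1 : 0 < t + k := by positivity
      have e2 : 0 < t + (n - k : ℝ) := by linarith
      have e3 : t * (t + n) + k * ((n : ℝ) - k) = (t + k) * (t + (n - k)) := by ring
      rw [e3]
      field_simp
      ring
    rw [h4] at h3
    linarith
  rw [lam, kap, h1, h5]
  simp only [div_eq_mul_inv, one_mul, ← Finset.mul_sum]
  ring

lemma sum_k_mul (n : ℕ) : ∑ k ∈ Finset.range (n + 1), (k : ℝ) * ((n : ℝ) - k) =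
    n * ((n : ℝ) ^ 2 - 1) / 6 := by
  have h1 : ∀ N : ℕ, ∑ k ∈ Finset.range (N + 1), (k : ℝ) = N * (N + 1) / 2 := by
    intro N
    induction N with
    | zero => simp
    | succ N ih => rw [Finset.sum_range_succ, ih]; push_cast; ring
  have h2 : ∀ N : ℕ, ∑ k ∈ Finset.range (N + 1), (k : ℝ) ^ 2 = N * (N + 1) * (2 * N + 1) / 6 := by
    intro N
    induction N with
    | zero => simp
    | succ N ih => rw [Finset.sum_range_succ, ih]; push_cast; ring
  have h3 : ∑ k ∈ Finset.range (n + 1), (k : ℝ) * ((n : ℝ) - k) =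
      n * ∑ k ∈ Finset.range (n + 1), (k : ℝ) - ∑ k ∈ Finset.range (n + 1), (k : ℝ) ^ 2 := by
    rw [Finset.mul_sum, ← Finset.sum_sub_distrib]
    refine Finset.sum_congr rfl fun k _ => ?_
    ring
  rw [h3, h1, h2]; ring

/-- `kap` is nonincreasing. With `D = 1 / w₁ - 1 / w₂`, the term of one zero increases by at most
`n² D / 4`, while the poles contribute a decrease of order `σ n³ D / 6`, which outweighs at most
`n σ / 4 + 1` zeros. -/
lemma kap_anti (h : ZeroData s z n σ ρ) {w₁ w₂ : ℝ} (h1 : ρ * (ρ + n) < w₁) (h12 : w₁ ≤ w₂) :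
    kap s z n σ w₂ ≤ kap s z n σ w₁ := by
  have hn := h.n_le
  have hn4 : (4 : ℝ) ≤ n := by exact_mod_cast h.n_ge
  have hσ4 : (4 : ℝ) ≤ σ := by exact_mod_cast h.σ_ge
  have hw0 : 2 * (n : ℝ) ^ 2 < w₁ := by nlinarith
  have hw1 : 0 < w₁ := by nlinarith
  have hw2 : 0 < w₂ := by linarith
  set D := (w₂ - w₁) / (w₁ * w₂) with hD
  have hD0 : 0 ≤ D := div_nonneg (by linarith) (by positivity)
  have hz : ∀ i ∈ s, w₂ / (w₂ - z i * (z i + n)) - w₁ / (w₁ - z i * (z i + n)) ≤ n ^ 2 / 4 * D := by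
    intro i hi
    set c := z i * (z i + n) with hc
    have hcle : c ≤ ρ * (ρ + n) := by
      have e1 := h.le i hi
      have e2 := h.ge i hi
      have : 0 ≤ (ρ - z i) * (ρ + n + z i) := mul_nonneg (by linarith) (by linarith)
      nlinarith
    have hcge : -((n : ℝ) ^ 2 / 4) ≤ c := by nlinarith [sq_nonneg (z i + n / 2)]
    have p1 : 0 < w₁ - c := by linarith
    have p2 : 0 < w₂ - c := by linarith
    have e : w₂ / (w₂ - c) - w₁ / (w₁ - c) = (-c) * ((w₂ - w₁) / ((w₁ - c) * (w₂ - c))) := by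
      field_simp; ring
    rw [e]
    by_cases hc0 : 0 ≤ c
    · have : 0 ≤ (w₂ - w₁) / ((w₁ - c) * (w₂ - c)) := div_nonneg (by linarith) (by positivity)
      have : (-c) * ((w₂ - w₁) / ((w₁ - c) * (w₂ - c))) ≤ 0 :=
        mul_nonpos_of_nonpos_of_nonneg (by linarith) this
      have : 0 ≤ (n : ℝ) ^ 2 / 4 * D := by positivity
      linarith
    · push Not at hc0
      refine mul_le_mul (by linarith) ?_ (div_nonneg (by linarith) (by positivity)) (by positivity)
      rw [hD]
      refine div_le_div_of_nonneg_left (by linarith) (by positivity) ?_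
      exact mul_le_mul (by linarith) (by linarith) (by positivity) (by linarith)
  have hp : ∀ k ∈ Finset.range (n + 1), 64 / 81 * ((k : ℝ) * ((n : ℝ) - k)) * D ≤
      w₂ / (w₂ + k * ((n : ℝ) - k)) - w₁ / (w₁ + k * ((n : ℝ) - k)) := by
    intro k hk
    rw [Finset.mem_range] at hk
    have hk' : (k : ℝ) ≤ n := by exact_mod_cast (by omega : k ≤ n)
    set p := (k : ℝ) * ((n : ℝ) - k) with hpdef
    have hp0 : 0 ≤ p := mul_nonneg (Nat.cast_nonneg k) (by linarith)
    have hple : p ≤ (n : ℝ) ^ 2 / 4 := by nlinarith [sq_nonneg ((k : ℝ) - n / 2)]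
    have e : w₂ / (w₂ + p) - w₁ / (w₁ + p) = p * ((w₂ - w₁) / ((w₁ + p) * (w₂ + p))) := by
      have : 0 < w₁ + p := by linarith
      have : 0 < w₂ + p := by linarith
      field_simp; ring
    rw [e]
    have q1 : w₁ + p ≤ 9 / 8 * w₁ := by linarith
    have q2 : w₂ + p ≤ 9 / 8 * w₂ := by linarith
    have e2 : 64 / 81 * p * D = p * ((w₂ - w₁) / ((9 / 8 * w₁) * (9 / 8 * w₂))) := by
      rw [hD]; field_simp; norm_num; ring
    rw [e2]
    refine mul_le_mul_of_nonneg_left ?_ hp0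
    refine div_le_div_of_nonneg_left (by linarith) (by positivity) ?_
    exact mul_le_mul q1 q2 (by linarith) (by positivity)
  have s1 := Finset.sum_le_sum hz
  have s2 := Finset.sum_le_sum hp
  rw [Finset.sum_sub_distrib, Finset.sum_const, nsmul_eq_mul] at s1
  rw [Finset.sum_sub_distrib, ← Finset.sum_mul, ← Finset.mul_sum, sum_k_mul] at s2
  have hcard : 4 * (s.card : ℝ) ≤ n * σ + 4 := by exact_mod_cast h.card
  have key : (s.card : ℝ) * (n ^ 2 / 4 * D) ≤
      σ * (64 / 81 * (n * ((n : ℝ) ^ 2 - 1) / 6) * D) := by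
    have : (s.card : ℝ) * (n ^ 2 / 4) ≤ σ * (64 / 81 * (n * ((n : ℝ) ^ 2 - 1) / 6)) := by
      have a1 : (s.card : ℝ) * (n ^ 2 / 4) ≤ (n * σ + 4) / 4 * (n ^ 2 / 4) :=
        mul_le_mul_of_nonneg_right (by linarith) (by positivity)
      refine a1.trans ?_
      have a2 : (n : ℝ) * σ + 4 ≤ 5 / 4 * (n * σ) := by nlinarith
      have a3 : 15 / 16 * (n : ℝ) ^ 2 ≤ (n : ℝ) ^ 2 - 1 := by nlinarith
      have a4 : (0 : ℝ) ≤ n * σ * n ^ 2 := by positivity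
      have a5 : (0 : ℝ) ≤ σ * n := by positivity
      nlinarith [mul_le_mul_of_nonneg_right a2 (by positivity : (0 : ℝ) ≤ n ^ 2),
        mul_le_mul_of_nonneg_left a3 a5]
    calc _ = (s.card : ℝ) * (n ^ 2 / 4) * D := by ring
      _ ≤ (σ * (64 / 81 * (n * ((n : ℝ) ^ 2 - 1) / 6))) * D := mul_le_mul_of_nonneg_right this hD0
      _ = _ := by ring
  have s3 := mul_le_mul_of_nonneg_left s2 (by positivity : (0 : ℝ) ≤ σ)
  rw [mul_sub] at s3
  unfold kap
  linarith

/-- The logarithmic derivative changes sign at most once on `(ρ, ∞)`. -/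
lemma lam_sign (h : ZeroData s z n σ ρ) {t₁ t₂ : ℝ} (h1 : ρ < t₁) (h12 : t₁ ≤ t₂) :
    (lam s z n σ t₁ ≤ 0 → lam s z n σ t₂ ≤ 0) ∧ (0 ≤ lam s z n σ t₂ → 0 ≤ lam s z n σ t₁) := by
  have hn := h.n_le
  have hn4 : (4 : ℝ) ≤ n := by exact_mod_cast h.n_ge
  have hw : ρ * (ρ + n) < t₁ * (t₁ + n) := by nlinarith
  have hw2 : t₁ * (t₁ + n) ≤ t₂ * (t₂ + n) := by nlinarith
  have hk := kap_anti h hw hw2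
  have e1 := lam_eq h h1
  have e2 := lam_eq h (lt_of_lt_of_le h1 h12)
  have p1 : 0 < t₁ * (t₁ + n) := by nlinarith
  have p2 : 0 < t₂ * (t₂ + n) := by linarith
  have q1 : 0 < t₁ + n / 2 := by linarith
  have q2 : 0 < t₂ + n / 2 := by linarith
  constructor
  · intro hl
    have h3 : (t₁ + n / 2) * kap s z n σ (t₁ * (t₁ + n)) ≤ 0 := by
      rw [← e1]; exact mul_nonpos_of_nonpos_of_nonneg hl p1.le
    have h4 : kap s z n σ (t₁ * (t₁ + n)) ≤ 0 := by
      by_contra hc; push Not at hc; linarith [mul_pos q1 hc]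
    have h5 : lam s z n σ t₂ * (t₂ * (t₂ + n)) ≤ 0 := by
      rw [e2]; exact mul_nonpos_of_nonneg_of_nonpos q2.le (by linarith)
    by_contra hc; push Not at hc; linarith [mul_pos hc p2]
  · intro hl
    have h3 : 0 ≤ (t₂ + n / 2) * kap s z n σ (t₂ * (t₂ + n)) := by
      rw [← e2]; exact mul_nonneg hl p2.le
    have h4 : 0 ≤ kap s z n σ (t₂ * (t₂ + n)) := by
      by_contra hc; push Not at hc; linarith [mul_neg_of_pos_of_neg q2 hc]
    have h5 : 0 ≤ lam s z n σ t₁ * (t₁ * (t₁ + n)) := by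
      rw [e1]; exact mul_nonneg q1.le (by linarith)
    by_contra hc; push Not at hc; linarith [mul_neg_of_neg_of_pos hc p1]

/-- Far to the right the poles dominate, being more numerous than the zeros. -/
lemma lam_neg (h : ZeroData s z n σ ρ) : lam s z n σ (2 * (ρ + n)) < 0 := by
  have hn := h.n_le
  have hn4 : (4 : ℝ) ≤ n := by exact_mod_cast h.n_ge
  have hσ4 : (4 : ℝ) ≤ σ := by exact_mod_cast h.σ_ge
  have hcard : 4 * (s.card : ℝ) ≤ n * σ + 4 := by exact_mod_cast h.card
  have h1 : ∑ i ∈ s, 1 / (2 * (ρ + n) - z i) ≤ s.card * (1 / (ρ + n)) := by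
    rw [← nsmul_eq_mul]
    refine Finset.sum_le_card_nsmul _ _ _ fun i hi => ?_
    have := h.le i hi
    exact one_div_le_one_div_of_le (by linarith) (by linarith)
  have h2 : ((n : ℝ) + 1) * (1 / (3 * (ρ + n))) ≤
      ∑ k ∈ Finset.range (n + 1), 1 / (2 * (ρ + n) + (k : ℝ)) := by
    have : ((n : ℝ) + 1) * (1 / (3 * (ρ + n))) =
        (Finset.range (n + 1)).card • (1 / (3 * (ρ + n))) := by simp
    rw [this]
    refine Finset.card_nsmul_le_sum _ _ _ fun k hk => ?_
    rw [Finset.mem_range] at hk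
    have hk' : (k : ℝ) ≤ n := by exact_mod_cast (by omega : k ≤ n)
    have hk0 : (0 : ℝ) ≤ k := Nat.cast_nonneg k
    exact one_div_le_one_div_of_le (by linarith) (by linarith)
  have h3 : (s.card : ℝ) * (1 / (ρ + n)) < σ * (((n : ℝ) + 1) * (1 / (3 * (ρ + n)))) := by
    have e : σ * (((n : ℝ) + 1) * (1 / (3 * (ρ + n)))) = (σ * (n + 1) / 3) * (1 / (ρ + n)) := by
      field_simp
    rw [e]
    refine mul_lt_mul_of_pos_right ?_ (one_div_pos.2 (by linarith))
    nlinarith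
  have h4 := mul_le_mul_of_nonneg_left h2 (by positivity : (0 : ℝ) ≤ σ)
  unfold lam
  linarith

/-- A critical point to the right of `ρ + x`, when the logarithmic derivative is positive there. -/
lemma exists_crit (h : ZeroData s z n σ ρ) {x : ℝ} (hx : 0 < x) (hpos : 0 < lam s z n σ (ρ + x)) :
    ∃ t₀, ρ + x ≤ t₀ ∧ lam s z n σ t₀ = 0 := by
  have hn := h.n_le
  have hn4 : (4 : ℝ) ≤ n := by exact_mod_cast h.n_ge
  have hle : ρ + x ≤ 2 * (ρ + n) := by
    by_contra hc
    push Not at hc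
    have := (lam_sign h (by linarith) hc.le).1 (lam_neg h).le
    linarith
  have hcont : ContinuousOn (lam s z n σ) (Set.Icc (ρ + x) (2 * (ρ + n))) := by
    unfold lam
    refine ContinuousOn.sub ?_ (ContinuousOn.mul continuousOn_const ?_)
    · refine continuousOn_finsetSum _ fun i hi => ?_
      refine ContinuousOn.div continuousOn_const (by fun_prop) fun t ht => ?_
      have := h.le i hi
      have := ht.1
      apply ne_of_gt; linarith
    · refine continuousOn_finsetSum _ fun k hk => ?_
      refine ContinuousOn.div continuousOn_const (by fun_prop) fun t ht => ?_
      have := ht.1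
      have : (0 : ℝ) ≤ k := Nat.cast_nonneg k
      apply ne_of_gt; linarith
  obtain ⟨t₀, ht₀, h0⟩ := intermediate_value_Icc' hle hcont ⟨(lam_neg h).le, hpos.le⟩
  exact ⟨t₀, ht₀.1, h0⟩

variable (s z n σ) in
/-- The logarithm of `∏ (t - z i) / ∏ (t + k) ^ σ`. -/
noncomputable def lg (t : ℝ) : ℝ :=
  ∑ i ∈ s, log (t - z i) - σ * ∑ k ∈ Finset.range (n + 1), log (t + k)

lemma hasDerivAt_lg (h : ZeroData s z n σ ρ) {t : ℝ} (ht : ρ < t) :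
    HasDerivAt (lg s z n σ) (lam s z n σ t) t := by
  have hn := h.n_le
  have hn4 : (4 : ℝ) ≤ n := by exact_mod_cast h.n_ge
  unfold lg lam
  refine HasDerivAt.sub (HasDerivAt.fun_sum fun i hi => ?_)
    (HasDerivAt.const_mul _ (HasDerivAt.fun_sum fun k hk => ?_))
  · have := h.le i hi
    exact ((hasDerivAt_id t).sub_const (z i)).log (by simp only [id]; apply ne_of_gt; linarith)
  · have : (0 : ℝ) ≤ k := Nat.cast_nonneg k
    exact ((hasDerivAt_id t).add_const (k : ℝ)).log (by simp only [id]; apply ne_of_gt; linarith)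

lemma lg_mono (h : ZeroData s z n σ ρ) {t₀ : ℝ} (h0 : lam s z n σ t₀ = 0) :
    MonotoneOn (lg s z n σ) (Set.Ioc ρ t₀) := by
  refine monotoneOn_of_deriv_nonneg (convex_Ioc _ _) ?_ ?_ ?_
  · exact fun t ht => (hasDerivAt_lg h ht.1).continuousAt.continuousWithinAt
  · intro t ht
    rw [interior_Ioc] at ht
    exact (hasDerivAt_lg h ht.1).differentiableAt.differentiableWithinAt
  · intro t ht
    rw [interior_Ioc] at ht
    rw [(hasDerivAt_lg h ht.1).deriv]
    exact (lam_sign h ht.1 ht.2.le).2 h0.ge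

lemma lg_anti (h : ZeroData s z n σ ρ) {t₀ : ℝ} (ht₀ : ρ < t₀) (h0 : lam s z n σ t₀ = 0) :
    AntitoneOn (lg s z n σ) (Set.Ici t₀) := by
  refine antitoneOn_of_deriv_nonpos (convex_Ici _) ?_ ?_ ?_
  · exact fun t ht => (hasDerivAt_lg h (lt_of_lt_of_le ht₀ ht)).continuousAt.continuousWithinAt
  · intro t ht
    rw [interior_Ici] at ht
    exact (hasDerivAt_lg h (ht₀.trans ht)).differentiableAt.differentiableWithinAt
  · intro t ht
    rw [interior_Ici] at ht
    rw [(hasDerivAt_lg h (ht₀.trans ht)).deriv]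
    exact (lam_sign h ht₀ (le_of_lt ht)).1 h0.le

/-- The maximum is flat on the scale of the distance to the zeros. -/
lemma lg_flat (h : ZeroData s z n σ ρ) {t₀ : ℝ} (ht₀ : ρ < t₀) (h0 : lam s z n σ t₀ = 0)
    {x : ℝ} (hx : 0 ≤ x) :
    lg s z n σ t₀ - x ^ 2 / 2 * ∑ i ∈ s, 1 / (t₀ - z i) ^ 2 ≤ lg s z n σ (t₀ + x) := by
  have hn := h.n_le
  have hn4 : (4 : ℝ) ≤ n := by exact_mod_cast h.n_ge
  have h1 : ∀ i ∈ s, log (t₀ - z i) + x * (1 / (t₀ - z i)) - x ^ 2 / 2 * (1 / (t₀ - z i) ^ 2) ≤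
      log (t₀ + x - z i) := by
    intro i hi
    have hp : 0 < t₀ - z i := by linarith [h.le i hi]
    have e : t₀ + x - z i = (t₀ - z i) * (1 + x / (t₀ - z i)) := by field_simp; ring
    have hw : 0 ≤ x / (t₀ - z i) := by positivity
    rw [e, log_mul hp.ne' (by positivity)]
    have h2 := Real.le_log_one_add_of_nonneg hw
    have h3 : x / (t₀ - z i) - (x / (t₀ - z i)) ^ 2 / 2 ≤
        2 * (x / (t₀ - z i)) / (x / (t₀ - z i) + 2) := by
      rw [le_div_iff₀ (by positivity)]
      nlinarith [pow_nonneg hw 3]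
    have h4 : x * (1 / (t₀ - z i)) - x ^ 2 / 2 * (1 / (t₀ - z i) ^ 2) =
        x / (t₀ - z i) - (x / (t₀ - z i)) ^ 2 / 2 := by
      rw [div_pow]; ring
    linarith
  have h2 : ∀ k ∈ Finset.range (n + 1), log (t₀ + x + (k : ℝ)) ≤
      log (t₀ + k) + x * (1 / (t₀ + k)) := by
    intro k _
    have hk : (0 : ℝ) ≤ k := Nat.cast_nonneg k
    have hp : 0 < t₀ + k := by linarith
    have e : t₀ + x + k = (t₀ + k) * (1 + x / (t₀ + k)) := by field_simp; ring
    have hw : 0 ≤ x / (t₀ + k) := by positivity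
    rw [e, log_mul hp.ne' (by positivity)]
    have := Real.log_le_sub_one_of_pos (by positivity : 0 < 1 + x / (t₀ + k))
    have e2 : x * (1 / (t₀ + k)) = x / (t₀ + k) := by ring
    linarith
  have s1 := Finset.sum_le_sum h1
  have s2 := mul_le_mul_of_nonneg_left (Finset.sum_le_sum h2) (by positivity : (0 : ℝ) ≤ σ)
  rw [Finset.sum_sub_distrib, Finset.sum_add_distrib, ← Finset.mul_sum, ← Finset.mul_sum] at s1
  rw [Finset.sum_add_distrib, ← Finset.mul_sum] at s2
  have h3 : x * (∑ i ∈ s, 1 / (t₀ - z i) - σ * ∑ k ∈ Finset.range (n + 1), 1 / (t₀ + k)) = 0 := by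
    have : ∑ i ∈ s, 1 / (t₀ - z i) - σ * ∑ k ∈ Finset.range (n + 1), 1 / (t₀ + (k : ℝ)) = 0 := h0
    rw [this, mul_zero]
  unfold lg
  linarith

end Unimodal

/-! ### Zeros of the numerator and logarithmic derivative -/

/-- The index set of the zeros: `none` for the zero `ρ`, and `some (⟨b, a⟩, j)` for the zero
`ρ - j - a / b`. -/
def zI (Ψ : Finset ℕ) (L : ℕ) : Finset (Option (((_ : ℕ) × ℕ) × ℕ)) :=
  Finset.insertNone (zF Ψ ×ˢ Finset.range L)

/-- The zeros of the numerator, indexed by `zI`. -/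
noncomputable def zZ (ρ : ℕ) : Option (((_ : ℕ) × ℕ) × ℕ) → ℝ
  | none => ρ
  | some (x, j) => ρ - j - (x.2 : ℝ) / x.1

/-- The leading coefficient of the numerator. -/
noncomputable def zA (Ψ : Finset ℕ) (V : ℕ → ℕ) (K m n σ : ℕ) : ℝ :=
  (n.factorial : ℝ) ^ σ * ∏ x ∈ zF Ψ, ((V x.1 : ℝ)⁻¹ ^ K * (x.1 : ℝ) ^ (K * m))

namespace ZParam
variable {Ψ : Finset ℕ} {V : ℕ → ℕ} {K m ρ n σ : ℕ} (h : ZParam Ψ V K m ρ n σ)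
include h

lemma zA_pos : 0 < zA Ψ V K m n σ := by
  unfold zA
  refine mul_pos (pow_pos (by exact_mod_cast n.factorial_pos) _) (Finset.prod_pos fun x hx => ?_)
  have h1 := mem_zF.1 hx
  have h2 := Nat.pos_of_ne_zero (h.V_ne _ h1.1)
  have h3 : 0 < x.1 := by omega
  positivity

omit h in
lemma zN_factor : zN Ψ V K m ρ n σ =
    C (zA Ψ V K m n σ) * ∏ i ∈ zI Ψ (K * m), (X - C (zZ ρ i)) := by
  have h1 : ∏ i ∈ zI Ψ (K * m), (X - C (zZ ρ i)) = (X - C (ρ : ℝ)) *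
      ∏ x ∈ zF Ψ, ∏ j ∈ Finset.range (K * m), (X - C ((ρ : ℝ) - j - (x.2 : ℝ) / x.1)) := by
    rw [zI, Finset.prod_insertNone, Finset.prod_product]
    rfl
  have h2 : ∀ x ∈ zF Ψ, C ((V x.1 : ℝ)⁻¹ ^ K) * ∏ j ∈ Finset.range (K * m), zlin ρ x.1 x.2 j =
      C ((V x.1 : ℝ)⁻¹ ^ K * (x.1 : ℝ) ^ (K * m)) *
        ∏ j ∈ Finset.range (K * m), (X - C ((ρ : ℝ) - j - (x.2 : ℝ) / x.1)) := by
    intro x hx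
    have hx' := mem_zF.1 hx
    have hx0 : (x.1 : ℝ) ≠ 0 := by
      have : 0 < x.1 := by omega
      positivity
    have h3 : ∀ j ∈ Finset.range (K * m), zlin ρ x.1 x.2 j =
        C (x.1 : ℝ) * (X - C ((ρ : ℝ) - j - (x.2 : ℝ) / x.1)) := by
      intro j _
      have e : (x.2 : ℝ) = x.1 * ((x.2 : ℝ) / x.1) := by field_simp
      unfold zlin
      rw [show C ((x.2 : ℝ)) = C (x.1 : ℝ) * C ((x.2 : ℝ) / x.1) by rw [← C_mul, ← e]]
      simp only [C_sub]
      ring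
    rw [Finset.prod_congr rfl h3, Finset.prod_mul_distrib, Finset.prod_const, Finset.card_range,
      C_mul, ← C_pow, mul_assoc]
  rw [zN, zN0_eq, Finset.prod_congr rfl h2, Finset.prod_mul_distrib, h1, zA, ← map_prod, C_mul]
  ring

lemma zeroData (hn4 : 4 ≤ n) : ZeroData (zI Ψ (K * m)) (zZ ρ) n σ (ρ : ℝ) := by
  have hA := h.zA_pos
  have hle : ∀ i ∈ zI Ψ (K * m), zZ ρ i ≤ ρ ∧ -(n : ℝ) - ρ ≤ zZ ρ i := by
    intro i hi
    match i with
    | none =>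
      have : (0 : ℝ) ≤ n := Nat.cast_nonneg n
      have : (0 : ℝ) ≤ ρ := Nat.cast_nonneg ρ
      exact ⟨le_refl _, by simp only [zZ]; linarith⟩
    | some (x, j) =>
      rw [zI, Finset.some_mem_insertNone, Finset.mem_product, Finset.mem_range] at hi
      obtain ⟨hx, hj⟩ := hi
      have hx := mem_zF.1 hx
      simp only at hx hj
      have hx0 : (0 : ℝ) < x.1 := by
        exact_mod_cast (by omega : 0 < x.1)
      have h1 : 0 ≤ (x.2 : ℝ) / x.1 := by positivity
      have h2 : (x.2 : ℝ) / x.1 ≤ 1 := by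
        rw [div_le_one hx0]; exact_mod_cast hx.2.2.1
      have h3 : (j : ℝ) + 1 ≤ 2 * ρ + n := by
        have := h.hL
        exact_mod_cast (by omega : j + 1 ≤ 2 * ρ + n)
      have h4 : (0 : ℝ) ≤ j := Nat.cast_nonneg j
      simp only [zZ]
      constructor <;> linarith
  refine ⟨?_, fun i hi => (hle i hi).1, fun i hi => (hle i hi).2, ?_, ?_, h.σ_ge, ?_⟩
  · have hr : (zN Ψ V K m ρ n σ).roots = (zI Ψ (K * m)).val.map (zZ ρ) := by
      rw [zN_factor, roots_C_mul _ hA.ne']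
      rw [← roots_multiset_prod_X_sub_C ((zI Ψ (K * m)).val.map (zZ ρ)), Multiset.map_map]
      rfl
    have hr2 : (zN Ψ V K m ρ n σ).roots = ((zN Ψ V K m ρ n σ).roots).map (fun x => -(n : ℝ) - x) := by
      have h1 := (zN Ψ V K m ρ n σ).map_roots_comp_C_mul_X_add_C (-1) (-(n : ℝ)) isUnit_one.neg
      have h2 : (C (-1) * X + C (-(n : ℝ)) : ℝ[X]) = -X - C (n : ℝ) := by
        simp only [C_neg, C_1]; ring
      rw [h2, h.symm, roots_neg] at h1
      rw [← Multiset.map_congr rfl fun x _ => (by ring : -1 * x + -(n : ℝ) = -n - x), h1]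
    intro φ
    rw [hr, Multiset.map_map] at hr2
    have h3 := congrArg (fun S => (S.map φ).sum) hr2
    simpa [Multiset.map_map] using h3
  · rw [zI, Finset.card_insertNone, Finset.card_product, Finset.card_range]
    have := h.deg
    nlinarith
  · exact hn4
  · exact_mod_cast h.n_le

lemma zN_eval_lg (hn4 : 4 ≤ n) {t : ℝ} (ht : (ρ : ℝ) < t) : pfR (zN Ψ V K m ρ n σ) n σ t =
    zA Ψ V K m n σ * exp (lg (zI Ψ (K * m)) (zZ ρ) n σ t) := by
  have hz := h.zeroData hn4
  have hρ : (0 : ℝ) ≤ ρ := Nat.cast_nonneg ρ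
  rw [pfR, zN_factor, eval_mul, eval_C, eval_prod, lg, exp_sub, exp_sum, mul_div_assoc]
  congr 2
  · refine Finset.prod_congr rfl fun i hi => ?_
    rw [eval_sub, eval_X, eval_C, exp_log (by linarith [hz.le i hi])]
  · rw [Finset.mul_sum, exp_sum]
    refine Finset.prod_congr rfl fun k _ => ?_
    have hk : (0 : ℝ) ≤ k := Nat.cast_nonneg k
    have hp : 0 < t + k := by linarith
    rw [← Real.log_pow, exp_log (by positivity)]

/-- The logarithmic derivative is positive at `ρ + x`: the integer zeros, those with `b = a = 1`, alone
contribute a harmonic sum, and the `σ (n + 1)` poles are at distance at least `ρ ≥ n`. -/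
lemma lam_pos (hn4 : 4 ≤ n) {x : ℝ} (hx : 0 < x)
    (hbig : 2 * σ < ∑ j ∈ Finset.range (K * m), 1 / (x + 1 + j)) :
    0 < lam (zI Ψ (K * m)) (zZ ρ) n σ (ρ + x) := by
  have hz := h.zeroData hn4
  have hρ4 : 4 ≤ ρ := hn4.trans h.n_le
  have hρ : (0 : ℝ) < ρ := by exact_mod_cast (by omega : 0 < ρ)
  have h1 : ∑ j ∈ Finset.range (K * m), 1 / (x + 1 + j) ≤
      ∑ i ∈ zI Ψ (K * m), 1 / (ρ + x - zZ ρ i) := by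
    have h2 : ∑ j ∈ Finset.range (K * m), 1 / (x + 1 + j) =
        ∑ i ∈ (Finset.range (K * m)).image (fun j => (some (⟨1, 1⟩, j) : Option (((_ : ℕ) × ℕ) × ℕ))),
          1 / (ρ + x - zZ ρ i) := by
      rw [Finset.sum_image]
      · refine Finset.sum_congr rfl fun j _ => ?_
        congr 1
        simp only [zZ]
        norm_num
        ring
      · intro a _ b _ hab
        simpa using hab
    rw [h2]
    refine Finset.sum_le_sum_of_subset_of_nonneg ?_ fun i hi _ => ?_
    · intro i hi
      rw [Finset.mem_image] at hi
      obtain ⟨j, hj, rfl⟩ := hi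
      rw [zI, Finset.some_mem_insertNone, Finset.mem_product]
      exact ⟨mem_zF.2 ⟨h.one_mem, le_refl _, le_refl _, by simp⟩, hj⟩
    · have := hz.le i hi
      exact (one_div_pos.2 (by linarith)).le
  have h3 : ∑ k ∈ Finset.range (n + 1), 1 / ((ρ : ℝ) + x + k) ≤ 2 := by
    have h4 : ∑ k ∈ Finset.range (n + 1), 1 / ((ρ : ℝ) + x + k) ≤
        (Finset.range (n + 1)).card • (1 / (ρ : ℝ)) := by
      refine Finset.sum_le_card_nsmul _ _ _ fun k _ => ?_
      have hk : (0 : ℝ) ≤ k := Nat.cast_nonneg k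
      exact one_div_le_one_div_of_le hρ (by linarith)
    refine h4.trans ?_
    rw [Finset.card_range, nsmul_eq_mul, mul_one_div, div_le_iff₀ hρ]
    have := h.n_le
    exact_mod_cast (by omega : n + 1 ≤ 2 * ρ)
  have h5 := mul_le_mul_of_nonneg_left h3 (Nat.cast_nonneg (α := ℝ) σ)
  unfold lam
  linarith

omit h in
/-- For each pair `(b, a)` the zeros are spaced by `1`, so that the sum of the inverse squares of the
distances is bounded by a telescoping sum. -/
lemma sum_sq_le {x t : ℝ} (hx : 1 < x) (ht : ρ + x ≤ t) :
    ∑ i ∈ zI Ψ (K * m), 1 / (t - zZ ρ i) ^ 2 ≤ ((zF Ψ).card + 1) / (x - 1) := by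
  have hx1 : 0 < x - 1 := by linarith
  rw [zI, Finset.sum_insertNone, Finset.sum_product, add_div, add_comm]
  have h1 : ∀ y ∈ zF Ψ, ∑ j ∈ Finset.range (K * m), 1 / (t - zZ ρ (some (y, j))) ^ 2 ≤
      1 / (x - 1) := by
    intro y _
    have h2 : ∀ j ∈ Finset.range (K * m), 1 / (t - zZ ρ (some (y, j))) ^ 2 ≤
        1 / (x - 1 + j) - 1 / (x - 1 + (j + 1 : ℕ)) := by
      intro j _
      have hj : (0 : ℝ) ≤ j := Nat.cast_nonneg j
      have hp : 0 < x - 1 + j := by linarith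
      have hy : 0 ≤ (y.2 : ℝ) / y.1 := by positivity
      have h3 : x + j ≤ t - zZ ρ (some (y, j)) := by simp only [zZ]; linarith
      have h4 : 1 / (t - zZ ρ (some (y, j))) ^ 2 ≤ 1 / (x + j) ^ 2 :=
        one_div_le_one_div_of_le (by positivity) (pow_le_pow_left₀ (by linarith) h3 2)
      refine h4.trans ?_
      push_cast
      have hq : 0 < x - 1 + (j + 1) := by linarith
      rw [div_sub_div _ _ hp.ne' hq.ne', div_le_div_iff₀ (by positivity) (by positivity)]
      nlinarith
    refine (Finset.sum_le_sum h2).trans ?_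
    rw [Finset.sum_range_sub' (fun j : ℕ => 1 / (x - 1 + (j : ℝ)))]
    have : 0 ≤ 1 / (x - 1 + ((K * m : ℕ) : ℝ)) := by positivity
    simp only [Nat.cast_zero, add_zero]
    linarith
  have h5 := Finset.sum_le_sum h1
  rw [Finset.sum_const, nsmul_eq_mul, mul_one_div] at h5
  refine add_le_add h5 ?_
  simp only [zZ]
  refine one_div_le_one_div_of_le hx1 ?_
  nlinarith
end ZParam

/-! ### Comparison of the sums over different denominators -/

/-- Comparison of two interlacing sequences, one of which may have one exceptional term. -/
lemma tsum_le_of_interlace {g h : ℕ → ℝ} {F : ℝ} (N : ℕ) (hg : Summable g) (hh : Summable h)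
    (h1 : ∀ ν < N, g ν ≤ h ν) (h2 : g N ≤ F) (h3 : ∀ ν, N ≤ ν → g (ν + 1) ≤ h ν) :
    ∑' ν, g ν ≤ ∑' ν, h ν + F := by
  rw [← hg.sum_add_tsum_nat_add (N + 1), ← hh.sum_add_tsum_nat_add N, Finset.sum_range_succ]
  have e1 : ∑ ν ∈ Finset.range N, g ν ≤ ∑ ν ∈ Finset.range N, h ν :=
    Finset.sum_le_sum fun ν hν => h1 ν (Finset.mem_range.1 hν)
  have e2 : ∑' ν, g (ν + (N + 1)) ≤ ∑' ν, h (ν + N) := by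
    refine Summable.tsum_le_tsum (fun ν => ?_) ((summable_nat_add_iff (N + 1)).2 hg)
      ((summable_nat_add_iff N).2 hh)
    exact h3 (ν + N) (by omega)
  linarith

section Shift
variable {f : ℝ → ℝ} {ρ t₀ : ℝ} (hmono : MonotoneOn f (Set.Ioc ρ t₀))
  (hanti : AntitoneOn f (Set.Ici t₀)) (hpos : ∀ t, ρ < t → 0 ≤ f t) (ht₀ : ρ + 1 ≤ t₀)
include hmono hanti hpos ht₀

omit hpos in
lemma unimodal_le_max {t : ℝ} (ht : ρ < t) : f t ≤ f t₀ := by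
  rcases le_total t t₀ with h | h
  · exact hmono ⟨ht, h⟩ ⟨by linarith, le_refl _⟩ h
  · exact hanti (Set.mem_Ici.2 le_rfl) h h

/-- Shifting the summation points of a unimodal function by at most one step changes the sum by at
most the maximum. -/
lemma unimodal_shift {θ : ℝ} (hθ : 0 < θ) (hθ1 : θ ≤ 1)
    (s1 : Summable fun ν : ℕ => f (ρ + ν + 1)) (sθ : Summable fun ν : ℕ => f (ρ + ν + θ)) :
    |∑' ν : ℕ, f (ρ + ν + θ) - ∑' ν : ℕ, f (ρ + ν + 1)| ≤ f t₀ := by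
  have hmax : ∀ t, ρ < t → f t ≤ f t₀ := fun t ht => unimodal_le_max hmono hanti ht₀ ht
  have hν : ∀ ν : ℕ, (0 : ℝ) ≤ ν := fun ν => Nat.cast_nonneg ν
  rw [abs_sub_le_iff]
  constructor
  · have := tsum_le_of_interlace (F := f t₀) ⌊t₀ - ρ⌋₊ sθ s1 ?_ ?_ ?_
    · linarith
    · intro ν hlt
      have h1 : (ν : ℝ) + 1 ≤ t₀ - ρ := by
        have := (Nat.le_floor_iff (by linarith)).1 (Nat.succ_le_of_lt hlt)
        push_cast at this; exact this
      exact hmono ⟨by linarith [hν ν], by linarith⟩ ⟨by linarith [hν ν], by linarith⟩ (by linarith)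
    · exact hmax _ (by linarith [hν ⌊t₀ - ρ⌋₊])
    · intro ν hle
      have h1 : t₀ - ρ < ν + 1 := by
        have := Nat.lt_floor_add_one (t₀ - ρ)
        have h2 : (⌊t₀ - ρ⌋₊ : ℝ) ≤ ν := by exact_mod_cast hle
        linarith
      push_cast
      exact hanti (Set.mem_Ici.2 (by linarith)) (Set.mem_Ici.2 (by linarith)) (by linarith)
  · have sθ' := (summable_nat_add_iff 1).2 sθ
    have e : ∑' ν : ℕ, f (ρ + (ν + 1 : ℕ) + θ) ≤ ∑' ν : ℕ, f (ρ + ν + θ) := by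
      rw [← sθ.sum_add_tsum_nat_add 1]
      have : 0 ≤ f (ρ + (0 : ℕ) + θ) := hpos _ (by simp [hθ])
      simp only [Finset.sum_range_one]
      linarith
    have := tsum_le_of_interlace (F := f t₀) ⌊t₀ - ρ - θ⌋₊ s1 sθ' ?_ ?_ ?_
    · linarith
    · intro ν hlt
      have h1 : (ν : ℝ) + 1 ≤ t₀ - ρ - θ := by
        have := (Nat.le_floor_iff (by linarith)).1 (Nat.succ_le_of_lt hlt)
        push_cast at this; exact this
      push_cast
      exact hmono ⟨by linarith [hν ν], by linarith⟩ ⟨by linarith [hν ν], by linarith⟩ (by linarith)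
    · exact hmax _ (by linarith [hν ⌊t₀ - ρ - θ⌋₊])
    · intro ν hle
      have h1 : t₀ - ρ - θ < ν + 1 := by
        have := Nat.lt_floor_add_one (t₀ - ρ - θ)
        have h2 : (⌊t₀ - ρ - θ⌋₊ : ℝ) ≤ ν := by exact_mod_cast hle
        linarith
      push_cast
      exact hanti (Set.mem_Ici.2 (by linarith)) (Set.mem_Ici.2 (by linarith)) (by linarith)

omit hmono hanti in
/-- A flat maximum contributes many large terms. -/
lemma unimodal_sum_ge (T : ℕ) (hT : ∀ x : ℝ, 0 ≤ x → x ≤ T → f t₀ / 2 ≤ f (t₀ + x))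
    (s1 : Summable fun ν : ℕ => f (ρ + ν + 1)) :
    T * (f t₀ / 2) ≤ ∑' ν : ℕ, f (ρ + ν + 1) := by
  set N := ⌊t₀ - ρ⌋₊ with hN
  have hν : ∀ ν : ℕ, (0 : ℝ) ≤ ν := fun ν => Nat.cast_nonneg ν
  have hN1 : t₀ - ρ < N + 1 := Nat.lt_floor_add_one (t₀ - ρ)
  have hN2 : (N : ℝ) ≤ t₀ - ρ := Nat.floor_le (by linarith)
  have h1 : ∑ ν ∈ (Finset.range T).image (fun i => N + i), f (ρ + ν + 1) ≤
      ∑' ν : ℕ, f (ρ + ν + 1) :=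
    s1.sum_le_tsum _ fun ν _ => hpos _ (by linarith [hν ν])
  refine le_trans ?_ h1
  rw [Finset.sum_image (fun a _ b _ hab => by simpa using hab)]
  have h2 : (T : ℝ) * (f t₀ / 2) = (Finset.range T).card • (f t₀ / 2) := by simp
  rw [h2]
  refine Finset.card_nsmul_le_sum _ _ _ fun i hi => ?_
  have hi' : (i : ℝ) + 1 ≤ T := by exact_mod_cast Finset.mem_range.1 hi
  have h3 := hT (ρ + (N + i : ℕ) + 1 - t₀) (by push_cast; linarith [hν i]) (by push_cast; linarith)
  rwa [show t₀ + (ρ + ((N + i : ℕ) : ℝ) + 1 - t₀) = ρ + ((N + i : ℕ) : ℝ) + 1 by ring] at h3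

end Shift

namespace ZParam
variable {Ψ : Finset ℕ} {V : ℕ → ℕ} {K m ρ n σ : ℕ} (h : ZParam Ψ V K m ρ n σ)
include h

/-- `R` vanishes at all `l / b` with `b ∈ Ψ` and `0 < l ≤ b ρ`. -/
lemma pfR_zero {b l : ℕ} (hb : b ∈ Ψ) (hl : 1 ≤ l) (hlb : l ≤ b * ρ) :
    pfR (zN Ψ V K m ρ n σ) n σ ((l : ℝ) / b) = 0 := by
  have hb0 : b ≠ 0 := fun h0 => h.zero_notMem (h0 ▸ hb)
  have := zN0_eval_zero (V := V) (K := K) (m := m) h.closed (ρ := ρ) (by have := h.hL; omega) b l hb hb0 hl hlb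
  rw [pfR, zN, eval_mul, this, mul_zero, zero_div]

/-- Splitting the sum over `ℕ / b` into residue classes. -/
lemma tsum_split {b : ℕ} (hb : b ∈ Ψ)
    (hs : Summable fun m' : ℕ => pfR (zN Ψ V K m ρ n σ) n σ (((m' : ℝ) + 1) / b)) :
    (∀ r < b, Summable fun ν : ℕ => pfR (zN Ψ V K m ρ n σ) n σ (ρ + ν + ((r : ℝ) + 1) / b)) ∧
    ∑' m' : ℕ, pfR (zN Ψ V K m ρ n σ) n σ (((m' : ℝ) + 1) / b) = ∑ r ∈ Finset.range b,
      ∑' ν : ℕ, pfR (zN Ψ V K m ρ n σ) n σ (ρ + ν + ((r : ℝ) + 1) / b) := by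
  have hb0 : b ≠ 0 := fun h0 => h.zero_notMem (h0 ▸ hb)
  have hbR : (b : ℝ) ≠ 0 := by exact_mod_cast hb0
  set R := pfR (zN Ψ V K m ρ n σ) n σ with hR
  have hs1 : ∀ r < b, Summable fun ν : ℕ => R ((((r + b * ν : ℕ) : ℝ) + 1) / b) := by
    intro r _
    exact hs.comp_injective (i := fun ν => r + b * ν) (fun x y hxy => by
      simpa [hb0] using hxy)
  have hshift : ∀ r ν : ℕ, R ((((r + b * (ν + ρ) : ℕ) : ℝ) + 1) / b) =
      R (ρ + ν + ((r : ℝ) + 1) / b) := by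
    intro r ν
    congr 1
    push_cast
    field_simp
    ring
  have hs2 : ∀ r < b, ∑' ν : ℕ, R ((((r + b * ν : ℕ) : ℝ) + 1) / b) =
      ∑' ν : ℕ, R (ρ + ν + ((r : ℝ) + 1) / b) := by
    intro r hr
    rw [← (hs1 r hr).sum_add_tsum_nat_add ρ, Finset.sum_eq_zero, zero_add]
    · exact tsum_congr fun ν => hshift r ν
    · intro ν hν
      rw [Finset.mem_range] at hν
      have h1 : r + b * ν + 1 ≤ b * ρ := by
        have : b * (ν + 1) ≤ b * ρ := Nat.mul_le_mul_left b hν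
        rw [Nat.mul_succ] at this
        omega
      have h2 := h.pfR_zero hb (by omega : 1 ≤ r + b * ν + 1) h1
      rw [← h2, hR]
      push_cast
      rfl
  constructor
  · intro r hr
    have := (summable_nat_add_iff ρ).2 (hs1 r hr)
    simpa only [hshift] using this
  · have : NeZero b := ⟨hb0⟩
    rw [Nat.sumByResidueClasses hs b]
    rw [← Finset.sum_congr rfl fun r hr => hs2 r (Finset.mem_range.1 hr)]
    refine Finset.sum_bij (fun j _ => j.val) (fun j _ => Finset.mem_range.2 j.val_lt)
      (fun a _ b _ hab => ZMod.val_injective _ hab) (fun r hr => ?_) (fun j _ => rfl)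
    exact ⟨(r : ZMod b), Finset.mem_univ _, ZMod.val_cast_of_lt (Finset.mem_range.1 hr)⟩

/-- `S_b` is close to `b S_1`. -/
lemma ratio (hn4 : 4 ≤ n) (T : ℕ) (hT : 1 ≤ T)
    (hbig : 2 * (σ : ℝ) < ∑ j ∈ Finset.range (K * m), 1 / ((1 + (T : ℝ) ^ 2 * ((zF Ψ).card + 1)) + 1 + j))
    (S : ℕ → ℝ)
    (hS : ∀ b ∈ Ψ, HasSum (fun m' : ℕ => pfR (zN Ψ V K m ρ n σ) n σ (((m' : ℝ) + 1) / b)) (S b)) :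
    0 < S 1 ∧ ∀ b ∈ Ψ, |S b - b * S 1| ≤ 2 * b / T * S 1 := by
  set R := pfR (zN Ψ V K m ρ n σ) n σ with hR
  -- at distance `x` from the zeros, `lg` drops by at most `1 / 2 ≤ log 2` over a length `T`
  set x : ℝ := 1 + (T : ℝ) ^ 2 * ((zF Ψ).card + 1) with hx
  have hT' : (1 : ℝ) ≤ T := by exact_mod_cast hT
  have hx1 : 1 < x := by rw [hx]; have : 0 < (T : ℝ) ^ 2 * ((zF Ψ).card + 1) := by positivity
                         linarith
  have hz := h.zeroData hn4
  have hA := h.zA_pos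
  obtain ⟨t₀, ht₀, h0⟩ := exists_crit hz (by linarith) (h.lam_pos hn4 (by linarith) hbig)
  have hρt : (ρ : ℝ) < t₀ := by linarith
  have hform : ∀ t, (ρ : ℝ) < t → R t = zA Ψ V K m n σ * exp (lg (zI Ψ (K * m)) (zZ ρ) n σ t) :=
    fun t ht => h.zN_eval_lg hn4 ht
  have hRpos : ∀ t, (ρ : ℝ) < t → 0 < R t := fun t ht => by rw [hform t ht]; positivity
  have hmono : MonotoneOn R (Set.Ioc (ρ : ℝ) t₀) := by
    intro a ha b hb hab
    rw [hform a ha.1, hform b hb.1]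
    have := lg_mono hz h0 ha hb hab
    gcongr
  have hanti : AntitoneOn R (Set.Ici t₀) := by
    intro a ha b hb hab
    rw [hform a (lt_of_lt_of_le hρt ha), hform b (lt_of_lt_of_le hρt hb)]
    have := lg_anti hz hρt h0 ha hb hab
    gcongr
  have hflat : ∀ y : ℝ, 0 ≤ y → y ≤ T → R t₀ / 2 ≤ R (t₀ + y) := by
    intro y hy0 hyT
    rw [hform t₀ hρt, hform (t₀ + y) (by linarith)]
    have h1 := lg_flat hz hρt h0 hy0
    have h2 := sum_sq_le (Ψ := Ψ) (K := K) (m := m) (ρ := ρ) hx1 ht₀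
    have h3 : y ^ 2 / 2 * ∑ i ∈ zI Ψ (K * m), 1 / (t₀ - zZ ρ i) ^ 2 ≤ 1 / 2 := by
      calc _ ≤ (T : ℝ) ^ 2 / 2 * (((zF Ψ).card + 1) / (x - 1)) := by
            refine mul_le_mul ?_ h2 (Finset.sum_nonneg fun i _ => by positivity) (by positivity)
            have := pow_le_pow_left₀ hy0 hyT 2
            linarith
        _ = 1 / 2 := by
            rw [hx]
            have : (0 : ℝ) < T := by linarith
            field_simp
            ring
    have h4 : log 2 ≥ 1 / 2 := by have := Real.log_two_gt_d9; linarith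
    have h5 : lg (zI Ψ (K * m)) (zZ ρ) n σ t₀ - log 2 ≤
        lg (zI Ψ (K * m)) (zZ ρ) n σ (t₀ + y) := by linarith
    have h6 := exp_le_exp.2 h5
    rw [exp_sub, exp_log two_pos] at h6
    have := mul_le_mul_of_nonneg_left h6 hA.le
    linarith
  have hsp : ∀ b (hb : b ∈ Ψ), _ := fun b hb => h.tsum_split hb (hS b hb).summable
  have h1sp := hsp 1 h.one_mem
  have ht1 : (ρ : ℝ) + 1 ≤ t₀ := by linarith
  have s1 : Summable fun ν : ℕ => R (ρ + ν + 1) := by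
    have := h1sp.1 0 one_pos
    simpa using this
  have hS1 : S 1 = ∑' ν : ℕ, R (ρ + ν + 1) := by
    rw [← (hS 1 h.one_mem).tsum_eq, h1sp.2]
    simp [hR]
  have hge := unimodal_sum_ge (f := R) (fun t ht => (hRpos t ht).le) ht1 T hflat s1
  rw [← hS1] at hge
  have hR0 := hRpos t₀ hρt
  have hS1pos : 0 < S 1 := lt_of_lt_of_le (by positivity) hge
  refine ⟨hS1pos, fun b hb => ?_⟩
  have hb0 : b ≠ 0 := fun h0 => h.zero_notMem (h0 ▸ hb)
  have hb1 : (0 : ℝ) < b := by positivity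
  have e1 : S b - b * S 1 = ∑ r ∈ Finset.range b,
      (∑' ν : ℕ, R (ρ + ν + ((r : ℝ) + 1) / b) - ∑' ν : ℕ, R (ρ + ν + 1)) := by
    rw [Finset.sum_sub_distrib, Finset.sum_const, Finset.card_range, nsmul_eq_mul, ← hS1,
      ← (hS b hb).tsum_eq, (hsp b hb).2]
  rw [e1]
  refine (Finset.abs_sum_le_sum_abs _ _).trans ?_
  have e2 : ∀ r ∈ Finset.range b,
      |∑' ν : ℕ, R (ρ + ν + ((r : ℝ) + 1) / b) - ∑' ν : ℕ, R (ρ + ν + 1)| ≤ R t₀ := by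
    intro r hr
    rw [Finset.mem_range] at hr
    refine unimodal_shift hmono hanti (fun t ht => (hRpos t ht).le) ht1 (by positivity) ?_ s1
      ((hsp b hb).1 r hr)
    rw [div_le_one hb1]
    exact_mod_cast hr
  have e3 := Finset.sum_le_sum e2
  rw [Finset.sum_const, Finset.card_range, nsmul_eq_mul] at e3
  refine e3.trans ?_
  rw [div_mul_eq_mul_div, le_div_iff₀ (by linarith)]
  nlinarith

end ZParam

/-! ### Factorials and binomial coefficients -/

/-- The part of `m!` that is prime to `b`. -/
noncomputable def Vb (m b : ℕ) : ℕ :=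
  ∏ p ∈ m.factorial.primeFactors.filter (fun p => ¬ p ∣ b), p ^ m.factorial.factorization p

/-- The exponential loss from removing from `m!` the primes dividing `b`. -/
noncomputable def gam (b : ℕ) : ℝ := ∑ p ∈ b.primeFactors, log p / ((p : ℝ) - 1)

lemma Vb_mul (m b : ℕ) : (∏ p ∈ m.factorial.primeFactors.filter (fun p => p ∣ b),
    p ^ m.factorial.factorization p) * Vb m b = m.factorial := by
  rw [Vb, Finset.prod_filter_mul_prod_filter_not]
  exact Nat.prod_factorization_pow_eq_self m.factorial_ne_zero

lemma Vb_ne (m b : ℕ) : Vb m b ≠ 0 := by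
  intro h
  have := Vb_mul m b
  rw [h, mul_zero] at this
  exact m.factorial_ne_zero this.symm

lemma Vb_dvd (m b : ℕ) : Vb m b ∣ m.factorial := Dvd.intro_left _ (Vb_mul m b)

lemma Vb_cop (m b : ℕ) : (Vb m b).Coprime b := by
  unfold Vb
  refine Nat.Coprime.prod_left fun p hp => ?_
  rw [Finset.mem_filter] at hp
  exact Nat.Coprime.pow_left _
    (((Nat.prime_of_mem_primeFactors hp.1).coprime_iff_not_dvd).2 hp.2)

lemma log_factorial_ge (m : ℕ) : (m : ℝ) * log m - m ≤ log m.factorial := by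
  induction m with
  | zero => simp
  | succ m ih =>
    rw [Nat.factorial_succ, Nat.cast_mul, log_mul (by positivity) (by positivity)]
    rcases Nat.eq_zero_or_pos m with h0 | h0
    · subst h0; simp
    have hm : (0 : ℝ) < m := by exact_mod_cast h0
    have h1 : log ((m + 1 : ℕ) : ℝ) ≤ log m + 1 / m := by
      have e : ((m + 1 : ℕ) : ℝ) = m * (1 + 1 / m) := by push_cast; field_simp
      rw [e, log_mul hm.ne' (by positivity)]
      have := log_le_sub_one_of_pos (by positivity : 0 < 1 + 1 / (m : ℝ))
      linarith
    have h2 : (m : ℝ) * log ((m + 1 : ℕ) : ℝ) ≤ m * log m + 1 := by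
      have := mul_le_mul_of_nonneg_left h1 hm.le
      rw [mul_add, mul_one_div_cancel hm.ne'] at this
      exact this
    push_cast at h2 ⊢
    linarith

lemma log_factorial_le (m : ℕ) (hm : 1 ≤ m) :
    log m.factorial ≤ (m : ℝ) * log m - m + log m + 1 := by
  induction m, hm using Nat.le_induction with
  | base => simp
  | succ m hm ih =>
    rw [Nat.factorial_succ, Nat.cast_mul, log_mul (by positivity) (by positivity)]
    have hm : (0 : ℝ) < m := by exact_mod_cast hm
    have h1 : log m ≤ log ((m + 1 : ℕ) : ℝ) - 1 / (m + 1) := by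
      have e : (m : ℝ) = ((m + 1 : ℕ) : ℝ) * (1 - 1 / (m + 1)) := by push_cast; field_simp; ring
      have hp : 0 < 1 - 1 / ((m : ℝ) + 1) := by
        rw [sub_pos, div_lt_one (by positivity)]; linarith
      have := log_le_sub_one_of_pos hp
      have h3 : log (m : ℝ) = log (((m + 1 : ℕ) : ℝ) * (1 - 1 / (m + 1))) := by rw [← e]
      rw [log_mul (by positivity) hp.ne'] at h3
      linarith
    have h2 : ((m : ℝ) + 1) * log m ≤ (m + 1) * log ((m + 1 : ℕ) : ℝ) - 1 := by
      have := mul_le_mul_of_nonneg_left h1 (by positivity : (0 : ℝ) ≤ m + 1)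
      rw [mul_sub, mul_one_div_cancel (by positivity)] at this
      exact this
    push_cast at h2 ⊢
    linarith

/-- Removing from `m!` a prime `p ∣ b` costs the factor `p ^ v` with `v ≤ m / (p - 1)`, by Legendre's
formula. -/
lemma log_Vb_ge (m b : ℕ) (hb : b ≠ 0) : (m : ℝ) * log m - m - m * gam b ≤ log (Vb m b) := by
  have h1 := log_factorial_ge m
  set W := ∏ p ∈ m.factorial.primeFactors.filter (fun p => p ∣ b), p ^ m.factorial.factorization p
    with hW
  have hmul := Vb_mul m b
  rw [← hW] at hmul
  have hW0 : W ≠ 0 := by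
    intro h0
    rw [h0, zero_mul] at hmul
    exact m.factorial_ne_zero hmul.symm
  have h2 : log (m.factorial : ℝ) = log W + log (Vb m b) := by
    rw [← hmul, Nat.cast_mul, log_mul (by exact_mod_cast hW0) (by exact_mod_cast Vb_ne m b)]
  have h3 : log (W : ℝ) ≤ m * gam b := by
    rw [hW, Nat.cast_prod, log_prod, gam, Finset.mul_sum]
    · have hterm : ∀ p ∈ b.primeFactors, 0 ≤ (m : ℝ) * (log p / ((p : ℝ) - 1)) := by
        intro p hp
        have : (1 : ℝ) < p := by exact_mod_cast (Nat.prime_of_mem_primeFactors hp).one_lt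
        have := log_nonneg this.le
        have : (0 : ℝ) ≤ p - 1 := by linarith
        positivity
      refine le_trans (Finset.sum_le_sum (g := fun p : ℕ => (m : ℝ) * (log p / ((p : ℝ) - 1)))
        fun p hp => ?_) (Finset.sum_le_sum_of_subset_of_nonneg (fun p hp => ?_)
          fun p hp _ => hterm p hp)
      · rw [Finset.mem_filter] at hp
        have hpp := Nat.prime_of_mem_primeFactors hp.1
        have hp1 : (1 : ℝ) < p := by exact_mod_cast hpp.one_lt
        have hl := log_nonneg hp1.le
        rw [Nat.cast_pow, log_pow]
        have : Fact p.Prime := ⟨hpp⟩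
        have h4 := sub_one_mul_padicValNat_factorial (p := p) m
        have h5 : (p - 1) * m.factorial.factorization p ≤ m := by
          rw [Nat.factorization_def _ hpp, h4]; exact Nat.sub_le _ _
        have h6 : ((p : ℝ) - 1) * (m.factorial.factorization p : ℝ) ≤ m := by
          have : (((p - 1) * m.factorial.factorization p : ℕ) : ℝ) ≤ m := by exact_mod_cast h5
          rwa [Nat.cast_mul, Nat.cast_sub hpp.one_lt.le, Nat.cast_one] at this
        have h7 : (m.factorial.factorization p : ℝ) ≤ m / ((p : ℝ) - 1) := by
          rw [le_div_iff₀ (by linarith)]; linarith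
        calc _ ≤ m / ((p : ℝ) - 1) * log p := mul_le_mul_of_nonneg_right h7 hl
          _ = _ := by ring
      · rw [Finset.mem_filter] at hp
        exact Nat.mem_primeFactors.2 ⟨Nat.prime_of_mem_primeFactors hp.1, hp.2, hb⟩
    · intro p hp
      rw [Finset.mem_filter] at hp
      have := (Nat.prime_of_mem_primeFactors hp.1).pos
      positivity
  linarith

/-- The elementary bound for `binom((p + q) m, q m)`, with the exact exponential rate. -/
lemma log_choose_ge (p q m : ℕ) (hp : 1 ≤ p) (hq : 1 ≤ q) (hm : 1 ≤ m) :
    (m : ℝ) * ((p + q) * log (p + q) - p * log p - q * log q) -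
      (log (q * m) + log (p * m) + 2) ≤ log ((p * m + q * m).choose (q * m) : ℕ) := by
  have h1 := Nat.add_choose_mul_factorial_mul_factorial (p * m) (q * m)
  have hc : 0 < (p * m + q * m).choose (q * m) := Nat.choose_pos (by omega)
  have h2 : log ((p * m + q * m).choose (q * m) : ℕ) = log ((p * m + q * m).factorial : ℕ) -
      log ((p * m).factorial : ℕ) - log ((q * m).factorial : ℕ) := by
    rw [← h1]
    push_cast
    rw [log_mul, log_mul]
    · ring
    all_goals positivity
  rw [h2]
  have a1 := log_factorial_ge (p * m + q * m)
  have a2 := log_factorial_le (p * m) (Nat.mul_pos hp hm)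
  have a3 := log_factorial_le (q * m) (Nat.mul_pos hq hm)
  have hp' : (0 : ℝ) < p := by exact_mod_cast hp
  have hq' : (0 : ℝ) < q := by exact_mod_cast hq
  have hm' : (0 : ℝ) < m := by exact_mod_cast hm
  push_cast at a1 a2 a3
  have e1 : (p : ℝ) * m + q * m = (p + q) * m := by ring
  rw [e1, log_mul (by positivity) (by positivity)] at a1
  rw [log_mul (by positivity) (by positivity)] at a2 a3
  rw [log_mul (by positivity) (by positivity), log_mul (by positivity) (by positivity)]
  nlinarith

/-! ### Upper bound for the rational function -/

/-- The upper bound for `t ^ 2 R(t)` on `t > ρ`. -/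
noncomputable def YY (Ψ : Finset ℕ) (V : ℕ → ℕ) (K m ρ n σ : ℕ) : ℝ :=
  (∏ x ∈ zF Ψ, ((V x.1 : ℝ)⁻¹ ^ K * (2 * x.1 * ((ρ : ℝ) + n)) ^ (K * m))) *
    (((ρ + n).choose n : ℕ) : ℝ)⁻¹ ^ σ

namespace ZParam
variable {Ψ : Finset ℕ} {V : ℕ → ℕ} {K m ρ n σ : ℕ} (h : ZParam Ψ V K m ρ n σ)
include h

omit h in
lemma zF_pos {x : (_ : ℕ) × ℕ} (hx : x ∈ zF Ψ) : (1 : ℝ) ≤ x.1 := by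
  have := mem_zF.1 hx
  exact_mod_cast (by omega : 1 ≤ x.1)

/-- Bound for the numerator, each linear factor `b (t - ρ + j) + a` being at most `2 b (t + n)`. -/
lemma num_le {t : ℝ} (ht : (ρ : ℝ) < t) : (zN Ψ V K m ρ n σ).eval t ≤
    (n.factorial : ℝ) ^ σ * (t * ((∏ x ∈ zF Ψ, ((V x.1 : ℝ)⁻¹ ^ K * (2 * x.1) ^ (K * m))) *
      (t + n) ^ (K * m * (zF Ψ).card))) := by
  have hρ : (0 : ℝ) ≤ ρ := Nat.cast_nonneg ρ
  have hn : (0 : ℝ) ≤ n := Nat.cast_nonneg n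
  rw [zN, eval_mul, eval_C, zN0_eval]
  refine mul_le_mul_of_nonneg_left ?_ (by positivity)
  have e : (∏ x ∈ zF Ψ, ((V x.1 : ℝ)⁻¹ ^ K * (2 * x.1) ^ (K * m))) *
      (t + n) ^ (K * m * (zF Ψ).card) =
      ∏ x ∈ zF Ψ, ((V x.1 : ℝ)⁻¹ ^ K * (2 * x.1 * (t + n)) ^ (K * m)) := by
    simp only [mul_pow _ (t + n) (K * m), ← mul_assoc, Finset.prod_mul_distrib]
    rw [Finset.prod_const, ← pow_mul]
  rw [e]
  have hfac : ∀ x ∈ zF Ψ, ∀ j ∈ Finset.range (K * m), 0 ≤ (x.1 : ℝ) * (t - ρ + j) + x.2 ∧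
      (x.1 : ℝ) * (t - ρ + j) + x.2 ≤ 2 * x.1 * (t + n) := by
    intro x hx j hj
    have h1 := zF_pos hx
    have h2 : (x.2 : ℝ) ≤ x.1 := by exact_mod_cast (mem_zF.1 hx).2.2.1
    have h3 : (j : ℝ) + 1 ≤ 2 * ρ + n := by
      have := h.hL
      rw [Finset.mem_range] at hj
      exact_mod_cast (by omega : j + 1 ≤ 2 * ρ + n)
    have h4 : (0 : ℝ) ≤ j := Nat.cast_nonneg j
    have h5 : (0 : ℝ) ≤ t - ρ + j := by linarith
    constructor
    · positivity
    · calc (x.1 : ℝ) * (t - ρ + j) + x.2 ≤ x.1 * (t - ρ + j) + x.1 := by linarith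
        _ = x.1 * (t - ρ + j + 1) := by ring
        _ ≤ x.1 * (2 * (t + n)) := mul_le_mul_of_nonneg_left (by linarith) (by linarith)
        _ = _ := by ring
  refine mul_le_mul (by linarith) (Finset.prod_le_prod (fun x hx => ?_) fun x hx => ?_)
    (Finset.prod_nonneg fun x hx => ?_) (by linarith)
  · exact mul_nonneg (by positivity) (Finset.prod_nonneg fun j hj => (hfac x hx j hj).1)
  · refine mul_le_mul_of_nonneg_left ?_ (by positivity)
    have := Finset.prod_le_prod (fun j hj => (hfac x hx j hj).1) fun j hj => (hfac x hx j hj).2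
    rwa [Finset.prod_const, Finset.card_range] at this
  · exact mul_nonneg (by positivity) (Finset.prod_nonneg fun j hj => (hfac x hx j hj).1)

/-- Bound for the denominator: `t + k ≥ (ρ + k) (t + n) / (ρ + n)` for `k ≤ n` and `t ≥ ρ`. -/
lemma den_ge {t : ℝ} (ht : (ρ : ℝ) < t) :
    (t * (((t + n) / (ρ + n)) ^ n * (n.factorial * ((ρ + n).choose n : ℕ)))) ^ σ ≤
      ∏ k ∈ Finset.range (n + 1), (t + k) ^ σ := by
  have hρ : (0 : ℝ) ≤ ρ := Nat.cast_nonneg ρ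
  have hn : (0 : ℝ) < n := by exact_mod_cast h.n_pos
  rw [Finset.prod_pow]
  have hq : 0 < ((t + n) / ((ρ : ℝ) + n)) := div_pos (by linarith) (by linarith)
  have ht0 : 0 < t := by linarith
  refine pow_le_pow_left₀ (by positivity) ?_ σ
  rw [Finset.prod_range_succ', mul_comm]
  simp only [Nat.cast_zero, add_zero]
  refine mul_le_mul_of_nonneg_right ?_ ht0.le
  have e1 : (n.factorial : ℝ) * ((ρ + n).choose n : ℕ) =
      ∏ k ∈ Finset.range n, ((ρ : ℝ) + (k + 1 : ℕ)) := by
    have := Nat.ascFactorial_eq_factorial_mul_choose ρ n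
    rw [Nat.ascFactorial_eq_prod_range] at this
    rw [← Nat.cast_mul, ← this, Nat.cast_prod]
    refine Finset.prod_congr rfl fun k _ => ?_
    push_cast; ring
  have e2 : ((t + n) / ((ρ : ℝ) + n)) ^ n * ∏ k ∈ Finset.range n, ((ρ : ℝ) + (k + 1 : ℕ)) =
      ∏ k ∈ Finset.range n, ((t + n) / ((ρ : ℝ) + n) * ((ρ : ℝ) + (k + 1 : ℕ))) := by
    rw [Finset.prod_mul_distrib, Finset.prod_const, Finset.card_range]
  rw [e1, e2]
  refine Finset.prod_le_prod (fun k _ => by positivity) fun k hk => ?_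
  have hk' : ((k + 1 : ℕ) : ℝ) ≤ n := by exact_mod_cast Finset.mem_range.1 hk
  rw [div_mul_eq_mul_div, div_le_iff₀ (by linarith)]
  nlinarith [mul_nonneg (sub_nonneg.2 ht.le) (sub_nonneg.2 hk')]

/-- `YY` bounds `t² R(t)` on `t > ρ`: by `ZParam.deg`, the powers of `t + n` in the numerator do not
exceed those of `(t + n) / (ρ + n)` in the denominator. -/
lemma R_le {t : ℝ} (ht : (ρ : ℝ) < t) : pfR (zN Ψ V K m ρ n σ) n σ t ≤
    YY Ψ V K m ρ n σ * (1 / t ^ 2) := by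
  have hρ : (0 : ℝ) ≤ ρ := Nat.cast_nonneg ρ
  have hn : (0 : ℝ) < n := by exact_mod_cast h.n_pos
  have h1n := h.n_le
  have hρ1 : (1 : ℝ) ≤ ρ := by exact_mod_cast h.n_pos.trans h1n
  have ht0 : 0 < t := by linarith
  have hc : 0 < (((ρ + n).choose n : ℕ) : ℝ) := by
    exact_mod_cast Nat.choose_pos (Nat.le_add_left n ρ)
  set c := (((ρ + n).choose n : ℕ) : ℝ) with hcdef
  set P := ∏ x ∈ zF Ψ, ((V x.1 : ℝ)⁻¹ ^ K * (2 * x.1) ^ (K * m)) with hP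
  have hP0 : 0 ≤ P := Finset.prod_nonneg fun x _ => by positivity
  set D := K * m * (zF Ψ).card with hD
  have hq : 0 < ((t + n) / ((ρ : ℝ) + n)) := div_pos (by linarith) (by linarith)
  have hY : YY Ψ V K m ρ n σ = P * ((ρ : ℝ) + n) ^ D * c⁻¹ ^ σ := by
    rw [YY, hP, hD]
    congr 1
    simp only [mul_pow _ ((ρ : ℝ) + n) (K * m), ← mul_assoc, Finset.prod_mul_distrib]
    rw [Finset.prod_const, ← pow_mul]
  have h1 : pfR (zN Ψ V K m ρ n σ) n σ t ≤ ((n.factorial : ℝ) ^ σ * (t * (P * (t + n) ^ D))) /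
      (t * (((t + n) / (ρ + n)) ^ n * (n.factorial * c))) ^ σ := by
    rw [pfR]
    exact div_le_div₀ (by positivity) (h.num_le ht) (by positivity) (h.den_ge ht)
  refine h1.trans ?_
  rw [div_le_iff₀ (by positivity), hY]
  have hσ := h.σ_ge
  have h2 : t ≤ t ^ σ * (1 / t ^ 2) := by
    obtain ⟨r, rfl⟩ : ∃ r, σ = r + 3 := ⟨σ - 3, by omega⟩
    have : t ^ (r + 3) * (1 / t ^ 2) = t ^ r * t := by
      rw [pow_add]; field_simp
    rw [this]
    have := one_le_pow₀ (by linarith : 1 ≤ t) (n := r)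
    nlinarith
  have h3 : (t + n) ^ D ≤ ((ρ : ℝ) + n) ^ D * (((t + n) / ((ρ : ℝ) + n)) ^ n) ^ σ := by
    have hle : D ≤ n * σ := by have := h.deg; omega
    have h4 : ((t + n) / ((ρ : ℝ) + n)) ^ D ≤ ((t + n) / ((ρ : ℝ) + n)) ^ (n * σ) := by
      refine pow_le_pow_right₀ ?_ hle
      rw [one_le_div (by linarith)]; linarith
    rw [div_pow, div_le_iff₀ (by positivity)] at h4
    rw [← pow_mul]
    linarith
  calc (n.factorial : ℝ) ^ σ * (t * (P * (t + n) ^ D))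
      ≤ (n.factorial : ℝ) ^ σ * ((t ^ σ * (1 / t ^ 2)) *
        (P * (((ρ : ℝ) + n) ^ D * (((t + n) / ((ρ : ℝ) + n)) ^ n) ^ σ))) := by
        gcongr
    _ = _ := by
        rw [mul_pow t, mul_pow (((t + n) / ((ρ : ℝ) + n)) ^ n), mul_pow (n.factorial : ℝ)]
        have : c⁻¹ ^ σ * c ^ σ = 1 := by rw [← mul_pow, inv_mul_cancel₀ hc.ne', one_pow]
        linear_combination (- (n.factorial : ℝ) ^ σ * ((t ^ σ * (1 / t ^ 2)) *
        (P * (((ρ : ℝ) + n) ^ D * (((t + n) / ((ρ : ℝ) + n)) ^ n) ^ σ)))) * this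

lemma YY_pos : 0 < YY Ψ V K m ρ n σ := by
  have hn : (0 : ℝ) < n := by exact_mod_cast h.n_pos
  unfold YY
  refine mul_pos (Finset.prod_pos fun x hx => ?_) (pow_pos (inv_pos.2 ?_) _)
  · have h1 := zF_pos hx
    have h2 := Nat.pos_of_ne_zero (h.V_ne _ (mem_zF.1 hx).1)
    positivity
  · exact_mod_cast Nat.choose_pos (Nat.le_add_left n ρ)

/-- `S_1` is at most `YY ζ(2)`, by summing `R_le`; the terms up to `ρ` vanish. -/
lemma S_le {S : ℝ} (hS : HasSum (fun m' : ℕ => pfR (zN Ψ V K m ρ n σ) n σ (((m' : ℝ) + 1) /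
    (1 : ℕ))) S) : S ≤ YY Ψ V K m ρ n σ * zetaR 2 := by
  have h2 := (hasSum_zetaR 2 le_rfl).mul_left (YY Ψ V K m ρ n σ)
  refine hasSum_le (fun m' => ?_) hS h2
  have hY := h.YY_pos
  by_cases hm : m' + 1 ≤ ρ
  · have := h.pfR_zero h.one_mem (by omega : 1 ≤ m' + 1) (by omega)
    push_cast at this ⊢
    rw [this]
    positivity
  · have h3 : (ρ : ℝ) < (m' : ℝ) + 1 := by exact_mod_cast (by omega : ρ < m' + 1)
    rw [Nat.cast_one, div_one]
    exact h.R_le h3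
end ZParam

lemma card_coprime_Icc (b : ℕ) : ((Finset.Icc 1 b).filter (Nat.Coprime b)).card = b.totient := by
  rw [← Nat.filter_coprime_Ico_eq_totient b 1]
  congr 2
  ext x
  simp only [Finset.mem_Icc, Finset.mem_Ico]
  omega

lemma card_zF (Ψ : Finset ℕ) : (zF Ψ).card = ∑ b ∈ Ψ, b.totient := by
  rw [zF, Finset.card_sigma]
  exact Finset.sum_congr rfl fun b _ => card_coprime_Icc b

/-- The bound for `log YY` with the actual choice of `V`, when `ρ = p m`, `n = q m`. -/
lemma log_YY_le (Ψ : Finset ℕ) (p q m σ : ℕ) (hp : 1 ≤ p) (hq : 1 ≤ q) (hm : 1 ≤ m) :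
    log (YY Ψ (Vb m) (2 * p + q) m (p * m) (q * m) σ) ≤
      m * ((2 * p + q) * ∑ b ∈ Ψ, (b.totient : ℝ) * (1 + log (2 * (p + q)) + log b + gam b) -
        σ * ((p + q) * log (p + q) - p * log p - q * log q)) +
        σ * (log (q * m) + log (p * m) + 2) := by
  have hp' : (0 : ℝ) < p := by exact_mod_cast hp
  have hq' : (0 : ℝ) < q := by exact_mod_cast hq
  have hm' : (0 : ℝ) < m := by exact_mod_cast hm
  have hx : ∀ x ∈ zF Ψ, (0 : ℝ) < x.1 := fun x hx => by
    have := mem_zF.1 hx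
    exact_mod_cast (by omega : 0 < x.1)
  have hV : ∀ b, (0 : ℝ) < Vb m b := fun b => by
    exact_mod_cast Nat.pos_of_ne_zero (Vb_ne m b)
  have hc : 0 < (((p * m + q * m).choose (q * m) : ℕ) : ℝ) := by
    exact_mod_cast Nat.choose_pos (Nat.le_add_left _ _)
  have hF : ∀ x ∈ zF Ψ, 0 < ((Vb m x.1 : ℝ)⁻¹ ^ (2 * p + q) *
      (2 * x.1 * (((p * m : ℕ) : ℝ) + (q * m : ℕ))) ^ ((2 * p + q) * m)) := fun x hx' => by
    have := hx x hx'
    have := hV x.1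
    positivity
  rw [YY, log_mul (Finset.prod_pos hF).ne' (by positivity), log_prod (fun x hx => (hF x hx).ne'),
    log_pow, log_inv]
  have h1 : ∀ x ∈ zF Ψ, log ((Vb m x.1 : ℝ)⁻¹ ^ (2 * p + q) *
      (2 * x.1 * (((p * m : ℕ) : ℝ) + (q * m : ℕ))) ^ ((2 * p + q) * m)) ≤
      (2 * p + q) * m * (1 + log (2 * (p + q)) + log x.1 + gam x.1) := by
    intro x hx'
    have a1 := hx x hx'
    have a2 := hV x.1
    rw [log_mul (by positivity) (by positivity), log_pow, log_pow, log_inv]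
    have e : 2 * (x.1 : ℝ) * (((p * m : ℕ) : ℝ) + (q * m : ℕ)) = 2 * (p + q) * m * x.1 := by
      push_cast; ring
    rw [e, log_mul (by positivity) (by positivity), log_mul (by positivity) (by positivity)]
    have a3 := log_Vb_ge m x.1 (by intro h; rw [h] at a1; simp at a1)
    push_cast
    have a4 := mul_le_mul_of_nonneg_left a3 (by positivity : (0 : ℝ) ≤ 2 * p + q)
    linarith
  have h2 := Finset.sum_le_sum h1
  have h3 : ∑ x ∈ zF Ψ, (2 * (p : ℝ) + q) * m * (1 + log (2 * (p + q)) + log x.1 + gam x.1) =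
      m * ((2 * p + q) * ∑ b ∈ Ψ, (b.totient : ℝ) * (1 + log (2 * (p + q)) + log b + gam b)) := by
    rw [zF, Finset.sum_sigma, Finset.mul_sum, Finset.mul_sum]
    refine Finset.sum_congr rfl fun b hb => ?_
    simp only [Finset.sum_const, nsmul_eq_mul, card_coprime_Icc]
    ring
  have h4 := log_choose_ge p q m hp hq hm
  have h5 := mul_le_mul_of_nonneg_left h4 (Nat.cast_nonneg (α := ℝ) σ)
  linarith

/-! ### Integer weights -/

/-- A polynomial with `N` terms has at most `N - 1` sign variations. -/
lemma signVariations_le_card {P : ℚ[X]} : P.signVariations ≤ P.support.card - 1 := by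
  induction hN : P.support.card using Nat.strong_induction_on generalizing P with
  | _ N ih =>
    by_cases hP : P = 0
    · subst hP; simp
    have h1 : P.eraseLead.support.card = N - 1 := by
      rw [← hN]; exact card_support_eraseLead
    have h0 : 0 < N := by rw [← hN]; exact Finset.card_pos.2 (support_nonempty.2 hP)
    by_cases hE : P.eraseLead = 0
    · have := eraseLead_add_monomial_natDegree_leadingCoeff P
      rw [hE, zero_add] at this
      rw [← this, signVariations_monomial]
      exact Nat.zero_le _
    · have h2 := ih (N - 1) (by omega) h1
      have h3 := signVariations_le_eraseLead_succ P
      have h4 : 0 < P.eraseLead.support.card := Finset.card_pos.2 (support_nonempty.2 hE)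
      omega

/-- A polynomial with few terms has few positive roots. -/
lemma card_pos_roots_lt {P : ℚ[X]} (hP : P ≠ 0) (Ψ : Finset ℕ) (h0 : 0 ∉ Ψ)
    (hr : ∀ b ∈ Ψ, P.eval (b : ℚ) = 0) : Ψ.card < P.support.card := by
  have h1 := P.roots_countP_pos_le_signVariations
  have h2 := signVariations_le_card (P := P)
  have h3 : 0 < P.support.card := Finset.card_pos.2 (support_nonempty.2 hP)
  have h4 : Ψ.card ≤ P.roots.countP (0 < ·) := by
    rw [Multiset.countP_eq_card_filter, ← Finset.card_image_of_injective Ψ (Nat.cast_injective (R := ℚ))]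
    refine Multiset.card_le_card ((Finset.val_le_iff_val_subset).2 fun x hx => ?_)
    rw [Finset.mem_val, Finset.mem_image] at hx
    obtain ⟨b, hb, rfl⟩ := hx
    rw [Multiset.mem_filter, mem_roots hP]
    exact ⟨hr b hb, by
      have : b ≠ 0 := fun h => h0 (h ▸ hb)
      positivity⟩
  omega

/-- Integer weights killing the powers in `I` but not the first power. -/
lemma exists_weights (Ψ I : Finset ℕ) (h0 : 0 ∉ Ψ) (h1 : 1 ∉ I) (hc : I.card < Ψ.card) :
    ∃ w : ℕ → ℤ, (∀ i ∈ I, ∑ b ∈ Ψ, (w b : ℝ) * (b : ℝ) ^ i = 0) ∧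
      ∑ b ∈ Ψ, (w b : ℝ) * (b : ℝ) ≠ 0 := by
  let Lf : ℕ → ((Ψ → ℚ) →ₗ[ℚ] ℚ) := fun i => ∑ b : Ψ, ((b : ℕ) : ℚ) ^ i • LinearMap.proj b
  have hLf : ∀ i w, Lf i w = ∑ b : Ψ, ((b : ℕ) : ℚ) ^ i * w b := by
    intro i w
    simp [Lf, LinearMap.sum_apply]
  have hex : ∃ w : Ψ → ℚ, (∀ i ∈ I, Lf i w = 0) ∧ Lf 1 w ≠ 0 := by
    by_contra hcon
    push Not at hcon
    have hspan : Lf 1 ∈ Submodule.span ℚ (Set.range fun i : I => Lf i) := by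
      refine mem_span_of_iInf_ker_le_ker ?_
      intro w hw
      rw [Submodule.mem_iInf] at hw
      exact LinearMap.mem_ker.2 (hcon w fun i hi => LinearMap.mem_ker.1 (hw ⟨i, hi⟩))
    obtain ⟨c, hc'⟩ := (Submodule.mem_span_range_iff_exists_fun ℚ).1 hspan
    -- this polynomial vanishes on `Ψ` but has at most `#I + 1 ≤ #Ψ` terms
    let P : ℚ[X] := X - ∑ i : I, C (c i) * X ^ (i : ℕ)
    have hcoef : P.coeff 1 = 1 := by
      simp only [P, coeff_sub, coeff_X_one, finsetSum_coeff, coeff_C_mul, coeff_X_pow]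
      rw [Finset.sum_eq_zero]
      · ring
      · intro i _
        have : (1 : ℕ) ≠ i := fun h => h1 (h ▸ i.2)
        simp [this]
    have hP : P ≠ 0 := by
      intro h
      rw [h] at hcoef
      simp at hcoef
    have hsupp : P.support ⊆ insert 1 I := by
      intro k hk
      rw [mem_support_iff] at hk
      by_contra hk2
      rw [Finset.mem_insert, not_or] at hk2
      apply hk
      simp only [P, coeff_sub, coeff_X, finsetSum_coeff, coeff_C_mul, coeff_X_pow]
      rw [Finset.sum_eq_zero]
      · simp [Ne.symm hk2.1]
      · intro i _
        have : k ≠ i := fun h => hk2.2 (h ▸ i.2)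
        simp [this]
    have hroots : ∀ b ∈ Ψ, P.eval (b : ℚ) = 0 := by
      intro b hb
      have := congrArg (fun f => f (Pi.single (⟨b, hb⟩ : Ψ) 1)) hc'
      simp only [LinearMap.sum_apply, LinearMap.smul_apply, hLf, Pi.single_apply, mul_ite, mul_one,
        mul_zero, Finset.sum_ite_eq', Finset.mem_univ, if_true, smul_eq_mul, pow_one] at this
      simp only [P, eval_sub, eval_X, eval_finsetSum, eval_mul, eval_C, eval_pow]
      rw [this, sub_self]
    have := card_pos_roots_lt hP Ψ h0 hroots
    have h5 := (Finset.card_le_card hsupp).trans (Finset.card_insert_le 1 I)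
    omega
  obtain ⟨w, hw, hw1⟩ := hex
  obtain ⟨D, hD⟩ := IsLocalization.exist_integer_multiples (nonZeroDivisors ℤ) Finset.univ w
  have hD0 : ((D : ℤ) : ℝ) ≠ 0 := by
    exact_mod_cast nonZeroDivisors.coe_ne_zero D
  choose z hz using fun b : Ψ => hD b (Finset.mem_univ b)
  have hz' : ∀ b : Ψ, (z b : ℝ) = (D : ℤ) * (w b : ℝ) := by
    intro b
    have := hz b
    simp only [Algebra.smul_def, algebraMap_int_eq, eq_intCast] at this
    exact_mod_cast congrArg (fun x : ℚ => (x : ℝ)) this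
  have hsum : ∀ i, ∑ b ∈ Ψ, ((if hb : b ∈ Ψ then z ⟨b, hb⟩ else 0 : ℤ) : ℝ) * (b : ℝ) ^ i =
      (D : ℤ) * ((Lf i w : ℚ) : ℝ) := by
    intro i
    rw [hLf, ← Finset.sum_coe_sort]
    push_cast
    rw [Finset.mul_sum]
    refine Finset.sum_congr rfl fun b _ => ?_
    rw [dif_pos b.2, hz']
    ring
  refine ⟨fun b => if hb : b ∈ Ψ then z ⟨b, hb⟩ else 0, fun i hi => ?_, ?_⟩
  · rw [hsum, hw i hi]; simp
  · have := hsum 1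
    simp only [pow_one] at this
    rw [this]
    exact mul_ne_zero hD0 (by exact_mod_cast hw1)

/-! ### Chebyshev's function -/

/-- `log N! = ∑ ψ(N / k)`, from `log = Λ * 1`. -/
lemma sum_log_eq_sum_psi (N : ℕ) :
    ∑ n ∈ Finset.Ioc 0 N, log n = ∑ k ∈ Finset.Ioc 0 N, Chebyshev.psi ((N / k : ℕ) : ℝ) := by
  have h := ArithmeticFunction.sum_Ioc_mul_eq_sum_sum
    ((ArithmeticFunction.zeta : ArithmeticFunction ℕ) : ArithmeticFunction ℝ)
    ArithmeticFunction.vonMangoldt N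
  rw [ArithmeticFunction.zeta_mul_vonMangoldt] at h
  simp only [ArithmeticFunction.log_apply] at h
  rw [h]
  refine Finset.sum_congr rfl fun k hk => ?_
  rw [Finset.mem_Ioc] at hk
  rw [ArithmeticFunction.natCoe_apply, ArithmeticFunction.zeta_apply_ne (by omega), Chebyshev.psi,
    Nat.floor_natCast]
  simp

/-- `ψ(n) ≤ (1 + δ) n` for arbitrarily large multiples `n = q m` of `q`. Otherwise `∑ ψ(N / k)` would
be about `(1 + δ) N log N`, contradicting `log N! ≤ N log N`. -/
lemma exists_psi_le (q : ℕ) (hq : 1 ≤ q) (δ : ℝ) (hδ : 0 < δ) (M₀ : ℕ) :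
    ∃ m, M₀ ≤ m ∧ Chebyshev.psi ((q * m : ℕ) : ℝ) ≤ (1 + δ) * (q * m) := by
  by_contra! hcon
  set M := M₀ + 1 with hM
  have hM1 : (1 : ℝ) ≤ M := by rw [hM]; push_cast; linarith [Nat.cast_nonneg (α := ℝ) M₀]
  have hq1 : (1 : ℝ) ≤ q := by exact_mod_cast hq
  obtain ⟨Y, hY1, hY⟩ : ∃ Y : ℕ, 1 ≤ Y ∧ log ((q : ℝ) * M) + (1 + δ) < δ * log Y := by
    have ht : Tendsto (fun Y : ℕ => δ * log (Y : ℝ)) atTop atTop :=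
      (tendsto_log_atTop.comp tendsto_natCast_atTop_atTop).const_mul_atTop hδ
    obtain ⟨Y, h1, h2⟩ := ((ht.eventually_gt_atTop _).and (eventually_ge_atTop 1)).exists
    exact ⟨Y, h2, h1⟩
  have hY1' : (1 : ℝ) ≤ Y := by exact_mod_cast hY1
  -- compare both sides of `log N! = ∑ ψ(N / k)` for `N = q M Y`, keeping only `k ≤ Y`
  have hup : ∑ n ∈ Finset.Ioc 0 (q * (M * Y)), log (n : ℝ) ≤
      (q * (M * Y)) * log (q * (M * Y)) := by
    calc _ ≤ ∑ n ∈ Finset.Ioc 0 (q * (M * Y)), log ((q : ℝ) * (M * Y)) := by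
          refine Finset.sum_le_sum fun n hn => ?_
          rw [Finset.mem_Ioc] at hn
          refine log_le_log (by exact_mod_cast hn.1) (by exact_mod_cast hn.2)
      _ = _ := by simp
  rw [sum_log_eq_sum_psi] at hup
  have hYN : Y ≤ q * (M * Y) := by
    calc Y = 1 * (1 * Y) := by ring
      _ ≤ _ := Nat.mul_le_mul hq (Nat.mul_le_mul_right _ (by omega))
  have hlow : ∑ k ∈ Finset.Ioc 0 Y, (1 + δ) * (q * (M * Y * (k : ℝ)⁻¹ - 1)) ≤
      ∑ k ∈ Finset.Ioc 0 (q * (M * Y)), Chebyshev.psi ((q * (M * Y) / k : ℕ) : ℝ) := by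
    refine le_trans (Finset.sum_le_sum (g := fun k : ℕ =>
      Chebyshev.psi ((q * (M * Y) / k : ℕ) : ℝ)) fun k hk => ?_)
      (Finset.sum_le_sum_of_subset_of_nonneg (Finset.Ioc_subset_Ioc_right hYN)
        fun _ _ _ => Chebyshev.psi_nonneg _)
    rw [Finset.mem_Ioc] at hk
    have hk0 : (0 : ℝ) < k := by exact_mod_cast hk.1
    have h1 : M ≤ M * Y / k := by
      rw [Nat.le_div_iff_mul_le hk.1]
      exact Nat.mul_le_mul_left _ hk.2
    have h2 := hcon (M * Y / k) (by omega)
    have h3 : q * (M * Y / k) ≤ q * (M * Y) / k := Nat.mul_div_le_mul_div_assoc _ _ _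
    have h4 := Chebyshev.psi_mono (Nat.cast_le (α := ℝ).2 h3)
    have h5 : (M * Y * (k : ℝ)⁻¹ - 1) ≤ ((M * Y / k : ℕ) : ℝ) := by
      have := Nat.lt_div_mul_add hk.1 (a := M * Y)
      have h6 : (M : ℝ) * Y < ((M * Y / k : ℕ) : ℝ) * k + k := by exact_mod_cast this
      rw [← div_eq_mul_inv, sub_le_iff_le_add, div_le_iff₀ hk0]
      linarith
    refine le_trans ?_ (h2.le.trans h4)
    gcongr
  have hH : log (Y : ℝ) ≤ ∑ k ∈ Finset.Ioc 0 Y, (k : ℝ)⁻¹ := by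
    have h1 := log_add_one_le_harmonic Y
    rw [harmonic_eq_sum_Icc] at h1
    push_cast at h1
    refine le_trans (log_le_log (by linarith) (by push_cast; linarith)) h1
  have hs : ∑ k ∈ Finset.Ioc 0 Y, (1 + δ) * (q * (M * Y * (k : ℝ)⁻¹ - 1)) =
      (1 + δ) * (q * (M * Y * (∑ k ∈ Finset.Ioc 0 Y, (k : ℝ)⁻¹) - Y)) := by
    rw [← Finset.mul_sum, ← Finset.mul_sum, Finset.sum_sub_distrib, ← Finset.mul_sum]
    simp
  rw [hs] at hlow
  have hA : (0 : ℝ) < q * (M * Y) := by positivity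
  have e : log ((q : ℝ) * (M * Y)) = log (q * M) + log Y := by
    rw [← log_mul (by positivity) (by positivity)]; ring_nf
  rw [e] at hup
  have h1 : (1 + δ) * (q * (M * Y * log Y - M * Y)) ≤
      (1 + δ) * (q * (M * Y * (∑ k ∈ Finset.Ioc 0 Y, (k : ℝ)⁻¹) - Y)) := by
    gcongr
    nlinarith
  have h2 : (q * (M * Y)) * ((1 + δ) * (log Y - 1)) ≤ (q * (M * Y)) * (log (q * M) + log Y) := by
    nlinarith
  have h3 := le_of_mul_le_mul_left h2 hA
  nlinarith

/-! ### Elimination -/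

/-- The choice `ρ = p m`, `n = q m`, with `2 p + q` blocks of length `m`, is admissible. -/
lemma zparam_main (Ψ : Finset ℕ) (h1 : 1 ∈ Ψ) (hcl : ∀ b ∈ Ψ, ∀ c, c ∣ b → c ∈ Ψ) (h0 : 0 ∉ Ψ)
    (p q σ m : ℕ) (hm : 1 ≤ m) (hq : 1 ≤ q) (hqp : q ≤ p) (hqe : Even q) (hσe : Even σ)
    (hσ : 4 ≤ σ) (hdeg : 4 * ((2 * p + q) * ∑ b ∈ Ψ, b.totient) ≤ q * σ) :
    ZParam Ψ (Vb m) (2 * p + q) m (p * m) (q * m) σ where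
  one_mem := h1
  closed := hcl
  zero_notMem := h0
  V_ne := fun b _ => Vb_ne m b
  V_cop := fun b _ => Vb_cop m b
  V_dvd := fun b _ => Vb_dvd m b
  hL := by ring
  n_even := hqe.mul_right m
  m_le := Nat.le_mul_of_pos_left m hq
  σ_even := hσe
  σ_ge := hσ
  n_pos := Nat.mul_pos hq hm
  n_le := Nat.mul_le_mul_right m hqp
  deg := by
    rw [card_zF]
    calc _ = m * (4 * ((2 * p + q) * ∑ b ∈ Ψ, b.totient)) := by ring
      _ ≤ m * (q * σ) := Nat.mul_le_mul_left _ hdeg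
      _ = _ := by ring

/-- Divergence of the harmonic series: the hypothesis of `ZParam.ratio` holds for large `m`. -/
lemma eventually_harmonic (c : ℝ) (hc : 1 ≤ c) (K : ℕ) (hK : 1 ≤ K) (R : ℝ) :
    ∀ᶠ m : ℕ in atTop, R < ∑ j ∈ Finset.range (K * m), 1 / (c + (j : ℝ)) := by
  have h := Real.tendsto_sum_range_one_div_nat_succ_atTop
  have h2 : Tendsto (fun m : ℕ => K * m) atTop atTop :=
    tendsto_atTop_mono (fun m => Nat.le_mul_of_pos_left m hK) tendsto_id
  filter_upwards [(h.comp h2).eventually_gt_atTop (c * R)] with m hm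
  have hc0 : 0 < c := by linarith
  have h3 : (1 / c) * ∑ j ∈ Finset.range (K * m), 1 / ((j : ℝ) + 1) ≤
      ∑ j ∈ Finset.range (K * m), 1 / (c + (j : ℝ)) := by
    rw [Finset.mul_sum]
    refine Finset.sum_le_sum fun j _ => ?_
    rw [one_div_mul_one_div]
    refine one_div_le_one_div_of_le (by positivity) ?_
    nlinarith [Nat.cast_nonneg (α := ℝ) j]
  refine lt_of_lt_of_le ?_ h3
  simp only [Function.comp] at hm
  rw [one_div, inv_mul_eq_div, lt_div_iff₀ hc0]
  linarith

lemma eventually_log_small (p q : ℕ) (hp : 1 ≤ p) (hq : 1 ≤ q) (σ η C : ℝ) (hσ : 0 < σ)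
    (hη : 0 < η) :
    ∀ᶠ m : ℕ in atTop, σ * (log ((q : ℝ) * m) + log (p * m) + 2) + C < η * m := by
  have h1 : ∀ᶠ m : ℕ in atTop, ‖log (m : ℝ)‖ ≤ η / (4 * σ) * ‖((m : ℕ) : ℝ)‖ :=
    (tendsto_natCast_atTop_atTop (R := ℝ)).eventually
      (Real.isLittleO_log_id_atTop.bound (by positivity : 0 < η / (4 * σ)))
  have h2 := (tendsto_natCast_atTop_atTop (R := ℝ)).eventually_gt_atTop
    ((σ * (log q + log p + 2) + C) / (η / 2))
  filter_upwards [h1, h2, eventually_ge_atTop 1] with m a1 a2 a3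
  have hm : (0 : ℝ) < m := by exact_mod_cast a3
  have hp' : (0 : ℝ) < p := by exact_mod_cast hp
  have hq' : (0 : ℝ) < q := by exact_mod_cast hq
  rw [div_lt_iff₀ (by positivity)] at a2
  rw [Real.norm_eq_abs, Real.norm_of_nonneg hm.le] at a1
  have a4 := mul_le_mul_of_nonneg_left ((le_abs_self _).trans a1) hσ.le
  have e : σ * (η / (4 * σ) * (m : ℝ)) = η / 4 * m := by field_simp
  rw [e] at a4
  rw [log_mul hq'.ne' hm.ne', log_mul hp'.ne' hm.ne']
  linarith

/-- Elimination: the values `zetaR i`, `i ∈ J`, which are annihilated by the weights, disappear;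
the others are rational, so that a suitable multiple of `∑ w_b S_b` is an integer. -/
lemma elimination_int (Ψ E J : Finset ℕ) (w : ℕ → ℤ) (z : ℕ → ℤ) (y : ℕ → ℤ) (S : ℕ → ℝ) (D : ℝ)
    (ζ : ℕ → ℝ) (Den : ℕ)
    (hJ : ∀ i ∈ J, ∑ b ∈ Ψ, (w b : ℝ) * (b : ℝ) ^ i = 0)
    (hr : ∀ i ∈ E, i ∉ J → ∃ k : ℤ, (Den : ℝ) * ζ i = k)
    (hS : ∀ b ∈ Ψ, D * S b = ∑ i ∈ E, (z i : ℝ) * (b : ℝ) ^ i * ζ i + y b) :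
    ∃ k : ℤ, D * Den * ∑ b ∈ Ψ, (w b : ℝ) * S b = k := by
  have h1 : D * Den * ∑ b ∈ Ψ, (w b : ℝ) * S b =
      ∑ i ∈ E, (z i : ℝ) * (Den * ζ i) * ∑ b ∈ Ψ, (w b : ℝ) * (b : ℝ) ^ i +
        ∑ b ∈ Ψ, (Den : ℝ) * w b * y b := by
    rw [Finset.mul_sum]
    have : ∀ b ∈ Ψ, D * Den * ((w b : ℝ) * S b) =
        ∑ i ∈ E, (z i : ℝ) * (Den * ζ i) * ((w b : ℝ) * (b : ℝ) ^ i) + Den * w b * y b := by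
      intro b hb
      rw [show D * Den * ((w b : ℝ) * S b) = Den * w b * (D * S b) by ring, hS b hb, mul_add,
        Finset.mul_sum]
      congr 1
      exact Finset.sum_congr rfl fun i _ => by ring
    rw [Finset.sum_congr rfl this, Finset.sum_add_distrib, Finset.sum_comm]
    simp only [Finset.mul_sum]
  rw [h1]
  have h2 : ∀ i ∈ E, ∃ k : ℤ,
      (z i : ℝ) * (Den * ζ i) * ∑ b ∈ Ψ, (w b : ℝ) * (b : ℝ) ^ i = k := by
    intro i hi
    by_cases hiJ : i ∈ J
    · exact ⟨0, by rw [hJ i hiJ]; simp⟩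
    · obtain ⟨k, hk⟩ := hr i hi hiJ
      exact ⟨z i * k * ∑ b ∈ Ψ, w b * (b : ℤ) ^ i, by rw [hk]; push_cast; rfl⟩
  choose! k hk using h2
  refine ⟨∑ i ∈ E, k i + ∑ b ∈ Ψ, (Den : ℤ) * w b * y b, ?_⟩
  rw [Finset.sum_congr rfl hk]
  push_cast
  rfl

open Classical in
/-- The number of irrational `ζ(i)` with `3 ≤ i < σ` odd is at least `|Ψ|`, provided the exponential rate of
`d ^ σ S_1` is negative (`hE`): otherwise elimination gives a non-zero integer of absolute value
less than `1` for suitable large `m`. Here `ρ = p m` and `n = q m`. -/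
theorem card_le_irrational (Ψ : Finset ℕ) (h1 : 1 ∈ Ψ) (hcl : ∀ b ∈ Ψ, ∀ c, c ∣ b → c ∈ Ψ)
    (h0 : 0 ∉ Ψ) (p q σ : ℕ) (hq : 1 ≤ q) (hqp : q ≤ p) (hqe : Even q) (hσe : Even σ)
    (hσ : 4 ≤ σ) (δ : ℝ) (hδ : 0 < δ)
    (hdeg : 4 * ((2 * p + q) * ∑ b ∈ Ψ, b.totient) ≤ q * σ)
    (hE : (2 * (p : ℝ) + q) *
        ∑ b ∈ Ψ, (b.totient : ℝ) * (1 + log (2 * (p + q)) + log b + gam b) + σ * (q * (1 + δ)) <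
      σ * ((p + q) * log (p + q) - p * log p - q * log q)) :
    Ψ.card ≤ ((Finset.Icc 3 (σ - 1)).filter (fun i => Odd i ∧ Irrational (zetaR i))).card := by
  by_contra! hcon
  set J := (Finset.Icc 3 (σ - 1)).filter (fun i => Odd i ∧ Irrational (zetaR i)) with hJdef
  have hp : 1 ≤ p := hq.trans hqp
  obtain ⟨w, hw, hW⟩ := exists_weights Ψ J h0 (by simp [hJdef]) hcon
  set W := ∑ b ∈ Ψ, (w b : ℝ) * (b : ℝ) with hWdef
  set A := ∑ b ∈ Ψ, |(w b : ℝ)| * (b : ℝ) with hAdef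
  have hA : 0 ≤ A := Finset.sum_nonneg fun b _ => by positivity
  have hWp : 0 < |W| := abs_pos.2 hW
  -- common denominator of the rational zeta values
  have hrat : ∀ i, ¬ Irrational (zetaR i) → ∃ r : ℚ, (r : ℝ) = zetaR i := by
    intro i hi
    unfold Irrational at hi
    push Not at hi
    exact hi
  choose! r hr using hrat
  set Den := ∏ i ∈ Finset.Icc 3 (σ - 1), (r i).den with hDen
  have hDen0 : 0 < Den := Finset.prod_pos fun i _ => (r i).den_pos
  have hDenr : ∀ i ∈ (Finset.Icc 3 (σ - 1)).filter Odd, i ∉ J →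
      ∃ k : ℤ, (Den : ℝ) * zetaR i = k := by
    intro i hi hiJ
    rw [Finset.mem_filter] at hi
    have hir : ¬ Irrational (zetaR i) := fun hh => hiJ (Finset.mem_filter.2 ⟨hi.1, hi.2, hh⟩)
    obtain ⟨c, hc⟩ : (r i).den ∣ Den := Finset.dvd_prod_of_mem (fun i => (r i).den) hi.1
    refine ⟨c * (r i).num, ?_⟩
    rw [← hr i hir, hc]
    have : ((r i).den : ℝ) * (r i : ℝ) = (r i).num := by
      have := Rat.den_mul_eq_num (r i)
      exact_mod_cast this
    push_cast
    rw [mul_comm ((r i).den : ℝ), mul_assoc, this]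
  -- how close the sums have to be to proportional ones
  obtain ⟨T, hT1, hT⟩ : ∃ T : ℕ, 1 ≤ T ∧ 2 * A / |W| < T := by
    obtain ⟨T, hT⟩ := exists_nat_gt (2 * A / |W|)
    exact ⟨T + 1, by omega, by push_cast; linarith⟩
  have hTp : (0 : ℝ) < T := by exact_mod_cast hT1
  have hz2 : 0 < zetaR 2 := by
    have h := hasSum_zetaR 2 le_rfl
    have := h.tsum_eq
    rw [← this]
    exact h.summable.tsum_pos (fun m => by positivity) 0 (by norm_num)
  set B := ∑ b ∈ Ψ, (b.totient : ℝ) * (1 + log (2 * (p + q)) + log b + gam b) with hB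
  set η := σ * ((p + q) * log (p + q) - p * log p - q * log q) -
    ((2 * (p : ℝ) + q) * B + σ * (q * (1 + δ))) with hη
  have hηp : 0 < η := by rw [hη]; linarith
  set Cst : ℝ := Den * zetaR 2 * (2 * |W|) with hCst
  have hDenp : (0 : ℝ) < Den := by exact_mod_cast hDen0
  have hCp : 0 < Cst := by positivity
  have hσp : (0 : ℝ) < σ := by exact_mod_cast (by omega : 0 < σ)
  obtain ⟨M₀, hM₀⟩ := eventually_atTop.1
    (((eventually_harmonic (1 + (T : ℝ) ^ 2 * ((zF Ψ).card + 1) + 1) (by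
        have : 0 ≤ (T : ℝ) ^ 2 * ((zF Ψ).card + 1) := by positivity
        linarith) (2 * p + q) (by omega) (2 * (σ : ℝ))).and
      (eventually_log_small p q hp hq σ η (log Cst) hσp hηp)).and (eventually_ge_atTop 4))
  obtain ⟨m, hmM, hpsi⟩ := exists_psi_le q hq δ hδ M₀
  obtain ⟨⟨hbig, hlog⟩, hm4⟩ := hM₀ m hmM
  have hm : 1 ≤ m := by omega
  have hZ := zparam_main Ψ h1 hcl h0 p q σ m hm hq hqp hqe hσe hσ hdeg
  set d := Nat.lcmUpto (q * m) with hd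
  have hdp : 0 < d := Nat.lcmUpto_pos _
  have hddvd : ∀ l, 1 ≤ l → l ≤ q * m → l ∣ d := fun l a b => by
    rw [hd]
    unfold Nat.lcmUpto
    exact Finset.dvd_lcm (f := fun i => i) (Finset.mem_Icc.2 ⟨a, b⟩)
  obtain ⟨z, hz⟩ := hZ.linear_form d hdp.ne' hddvd
  choose! S y hSy using hz
  have hS := fun b hb => (hSy b hb).1
  obtain ⟨k, hk⟩ := elimination_int Ψ ((Finset.Icc 3 (σ - 1)).filter Odd) J w z y S ((d : ℝ) ^ σ)
    zetaR Den hw hDenr (fun b hb => (hSy b hb).2)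
  obtain ⟨hS1, hSb⟩ := hZ.ratio (by nlinarith) T hT1 hbig S hS
  have hSle := hZ.S_le (hS 1 h1)
  have hdiff : |∑ b ∈ Ψ, (w b : ℝ) * S b - W * S 1| ≤ 2 * A / T * S 1 := by
    rw [hWdef, Finset.sum_mul, ← Finset.sum_sub_distrib]
    refine (Finset.abs_sum_le_sum_abs _ _).trans ?_
    rw [hAdef, Finset.mul_sum, Finset.sum_div, Finset.sum_mul]
    refine Finset.sum_le_sum fun b hb => ?_
    rw [show (w b : ℝ) * S b - w b * b * S 1 = w b * (S b - b * S 1) by ring, abs_mul]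
    calc _ ≤ |(w b : ℝ)| * (2 * b / T * S 1) :=
          mul_le_mul_of_nonneg_left (hSb b hb) (abs_nonneg _)
      _ = _ := by ring
  have hAT : 2 * A / T < |W| := by
    rw [div_lt_iff₀ hWp] at hT
    rw [div_lt_iff₀ hTp]
    linarith
  have hsmall : 2 * A / T * S 1 < |W| * S 1 := mul_lt_mul_of_pos_right hAT hS1
  have habs : |W * S 1| = |W| * S 1 := by rw [abs_mul, abs_of_pos hS1]
  -- the combination is dominated by its main term `W S_1`
  have hne : ∑ b ∈ Ψ, (w b : ℝ) * S b ≠ 0 := by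
    intro h
    rw [h, zero_sub, abs_neg, habs] at hdiff
    linarith
  have hup : |∑ b ∈ Ψ, (w b : ℝ) * S b| < 2 * |W| * S 1 := by
    have := abs_sub_abs_le_abs_sub (∑ b ∈ Ψ, (w b : ℝ) * S b) (W * S 1)
    rw [habs] at this
    linarith
  have hdpos : (0 : ℝ) < d := by exact_mod_cast hdp
  have hYp := hZ.YY_pos
  -- the integer is smaller than 1
  have hlt : |(k : ℝ)| < 1 := by
    rw [← hk, abs_mul, abs_of_pos (by positivity : 0 < (d : ℝ) ^ σ * Den)]
    have e1 : (d : ℝ) ^ σ * Den * |∑ b ∈ Ψ, (w b : ℝ) * S b| <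
        (d : ℝ) ^ σ * YY Ψ (Vb m) (2 * p + q) m (p * m) (q * m) σ * Cst := by
      calc _ < (d : ℝ) ^ σ * Den * (2 * |W| * S 1) := by gcongr
        _ ≤ (d : ℝ) ^ σ * Den *
            (2 * |W| * (YY Ψ (Vb m) (2 * p + q) m (p * m) (q * m) σ * zetaR 2)) := by gcongr
        _ = _ := by rw [hCst]; ring
    refine e1.trans_le ?_
    rw [← log_nonpos_iff (by positivity), log_mul (by positivity) hCp.ne',
      log_mul (by positivity) hYp.ne', log_pow, hd, ← Chebyshev.psi_eq_log_lcmUpto]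
    have e2 := log_YY_le Ψ p q m σ hp hq hm
    have e3 := mul_le_mul_of_nonneg_left hpsi hσp.le
    rw [← hB] at e2
    have e4 : (m : ℝ) * ((2 * p + q) * B -
        σ * ((p + q) * log (p + q) - p * log p - q * log q)) + σ * ((1 + δ) * (q * m)) =
        - (η * m) := by rw [hη]; ring
    linarith
  have hk0 : k = 0 := by
    have : |k| < 1 := by exact_mod_cast hlt
    exact Int.abs_lt_one_iff.1 this
  rw [hk0, Int.cast_zero] at hk
  exact (mul_ne_zero (by positivity) hne) hk

/-! ### The set `Ψ` and the Euler product -/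

/-- `uu P b = ∏ (1 - 1/p)`, over the primes `p ∈ P` dividing `b`. -/
noncomputable def uu (P : Finset ℕ) (b : ℕ) : ℝ := ∏ p ∈ P.filter (· ∣ b), (1 - (p : ℝ)⁻¹)

lemma prod_le_prod_subset {s t : Finset ℕ} {f : ℕ → ℝ} (hst : s ⊆ t) (h0 : ∀ p ∈ t, 0 ≤ f p)
    (h1 : ∀ p ∈ t, f p ≤ 1) : ∏ p ∈ t, f p ≤ ∏ p ∈ s, f p := by
  rw [← Finset.prod_sdiff hst]
  exact mul_le_of_le_one_left (Finset.prod_nonneg fun p hp => h0 p (hst hp))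
    (Finset.prod_le_one (fun p hp => h0 p (Finset.sdiff_subset hp))
      fun p hp => h1 p (Finset.sdiff_subset hp))

lemma uu_periodic {P : Finset ℕ} (j r : ℕ) : uu P ((∏ p ∈ P, p) * j + r) = uu P r := by
  unfold uu
  congr 1
  ext p
  simp only [Finset.mem_filter, and_congr_right_iff]
  intro hp
  exact Nat.dvd_add_right (Dvd.dvd.mul_right (Finset.dvd_prod_of_mem (fun p => p) hp) j)

section
variable {P : Finset ℕ} (hP : ∀ p ∈ P, p.Prime)
include hP

lemma local_bounds {p : ℕ} (hp : p ∈ P) : 0 < 1 - (p : ℝ)⁻¹ ∧ 1 - (p : ℝ)⁻¹ ≤ 1 := by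
  have h1 : (1 : ℝ) < p := by exact_mod_cast (hP p hp).one_lt
  have h2 := inv_lt_one_of_one_lt₀ h1
  have h3 : 0 < (p : ℝ)⁻¹ := by positivity
  constructor <;> linarith

lemma uu_pos (b : ℕ) : 0 < uu P b :=
  Finset.prod_pos fun _ hp => (local_bounds hP (Finset.mem_filter.1 hp).1).1

lemma uu_le_one (b : ℕ) : uu P b ≤ 1 :=
  Finset.prod_le_one (fun _ hp => (local_bounds hP (Finset.mem_filter.1 hp).1).1.le)
    fun _ hp => (local_bounds hP (Finset.mem_filter.1 hp).1).2

lemma uu_ge (b : ℕ) : ∏ p ∈ P, (1 - (p : ℝ)⁻¹) ≤ uu P b :=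
  prod_le_prod_subset (Finset.filter_subset _ _)
    (fun _ hp => (local_bounds hP hp).1.le)
    fun _ hp => (local_bounds hP hp).2

lemma uu_one : uu P 1 = 1 := by
  unfold uu
  refine Finset.prod_eq_one fun p hp => ?_
  rw [Finset.mem_filter, Nat.dvd_one] at hp
  exact absurd hp.2 (hP p hp.1).ne_one

/-- `φ(b)` is the product of `b` and of all `1 - 1/p`, `p ∣ b`, not only those with `p ∈ P`. -/
lemma totient_le_uu (b : ℕ) (hb : b ≠ 0) : (b.totient : ℝ) ≤ b * uu P b := by
  have h := Nat.totient_eq_mul_prod_factors b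
  have h2 : (b.totient : ℝ) = b * ∏ p ∈ b.primeFactors, (1 - (p : ℝ)⁻¹) := by
    have := congrArg (fun x : ℚ => (x : ℝ)) h
    push_cast at this
    exact this
  rw [h2]
  refine mul_le_mul_of_nonneg_left ?_ (Nat.cast_nonneg _)
  refine prod_le_prod_subset (fun p hp => ?_) (fun p hp => ?_)
    fun p hp => ?_
  · rw [Finset.mem_filter] at hp
    exact Nat.mem_primeFactors.2 ⟨hP p hp.1, hp.2, hb⟩
  all_goals
    have h1 : (1 : ℝ) < p := by exact_mod_cast (Nat.prime_of_mem_primeFactors hp).one_lt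
    have h2 := inv_lt_one_of_one_lt₀ h1
    have h3 : 0 < (p : ℝ)⁻¹ := by positivity
    linarith

/-- `b ↦ b * uu P b` is monotone for divisibility. -/
lemma uu_dvd {b c : ℕ} (hb : b ≠ 0) (hcb : c ∣ b) : (c : ℝ) * uu P c ≤ b * uu P b := by
  obtain ⟨e, rfl⟩ := hcb
  have he : e ≠ 0 := right_ne_zero_of_mul hb
  have h1 : uu P c * uu P e ≤ uu P (c * e) := by
    have hu : P.filter (· ∣ c * e) = P.filter (· ∣ c) ∪ P.filter (· ∣ e) := by
      ext p
      simp only [Finset.mem_filter, Finset.mem_union]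
      constructor
      · rintro ⟨a, b⟩
        rcases (hP p a).dvd_mul.1 b with h | h
        · exact Or.inl ⟨a, h⟩
        · exact Or.inr ⟨a, h⟩
      · rintro (⟨a, b⟩ | ⟨a, b⟩)
        · exact ⟨a, Dvd.dvd.mul_right b e⟩
        · exact ⟨a, Dvd.dvd.mul_left b c⟩
    have h2 := Finset.prod_union_inter (s₁ := P.filter (· ∣ c)) (s₂ := P.filter (· ∣ e))
      (f := fun p : ℕ => 1 - (p : ℝ)⁻¹)
    unfold uu
    rw [hu, ← h2]
    refine mul_le_of_le_one_right (Finset.prod_nonneg fun p hp => ?_)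
      (Finset.prod_le_one (fun p hp => ?_) fun p hp => ?_)
    · rw [← hu] at hp
      exact (local_bounds hP (Finset.mem_filter.1 hp).1).1.le
    · exact (local_bounds hP (Finset.mem_filter.1 (Finset.mem_inter.1 hp).1).1).1.le
    · exact (local_bounds hP (Finset.mem_filter.1 (Finset.mem_inter.1 hp).1).1).2
  have h3 : (1 : ℝ) ≤ e * uu P e := by
    refine le_trans ?_ (totient_le_uu hP e he)
    exact_mod_cast Nat.totient_pos.2 (Nat.pos_of_ne_zero he)
  have h4 := uu_pos hP c
  calc (c : ℝ) * uu P c = c * uu P c * 1 := by ring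
    _ ≤ c * uu P c * (e * uu P e) := mul_le_mul_of_nonneg_left h3 (by positivity)
    _ = (c * e) * (uu P c * uu P e) := by ring
    _ ≤ (c * e) * uu P (c * e) := mul_le_mul_of_nonneg_left h1 (by positivity)
    _ = _ := by push_cast; ring

lemma uu_inv (b : ℕ) : (uu P b)⁻¹ =
    ∏ p ∈ P, (1 + if p ∣ b then ((p : ℝ) - 1)⁻¹ else 0) := by
  unfold uu
  rw [Finset.prod_filter, ← Finset.prod_inv_distrib]
  refine Finset.prod_congr rfl fun p hp => ?_
  have h1 : (1 : ℝ) < p := by exact_mod_cast (hP p hp).one_lt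
  have h2 : (p : ℝ) - 1 ≠ 0 := by linarith
  split_ifs
  · rw [show 1 - (p : ℝ)⁻¹ = (p - 1) / p by field_simp, inv_div]
    field_simp
    ring
  · simp

/-- The sum of `1 / uu` over a period, by expanding the product `uu_inv` over subsets of `P` and
counting the multiples of a product of primes. -/
lemma avg_uu_inv : ∑ r ∈ Finset.range (∏ p ∈ P, p), (uu P (r + 1))⁻¹ =
    (∏ p ∈ P, p : ℕ) * ∏ p ∈ P, (1 + 1 / ((p : ℝ) * (p - 1))) := by
  have hdv : ∀ S ⊆ P, ∀ b : ℕ, (∏ p ∈ S, p) ∣ b ↔ ∀ p ∈ S, p ∣ b := by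
    intro S hS b
    constructor
    · intro h p hp
      exact (Finset.dvd_prod_of_mem (fun p => p) hp).trans h
    · intro h
      exact Finset.prod_primes_dvd b (fun p hp => (hP p (hS hp)).prime) h
  have h1 : ∀ b, (uu P b)⁻¹ = ∑ S ∈ P.powerset,
      if (∏ p ∈ S, p) ∣ b then ∏ p ∈ S, ((p : ℝ) - 1)⁻¹ else 0 := by
    intro b
    rw [uu_inv hP, Finset.prod_one_add]
    refine Finset.sum_congr rfl fun S hS => ?_
    have := hdv S (Finset.mem_powerset.1 hS) b
    split_ifs with h
    · refine Finset.prod_congr rfl fun p hp => ?_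
      rw [if_pos (this.1 h p hp)]
    · rw [this] at h
      push Not at h
      obtain ⟨p, hp, hpb⟩ := h
      exact Finset.prod_eq_zero hp (if_neg hpb)
  simp only [h1]
  rw [Finset.sum_comm, Finset.prod_one_add, Finset.mul_sum]
  refine Finset.sum_congr rfl fun S hS => ?_
  have hS := Finset.mem_powerset.1 hS
  rw [← Finset.sum_filter, Finset.sum_const, Nat.card_multiples, nsmul_eq_mul]
  have hd : (∏ p ∈ S, p) ∣ ∏ p ∈ P, p := Finset.prod_dvd_prod_of_subset _ _ _ hS
  have hne : ((∏ p ∈ S, p : ℕ) : ℝ) ≠ 0 := by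
    exact_mod_cast (Finset.prod_pos fun p hp => (hP p (hS hp)).pos).ne'
  rw [Nat.cast_div hd hne]
  simp only [one_div, mul_inv, Finset.prod_mul_distrib, Finset.prod_inv_distrib]
  push_cast
  rw [div_eq_mul_inv]
  ring

end

/-- The sum of an arithmetic progression against the square of its next term. -/
lemma sum_ap_le (Q r n : ℕ) (hQ : 1 ≤ Q) :
    ∑ j ∈ Finset.range n, (Q * (j : ℝ) + r + 1) ≤ (Q * (n : ℝ) + r + 1) ^ 2 / (2 * Q) := by
  have hQ' : (0 : ℝ) < Q := by exact_mod_cast hQ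
  rw [le_div_iff₀ (by positivity)]
  induction n with
  | zero => simp; positivity
  | succ n ih =>
    rw [Finset.sum_range_succ]
    push_cast
    have : (0 : ℝ) ≤ (Q : ℝ) ^ 2 := by positivity
    nlinarith

/-- The set `{b ≥ 1 : b * uu P b ≤ B}`: its cardinality and its sum of totients. -/
lemma exists_psi (P : Finset ℕ) (hP : ∀ p ∈ P, p.Prime) :
    ∃ C : ℝ, 1 ≤ C ∧ ∀ B : ℝ, 1 ≤ B → ∃ Ψ : Finset ℕ, 1 ∈ Ψ ∧
      (∀ b ∈ Ψ, ∀ c, c ∣ b → c ∈ Ψ) ∧ 0 ∉ Ψ ∧ (∀ b ∈ Ψ, (b : ℝ) ≤ C * B) ∧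
      (∏ p ∈ P, (1 + 1 / ((p : ℝ) * (p - 1)))) * B - C ≤ Ψ.card ∧
      (∑ b ∈ Ψ, (b.totient : ℝ)) ≤
        (∏ p ∈ P, (1 + 1 / ((p : ℝ) * (p - 1)))) * B ^ 2 / 2 + C * B := by
  set Q := ∏ p ∈ P, p with hQ
  have hQ1 : 1 ≤ Q := Finset.prod_pos fun p hp => (hP p hp).pos
  have hQp : (0 : ℝ) < Q := by exact_mod_cast hQ1
  have hQ1' : (1 : ℝ) ≤ Q := by exact_mod_cast hQ1
  set μ := ∏ p ∈ P, (1 - (p : ℝ)⁻¹) with hμ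
  have hμ0 : 0 < μ := Finset.prod_pos fun p hp => (local_bounds hP hp).1
  set c := ∏ p ∈ P, (1 + 1 / ((p : ℝ) * (p - 1))) with hc
  have havg := avg_uu_inv hP
  rw [← hQ, ← hc] at havg
  refine ⟨μ⁻¹ + 2 * Q ^ 2, by have : 0 < μ⁻¹ := by positivity
                              nlinarith, fun B hB => ?_⟩
  set Ψ := (Finset.Icc 1 ⌊B / μ⌋₊).filter (fun b : ℕ => (b : ℝ) * uu P b ≤ B) with hΨ
  have hle : ∀ b : ℕ, (b : ℝ) * uu P b ≤ B → (b : ℝ) ≤ B / μ := by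
    intro b hb
    rw [le_div_iff₀ hμ0]
    exact (mul_le_mul_of_nonneg_left (uu_ge hP b) (Nat.cast_nonneg b)).trans hb
  have hmem : ∀ b : ℕ, b ∈ Ψ ↔ 1 ≤ b ∧ (b : ℝ) * uu P b ≤ B := by
    intro b
    rw [hΨ, Finset.mem_filter, Finset.mem_Icc]
    constructor
    · rintro ⟨⟨a, _⟩, b⟩
      exact ⟨a, b⟩
    · rintro ⟨a, b⟩
      exact ⟨⟨a, Nat.le_floor (hle _ b)⟩, b⟩
  -- `X r` bounds the elements congruent to `r + 1`, and `n r` is their number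
  set X : ℕ → ℝ := fun r => B * (uu P (r + 1))⁻¹ with hX
  set n : ℕ → ℕ := fun r => ⌊(X r - r - 1 + Q) / Q⌋₊ with hn
  have hX0 : ∀ r, 0 < X r := fun r => by
    have := uu_pos hP (r + 1)
    simp only [hX]; positivity
  have hnn : ∀ r ∈ Finset.range Q, 0 ≤ (X r - r - 1 + Q) / Q := by
    intro r hr
    have h1 : (r : ℝ) + 1 ≤ Q := by exact_mod_cast Finset.mem_range.1 hr
    have := hX0 r
    exact div_nonneg (by linarith) hQp.le
  have hjn : ∀ r ∈ Finset.range Q, ∀ j, j < n r ↔ Q * j + (r + 1) ∈ Ψ := by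
    intro r hr j
    rw [hmem, uu_periodic, ← le_div_iff₀ (uu_pos hP _), div_eq_mul_inv,
      ← Nat.succ_le_iff, hn, Nat.le_floor_iff (hnn r hr), le_div_iff₀ hQp]
    simp only [hX]
    push_cast
    constructor
    · intro h
      exact ⟨by omega, by linarith⟩
    · rintro ⟨_, h⟩
      linarith
  have hsum : ∀ F : ℕ → ℝ, ∑ b ∈ Ψ, F b =
      ∑ r ∈ Finset.range Q, ∑ j ∈ Finset.range (n r), F (Q * j + (r + 1)) := by
    intro F
    rw [Finset.sum_sigma']
    symm
    refine Finset.sum_bij' (fun x _ => Q * x.2 + (x.1 + 1)) (fun b _ => ⟨(b - 1) % Q, (b - 1) / Q⟩)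
      ?_ ?_ ?_ ?_ ?_
    · rintro ⟨r, j⟩ hx
      rw [Finset.mem_sigma] at hx
      exact (hjn r hx.1 j).1 (Finset.mem_range.1 hx.2)
    · intro b hb
      have hr : (b - 1) % Q ∈ Finset.range Q := Finset.mem_range.2 (Nat.mod_lt _ hQ1)
      rw [Finset.mem_sigma]
      refine ⟨hr, Finset.mem_range.2 ((hjn _ hr _).2 ?_)⟩
      have h1 := Nat.div_add_mod (b - 1) Q
      have h2 := ((hmem b).1 hb).1
      rw [← add_assoc, h1, Nat.sub_add_cancel h2]
      exact hb
    · rintro ⟨r, j⟩ hx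
      rw [Finset.mem_sigma, Finset.mem_range] at hx
      have h1 : Q * j + (r + 1) - 1 = r + Q * j := by omega
      simp only [h1, Nat.add_mul_mod_self_left, Nat.mod_eq_of_lt hx.1,
        Nat.add_mul_div_left _ _ hQ1, Nat.div_eq_of_lt hx.1, zero_add]
    · intro b hb
      have h1 := Nat.div_add_mod (b - 1) Q
      have h2 := ((hmem b).1 hb).1
      simp only
      rw [← add_assoc, h1, Nat.sub_add_cancel h2]
    · intros; rfl
  have hcB : ∑ r ∈ Finset.range Q, X r / Q = c * B := by
    simp only [hX]
    rw [← Finset.sum_div, ← Finset.mul_sum, havg]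
    field_simp
  have hμ1 : 0 < μ⁻¹ := by positivity
  refine ⟨Ψ, ?_, ?_, ?_, ?_, ?_, ?_⟩
  · rw [hmem, uu_one hP]
    simpa using hB
  · intro b hb e heb
    rw [hmem] at hb ⊢
    exact ⟨Nat.pos_of_dvd_of_pos heb hb.1, (uu_dvd hP (by omega) heb).trans hb.2⟩
  · rw [hmem]; simp
  · intro b hb
    have h1 := hle b ((hmem b).1 hb).2
    rw [div_eq_mul_inv, mul_comm] at h1
    nlinarith [sq_nonneg (Q : ℝ)]
  · have h1 := hsum (fun _ => 1)
    simp only [Finset.sum_const, nsmul_eq_mul, mul_one, Finset.card_range] at h1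
    rw [h1]
    have h2 : ∑ r ∈ Finset.range Q, (X r / Q - 1) ≤ ∑ r ∈ Finset.range Q, (n r : ℝ) := by
      refine Finset.sum_le_sum fun r hr => ?_
      have h3 := Nat.lt_floor_add_one ((X r - r - 1 + Q) / Q)
      have h4 : (r : ℝ) + 1 ≤ Q := by exact_mod_cast Finset.mem_range.1 hr
      have h5 : X r / Q ≤ (X r - r - 1 + Q) / Q := by gcongr; linarith
      simp only [hn]
      linarith
    rw [Finset.sum_sub_distrib, hcB] at h2
    simp only [Finset.sum_const, nsmul_eq_mul, mul_one, Finset.card_range] at h2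
    nlinarith
  · calc (∑ b ∈ Ψ, (b.totient : ℝ)) ≤ ∑ b ∈ Ψ, (b : ℝ) * uu P b :=
          Finset.sum_le_sum fun b hb => totient_le_uu hP b (by have := ((hmem b).1 hb).1; omega)
      _ = ∑ r ∈ Finset.range Q, uu P (r + 1) *
          ∑ j ∈ Finset.range (n r), (Q * (j : ℝ) + r + 1) := by
        rw [hsum]
        refine Finset.sum_congr rfl fun r _ => ?_
        rw [Finset.mul_sum]
        refine Finset.sum_congr rfl fun j _ => ?_
        rw [uu_periodic]
        push_cast
        ring
      _ ≤ ∑ r ∈ Finset.range Q, (X r / Q * B / 2 + B + Q / 2) := by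
        refine Finset.sum_le_sum fun r hr => ?_
        have hu0 := uu_pos hP (r + 1)
        have hu1 := uu_le_one hP (r + 1)
        have h1 := sum_ap_le Q r (n r) hQ1
        have h2 : Q * (n r : ℝ) + r + 1 ≤ X r + Q := by
          have h3 := Nat.floor_le (hnn r hr)
          rw [le_div_iff₀ hQp] at h3
          simp only [hn]
          linarith
        have h4 : (Q * (n r : ℝ) + r + 1) ^ 2 / (2 * Q) ≤ (X r + Q) ^ 2 / (2 * Q) := by gcongr
        refine (mul_le_mul_of_nonneg_left (h1.trans h4) hu0.le).trans ?_
        have h5 : uu P (r + 1) * X r = B := by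
          simp only [hX]; field_simp
        have h6 : uu P (r + 1) * ((X r + Q) ^ 2 / (2 * Q)) =
            X r / Q * (uu P (r + 1) * X r) / 2 + uu P (r + 1) * X r + uu P (r + 1) * Q / 2 := by
          field_simp
          ring
        rw [h6, h5]
        nlinarith
      _ = c * B ^ 2 / 2 + Q * B + Q * (Q / 2) := by
        rw [Finset.sum_add_distrib, Finset.sum_add_distrib, ← Finset.sum_div, ← Finset.sum_mul,
          hcB]
        simp only [Finset.sum_const, nsmul_eq_mul, Finset.card_range]
        ring
      _ ≤ _ := by
        have a1 : (Q : ℝ) * B ≤ Q ^ 2 * B := by gcongr; nlinarith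
        have a2 : (Q : ℝ) * (Q / 2) ≤ Q ^ 2 * B := by
          rw [pow_two, mul_assoc]; gcongr; nlinarith
        nlinarith

/-- `gam b = o(log b)`: the primes beyond a bound contribute at most `δ log p` each, and the others a
bounded amount. -/
lemma gam_le (δ : ℝ) (hδ : 0 < δ) : ∃ C : ℝ, 0 ≤ C ∧ ∀ b : ℕ, b ≠ 0 → gam b ≤ δ * log b + C := by
  obtain ⟨P, hP⟩ := exists_nat_gt (1 / δ + 1)
  refine ⟨P, Nat.cast_nonneg P, fun b hb => ?_⟩
  have h1 : ∀ p ∈ b.primeFactors,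
      log p / ((p : ℝ) - 1) ≤ δ * log p + if p < P then 1 else 0 := by
    intro p hp
    have hp1 : (1 : ℝ) < p := by exact_mod_cast (Nat.prime_of_mem_primeFactors hp).one_lt
    have hl := log_nonneg hp1.le
    split_ifs with hpP
    · have := log_le_sub_one_of_pos (by linarith : (0 : ℝ) < p)
      have : log p / ((p : ℝ) - 1) ≤ 1 := by rw [div_le_one (by linarith)]; exact this
      nlinarith
    · push Not at hpP
      have : (P : ℝ) ≤ p := by exact_mod_cast hpP
      rw [add_zero, div_le_iff₀ (by linarith)]
      have h2 : 1 / δ ≤ (p : ℝ) - 1 := by linarith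
      rw [div_le_iff₀ hδ] at h2
      nlinarith
  have h2 : ∑ p ∈ b.primeFactors, log (p : ℝ) ≤ log b := by
    rw [← log_prod (fun p hp => by
      have := (Nat.prime_of_mem_primeFactors hp).pos
      positivity)]
    have h3 := Nat.le_of_dvd (Nat.pos_of_ne_zero hb) (Nat.prod_primeFactors_dvd b)
    have h4 : 0 < ∏ p ∈ b.primeFactors, p :=
      Finset.prod_pos fun p hp => (Nat.prime_of_mem_primeFactors hp).pos
    rw [← Nat.cast_prod]
    exact log_le_log (by exact_mod_cast h4) (by exact_mod_cast h3)
  have h3 : (∑ p ∈ b.primeFactors, if p < P then (1 : ℝ) else 0) ≤ P := by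
    rw [← Finset.sum_filter]
    simp only [Finset.sum_const, nsmul_eq_mul, mul_one]
    have : (b.primeFactors.filter (· < P)).card ≤ (Finset.range P).card :=
      Finset.card_le_card fun p hp => Finset.mem_range.2 (Finset.mem_filter.1 hp).2
    rw [Finset.card_range] at this
    exact_mod_cast this
  refine (Finset.sum_le_sum h1).trans ?_
  rw [Finset.sum_add_distrib, ← Finset.mul_sum]
  exact add_le_add (mul_le_mul_of_nonneg_left h2 hδ.le) h3

lemma tendsto_zetaR (j : ℕ) (hj : 2 ≤ j) :
    Tendsto (fun n : ℕ => ∏ p ∈ n.primesBelow, (1 - ((p : ℝ)⁻¹) ^ j)⁻¹) atTop (nhds (zetaR j)) := by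
  have h := riemannZeta_eulerProduct (s := (j : ℂ)) (by simp; omega)
  have h2 := (Complex.continuous_re.tendsto _).comp h
  refine h2.congr fun n => ?_
  have : ∏ p ∈ n.primesBelow, (1 - (p : ℂ) ^ (-(j : ℂ)))⁻¹ =
      ((∏ p ∈ n.primesBelow, (1 - ((p : ℝ)⁻¹) ^ j)⁻¹ : ℝ) : ℂ) := by
    push_cast
    refine Finset.prod_congr rfl fun p _ => ?_
    rw [Complex.cpow_neg, Complex.cpow_natCast, inv_pow]
  simp only [Function.comp]
  rw [this, Complex.ofReal_re]

lemma zetaR_pos (j : ℕ) (hj : 2 ≤ j) : 0 < zetaR j := by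
  have h := hasSum_zetaR j hj
  have := h.tsum_eq
  rw [← this]
  exact h.summable.tsum_pos (fun m => by positivity) 0 (by norm_num)

/-- The Euler product of `ζ(2)ζ(3)/ζ(6)`. -/
lemma tendsto_euler :
    Tendsto (fun n : ℕ => ∏ p ∈ n.primesBelow, (1 + 1 / ((p : ℝ) * (p - 1)))) atTop
      (nhds (zetaR 2 * zetaR 3 / zetaR 6)) := by
  have h := ((tendsto_zetaR 2 le_rfl).mul (tendsto_zetaR 3 (by norm_num))).div
    (tendsto_zetaR 6 (by norm_num)) (zetaR_pos 6 (by norm_num)).ne'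
  refine h.congr fun n => ?_
  rw [Pi.div_apply, ← Finset.prod_mul_distrib, ← Finset.prod_div_distrib]
  refine Finset.prod_congr rfl fun p hp => ?_
  have hp1 : (1 : ℝ) < p := by exact_mod_cast (Nat.prime_of_mem_primesBelow hp).one_lt
  have h0 : 0 < (p : ℝ)⁻¹ := by positivity
  have h1 := inv_lt_one_of_one_lt₀ hp1
  have e : 1 / ((p : ℝ) * (p - 1)) = (p : ℝ)⁻¹ ^ 2 / (1 - (p : ℝ)⁻¹) := by
    have : (p : ℝ) - 1 ≠ 0 := by linarith
    rw [show 1 - (p : ℝ)⁻¹ = (p - 1) / p by field_simp]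
    field_simp
  rw [e]
  generalize (p : ℝ)⁻¹ = x at h0 h1
  have a1 : 1 - x ≠ 0 := by linarith
  have a2 : 1 - x ^ 2 ≠ 0 := by nlinarith
  have a3 : 1 - x ^ 3 ≠ 0 := by
    have : x ^ 3 < 1 := pow_lt_one₀ h0.le h1 (by norm_num)
    linarith
  rw [div_inv_eq_mul]
  have a4 : 1 - x ^ 6 = (1 - x ^ 3) * (1 + x ^ 3) := by ring
  have a5 : 1 - x ^ 2 = (1 - x) * (1 + x) := by ring
  have a6 : 1 + x ≠ 0 := by linarith
  rw [a4, a5]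
  field_simp
  ring

/-! ### Optimisation of the parameters -/

/-- `f(r) = (r+1) log (r+1) - r log r`, the growth rate of `binom((r+1)n, n)`. -/
noncomputable def ff (r : ℝ) : ℝ := (r + 1) * log (r + 1) - r * log r

/-- The optimal ratio `ρ / n`, the positive root of `r (r + 1) = e²`. -/
noncomputable def rstar : ℝ := (Real.sqrt (4 * Real.exp 1 ^ 2 + 1) - 1) / 2

lemma rstar_gt : 1 < rstar := by
  have h1 := exp_one_gt_d9
  have h2 : 3 < Real.sqrt (4 * Real.exp 1 ^ 2 + 1) := by
    rw [Real.lt_sqrt (by norm_num)]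
    nlinarith
  unfold rstar
  linarith

/-- At the optimal ratio `log (r + 1) = 2 - log r`, which makes `(f(r) - 1) / (2 r + 1)` equal to
`1 - log r`. -/
lemma ff_rstar : ff rstar - 1 = (2 * rstar + 1) * (1 - log rstar) := by
  have h0 := rstar_gt
  have h1 : rstar * (rstar + 1) = Real.exp 1 ^ 2 := by
    have := Real.sq_sqrt (by positivity : 0 ≤ 4 * Real.exp 1 ^ 2 + 1)
    unfold rstar
    nlinarith
  have h2 := congrArg log h1
  rw [log_mul (by linarith) (by linarith), log_pow, log_exp] at h2
  have h3 : log (rstar + 1) = 2 - log rstar := by push_cast at h2; linarith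
  rw [ff, h3]
  ring

lemma c₀_eq : c₀ = Real.sqrt (4 * (zetaR 2 * zetaR 3 / zetaR 6) * (1 - log rstar)) := by
  unfold c₀ rstar
  congr 1
  ring

/-- Rational ratio `p / q` close to `rstar`, finite set `P` of primes and small `δ`, for which the limiting
form of the condition in `card_le_irrational` holds strictly. -/
lemma exists_parameters (t : ℝ) (ht0 : 0 < t) (ht : t < c₀) :
    ∃ (P : Finset ℕ) (p q : ℕ) (δ : ℝ), (∀ l ∈ P, l.Prime) ∧ 1 ≤ q ∧ q ≤ p ∧ Even q ∧ 0 < δ ∧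
      t ^ 2 * (1 + δ) * (2 * ((p : ℝ) / q) + 1) <
        4 * (∏ l ∈ P, (1 + 1 / ((l : ℝ) * (l - 1)))) * (ff ((p : ℝ) / q) - 1 - δ) := by
  have hr0 := rstar_gt
  set q : ℕ → ℕ := fun k => 2 * (k + 1) with hq
  set r : ℕ → ℝ := fun k => (⌊rstar * (q k : ℝ)⌋₊ : ℝ) / (q k : ℝ) with hr
  set δ : ℕ → ℝ := fun k => 1 / ((k : ℝ) + 1) with hδ
  have hqt : Tendsto q atTop atTop :=
    tendsto_atTop_mono (fun k => by simp only [hq, id]; omega) tendsto_id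
  have hrt : Tendsto r atTop (nhds rstar) :=
    (tendsto_nat_floor_mul_div_atTop (by linarith : 0 ≤ rstar)).comp
      (tendsto_natCast_atTop_atTop.comp hqt)
  have hδt : Tendsto δ atTop (nhds 0) := tendsto_one_div_add_atTop_nhds_zero_nat
  have hft : Tendsto (fun k => ff (r k)) atTop (nhds (ff rstar)) := by
    have hc : ContinuousAt ff rstar := by
      unfold ff
      refine ContinuousAt.sub ?_ ?_
      · exact (continuousAt_id.add continuousAt_const).mul
          ((continuousAt_id.add continuousAt_const).log (by change rstar + 1 ≠ 0; linarith))
      · exact continuousAt_id.mul (continuousAt_log (by linarith))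
    exact hc.tendsto.comp hrt
  have hlim := ((tendsto_euler.const_mul 4).mul ((hft.sub_const 1).sub hδt)).sub
    (((hδt.const_add 1).const_mul (t ^ 2)).mul ((hrt.const_mul 2).add_const 1))
  have hpos : 0 < 4 * (zetaR 2 * zetaR 3 / zetaR 6) * (ff rstar - 1 - 0) -
      t ^ 2 * (1 + 0) * (2 * rstar + 1) := by
    rw [c₀_eq] at ht
    have h1 : t ^ 2 < 4 * (zetaR 2 * zetaR 3 / zetaR 6) * (1 - log rstar) :=
      (Real.lt_sqrt ht0.le).1 ht
    rw [sub_zero, ff_rstar]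
    have := mul_lt_mul_of_pos_right h1 (by linarith : 0 < 2 * rstar + 1)
    linarith
  obtain ⟨k, hk, hk2⟩ := ((hlim.eventually (lt_mem_nhds hpos)).and
    (hrt.eventually (lt_mem_nhds hr0))).exists
  have hqk : (0 : ℝ) < q k := by simp only [hq]; positivity
  refine ⟨k.primesBelow, ⌊rstar * (q k : ℝ)⌋₊, q k, δ k,
    fun l hl => Nat.prime_of_mem_primesBelow hl, by simp only [hq]; omega, ?_,
    even_two_mul _, by simp only [hδ]; positivity, ?_⟩
  · simp only [hr] at hk2
    rw [lt_div_iff₀ hqk, one_mul] at hk2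
    exact_mod_cast hk2.le
  · simp only [hr] at hk
    linarith

end

/-- For every `ε > 0` there exists `s₀` such that for every odd integer `s ≥ s₀`, there are
at least `(c₀ − ε)·s^{1/2}/(log s)^{1/2}` irrational numbers among
`ζ(3), ζ(5), ζ(7), …, ζ(s)`. -/
theorem number_of_irrational_odd_zeta_values (ε : ℝ) (hε : 0 < ε) :
    ∃ s₀ : ℕ, ∀ s : ℕ, Odd s → s₀ ≤ s →
      (c₀ - ε) * Real.sqrt s / Real.sqrt (Real.log s) ≤
        ({i : ℕ | 3 ≤ i ∧ i ≤ s ∧ Odd i ∧ Irrational (zetaR i)}.ncard : ℝ) := by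
  rcases le_or_gt (c₀ - ε) 0 with hc | hc
  · refine ⟨0, fun s _ _ => le_trans ?_ (Nat.cast_nonneg _)⟩
    exact div_nonpos_of_nonpos_of_nonneg
      (mul_nonpos_of_nonpos_of_nonneg hc (Real.sqrt_nonneg _)) (Real.sqrt_nonneg _)
  set t := c₀ - ε / 2 with ht
  have ht0 : 0 < t := by linarith
  obtain ⟨P, p, q, δ, hP, hq, hqp, hqe, hδ, hmain⟩ :=
    exists_parameters t ht0 (by linarith)
  set c := ∏ l ∈ P, (1 + 1 / ((l : ℝ) * (l - 1))) with hcdef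
  have hc0 : 0 < c := Finset.prod_pos fun l hl => by
    have : (1 : ℝ) < l := by exact_mod_cast (hP l hl).one_lt
    have : (0 : ℝ) < l * (l - 1) := mul_pos (by linarith) (by linarith)
    positivity
  have hq' : (0 : ℝ) < q := by exact_mod_cast hq
  have hp' : (0 : ℝ) < p := by exact_mod_cast (hq.trans hqp)
  set r := (p : ℝ) / q with hr
  have hr0 : 0 < r := by positivity
  have hrp : (p : ℝ) = q * r := by rw [hr]; field_simp
  obtain ⟨C, hC1, hΨ⟩ := exists_psi P hP
  rw [← hcdef] at hΨ
  obtain ⟨C', hC'0, hgam⟩ := gam_le δ hδ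
  -- `Ψ` is taken with `B = β w`, where `w = √(s / log s)`, so that `#Ψ` is about `c β w = t w`
  set β := t / c with hβ
  have hβ0 : 0 < β := by positivity
  -- an upper bound for the constants in `1 + log (2 (p + q)) + log b + gam b`
  set C₃ : ℝ := |1 + log (2 * (p + q)) + (1 + δ) * log (C * β) + C'| with hC₃
  have hC₃0 : 0 ≤ C₃ := abs_nonneg _
  set η := ff r - 1 - δ with hη
  have hcast := tendsto_natCast_atTop_atTop (R := ℝ)
  have hL : Tendsto (fun s : ℕ => log (s : ℝ)) atTop atTop := tendsto_log_atTop.comp hcast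
  have hu : Tendsto (fun s : ℕ => (log (s : ℝ))⁻¹) atTop (nhds 0) := tendsto_inv_atTop_zero.comp hL
  have hw : Tendsto (fun s : ℕ => Real.sqrt (s / log s)) atTop atTop := by
    refine tendsto_sqrt_atTop.comp ?_
    have h1 : Tendsto (fun x : ℝ => log x / x) atTop (nhds 0) := by
      simpa using tendsto_pow_log_div_mul_add_atTop 1 0 1 one_ne_zero
    have h2 : Tendsto (fun x : ℝ => log x / x) atTop (nhdsWithin 0 (Set.Ioi 0)) := by
      rw [tendsto_nhdsWithin_iff]
      refine ⟨h1, ?_⟩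
      filter_upwards [eventually_gt_atTop 1] with x hx
      exact div_pos (log_pos hx) (by linarith)
    refine (h2.inv_tendsto_nhdsGT_zero.comp hcast).congr fun s => ?_
    simp [Function.comp, inv_div]
  have hv : Tendsto (fun s : ℕ => (Real.sqrt (s / log s))⁻¹) atTop (nhds 0) :=
    tendsto_inv_atTop_zero.comp hw
  have hG := (hv.const_mul (C * β)).const_add (c * β ^ 2 / 2)
  have hE := (hG.mul ((hu.const_mul C₃).const_add ((1 + δ) / 2))).const_mul (2 * r + 1)
  have hdeg := (hG.mul hu).const_mul (4 * (2 * r + 1))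
  -- in the limit, `∑ φ(b) log b ≤ (c B² / 2) (log s) / 2 = c β² s / 4`
  have hElim : (2 * r + 1) * ((c * β ^ 2 / 2 + C * β * 0) * ((1 + δ) / 2 + C₃ * 0)) < η := by
    have e : (2 * r + 1) * ((c * β ^ 2 / 2 + C * β * 0) * ((1 + δ) / 2 + C₃ * 0)) =
        (t ^ 2 * (1 + δ) * (2 * r + 1)) / (4 * c) := by
      rw [hβ]; field_simp; ring
    rw [e, div_lt_iff₀ (by positivity)]
    linarith
  have hdlim : 4 * (2 * r + 1) * ((c * β ^ 2 / 2 + C * β * 0) * 0) < 1 := by simp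
  have hev := (((hE.eventually (gt_mem_nhds hElim)).and (hdeg.eventually (gt_mem_nhds hdlim))).and
    ((hw.eventually_ge_atTop (max (1 / β) (C / (ε / 2)))).and (hL.eventually_ge_atTop 1))).and
      (eventually_ge_atTop 3)
  obtain ⟨s₀, hs₀⟩ := eventually_atTop.1 hev
  refine ⟨s₀, fun s hodd hs => ?_⟩
  obtain ⟨⟨⟨a1, a2⟩, ⟨a3, a4⟩⟩, a5⟩ := hs₀ s hs
  set L := log (s : ℝ) with hLdef
  set w := Real.sqrt (s / L) with hwdef
  have hs0 : (0 : ℝ) < s := by exact_mod_cast (by omega : 0 < s)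
  have hL0 : 0 < L := by linarith
  have hw0 : 0 < w := Real.sqrt_pos.2 (by positivity)
  have hw2 : w ^ 2 * L = s := by
    rw [hwdef, Real.sq_sqrt (by positivity)]; field_simp
  have hB1 : 1 ≤ β * w := by
    have := (le_max_left _ _).trans a3
    rw [div_le_iff₀ hβ0] at this
    linarith
  have hCw : C ≤ ε / 2 * w := by
    have := (le_max_right _ _).trans a3
    rw [div_le_iff₀ (by positivity)] at this
    linarith
  obtain ⟨Ψ, m1, mcl, m0, mle, mcard, mtot⟩ := hΨ (β * w) hB1
  set G := ∑ b ∈ Ψ, (b.totient : ℝ) with hGdef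
  have hG0 : 0 ≤ G := Finset.sum_nonneg fun b _ => Nat.cast_nonneg _
  have hGL : G * L ≤ s * (c * β ^ 2 / 2 + C * β * w⁻¹) := by
    have e : s * (c * β ^ 2 / 2 + C * β * w⁻¹) = (c * (β * w) ^ 2 / 2 + C * (β * w)) * L := by
      rw [← hw2]; field_simp
    rw [e]
    exact mul_le_mul_of_nonneg_right mtot hL0.le
  have hG1 : G ≤ s * ((c * β ^ 2 / 2 + C * β * w⁻¹) * L⁻¹) := by
    rw [← mul_assoc, ← div_eq_mul_inv, le_div_iff₀ hL0]
    exact hGL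
  -- the main estimate for the sum over `Ψ`
  have hterm : ∀ b ∈ Ψ, (b.totient : ℝ) * (1 + log (2 * (p + q)) + log b + gam b) ≤
      b.totient * ((1 + δ) / 2 * L + C₃) := by
    intro b hb
    have hb0 : b ≠ 0 := fun h => m0 (h ▸ hb)
    have hbp : (0 : ℝ) < b := by exact_mod_cast Nat.pos_of_ne_zero hb0
    refine mul_le_mul_of_nonneg_left ?_ (Nat.cast_nonneg _)
    have h1 := hgam b hb0
    have h2 : log (b : ℝ) ≤ log (C * β) + L / 2 := by
      have h3 := log_le_log hbp (mle b hb)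
      rw [← mul_assoc, log_mul (by positivity) hw0.ne'] at h3
      have h4 : log w ≤ L / 2 := by
        rw [hwdef, log_sqrt (by positivity), hLdef]
        have : log (s / L) ≤ log s := log_le_log (by positivity) (div_le_self hs0.le a4)
        linarith
      linarith
    have h5 : (1 + δ) * log (b : ℝ) ≤ (1 + δ) * (log (C * β) + L / 2) := by gcongr
    have h6 := le_abs_self (1 + log (2 * ((p : ℝ) + q)) + (1 + δ) * log (C * β) + C')
    rw [← hC₃] at h6
    linarith
  have hsum := Finset.sum_le_sum hterm
  rw [← Finset.sum_mul, ← hGdef] at hsum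
  have hfin : (2 * r + 1) * (G * ((1 + δ) / 2 * L + C₃)) < s * η := by
    have e : G * ((1 + δ) / 2 * L + C₃) = G * L * ((1 + δ) / 2 + C₃ * L⁻¹) := by
      field_simp
    rw [e]
    have hk : 0 ≤ (1 + δ) / 2 + C₃ * L⁻¹ := by positivity
    calc _ ≤ (2 * r + 1) * (s * (c * β ^ 2 / 2 + C * β * w⁻¹) * ((1 + δ) / 2 + C₃ * L⁻¹)) := by
          gcongr
      _ = s * ((2 * r + 1) * ((c * β ^ 2 / 2 + C * β * w⁻¹) * ((1 + δ) / 2 + C₃ * L⁻¹))) := by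
          ring
      _ < s * η := mul_lt_mul_of_pos_left a1 hs0
  have hη0 : 0 < η := by
    have : 0 ≤ (2 * r + 1) * (G * ((1 + δ) / 2 * L + C₃)) := by positivity
    exact pos_of_mul_pos_right (this.trans_lt hfin) hs0.le
  have hff : ((p : ℝ) + q) * log (p + q) - p * log p - q * log q = q * ff r := by
    have e1 : (p : ℝ) + q = q * (r + 1) := by rw [hrp]; ring
    rw [e1, hrp, log_mul hq'.ne' (by positivity), log_mul hq'.ne' hr0.ne', ff]
    ring
  have hsσ : ((s + 1 : ℕ) : ℝ) = s + 1 := by push_cast; ring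
  classical
  have key := card_le_irrational Ψ m1 mcl m0 p q (s + 1) hq hqp hqe (hodd.add_one) (by omega) δ hδ
    (by
      have h1 : 4 * ((2 * (p : ℝ) + q) * G) ≤ q * (s + 1) := by
        calc 4 * ((2 * (p : ℝ) + q) * G) = q * (4 * (2 * r + 1) * G) := by rw [hrp]; ring
          _ ≤ q * (4 * (2 * r + 1) * (s * ((c * β ^ 2 / 2 + C * β * w⁻¹) * L⁻¹))) := by gcongr
          _ = q * (s * (4 * (2 * r + 1) * ((c * β ^ 2 / 2 + C * β * w⁻¹) * L⁻¹))) := by ring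
          _ ≤ q * (s * 1) := by gcongr
          _ ≤ q * (s + 1) := by gcongr; linarith
      rw [hGdef] at h1
      exact_mod_cast h1)
    (by
      rw [hff, hsσ]
      have h1 : (2 * (p : ℝ) + q) * ∑ b ∈ Ψ, (b.totient : ℝ) *
          (1 + log (2 * (p + q)) + log b + gam b) ≤
          q * ((2 * r + 1) * (G * ((1 + δ) / 2 * L + C₃))) := by
        calc _ ≤ (2 * (p : ℝ) + q) * (G * ((1 + δ) / 2 * L + C₃)) := by gcongr
          _ = _ := by rw [hrp]; ring
      have h2 := mul_lt_mul_of_pos_left hfin hq'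
      have h3 : (q : ℝ) * (s * η) ≤ q * ((s + 1) * η) := by gcongr; linarith
      rw [hη] at h2 h3
      linarith)
  have hset : {i : ℕ | 3 ≤ i ∧ i ≤ s ∧ Odd i ∧ Irrational (zetaR i)} =
      (((Finset.Icc 3 (s + 1 - 1)).filter (fun i => Odd i ∧ Irrational (zetaR i)) : Finset ℕ) :
        Set ℕ) := by
    ext i
    simp [and_assoc]
  rw [hset, Set.ncard_coe_finset]
  calc (c₀ - ε) * Real.sqrt s / Real.sqrt L = (c₀ - ε) * w := by
        rw [hwdef, Real.sqrt_div hs0.le, mul_div_assoc]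
    _ ≤ c * (β * w) - C := by
        have e : c * (β * w) = t * w := by rw [hβ]; field_simp
        rw [e, ht]
        linarith
    _ ≤ Ψ.card := mcard
    _ ≤ _ := by exact_mod_cast key
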